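/- If p and q are strictly positive probability vectors on finite alphabets with H(p) = H(q), then the Bernoulli schemes BS(p) and BS(q) are finitarily isomorphic. -/

import Mathlib

open MeasureTheory ENNReal Filter

noncomputable section

/-- The left shift transformation on bi-infinite sequences: `(shift x) n = x (n+1)`. -/
def shift {A : Type*} : (ℤ → A) → (ℤ → A) := fun x n => x (n + 1)

/-- `φ` is a homomorphism (factor map) from the shift system `(ℤ → A, μ, shift)` to
`(ℤ → B, ν, shift)`, defined on the shift-invariant full-measure domain `D`. -/
structure IsFactorMap {A B : Type*} [MeasurableSpace A] [MeasurableSpace B]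
    (μ : Measure (ℤ → A)) (ν : Measure (ℤ → B))
    (D : Set (ℤ → A)) (φ : (ℤ → A) → (ℤ → B)) : Prop where
  measurable_map : Measurable φ
  dom_measurable : MeasurableSet D
  dom_shift_invariant : shift ⁻¹' D = D
  dom_full : μ D = 1
  pushforward : ν = μ.map φ
  equivariant : ∀ x ∈ D, φ (shift x) = shift (φ x)

/-- The window `[-q, r]` of `x` determines the zero coordinate of the image under `φ`
(among points of the domain `D`). -/
def DeterminesAt {A B : Type*} (D : Set (ℤ → A)) (φ : (ℤ → A) → (ℤ → B))
    (q r : ℕ) (x : ℤ → A) : Prop :=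
  ∀ y ∈ D, (∀ i : ℤ, -(q : ℤ) ≤ i → i ≤ (r : ℤ) → y i = x i) → φ y 0 = φ x 0

/-- A homomorphism `φ` with domain `D` is finitary if for almost every `x` in the domain
there are nonnegative integers `q`, `r` such that the coordinates `x_{-q}, …, x_r`
determine `(φ x)_0`. -/
def IsFinitary {A B : Type*} [MeasurableSpace A] [MeasurableSpace B]
    (μ : Measure (ℤ → A)) (D : Set (ℤ → A)) (φ : (ℤ → A) → (ℤ → B)) : Prop :=
  ∀ᵐ x ∂μ, x ∈ D → ∃ q r : ℕ, DeterminesAt D φ q r x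

/-- The code length `C(x) = q(x) + r(x)` with `q(x), r(x)` minimal such that the window
`[-q(x), r(x)]` determines the zero output coordinate (`⊤` if no finite window works). -/
def codeLength {A B : Type*} (D : Set (ℤ → A)) (φ : (ℤ → A) → (ℤ → B))
    (x : ℤ → A) : ℝ≥0∞ :=
  ⨅ (q : ℕ) (r : ℕ) (_ : DeterminesAt D φ q r x), ((q : ℝ≥0∞) + (r : ℝ≥0∞))

/-- `μ` is the Bernoulli (product) measure on `(ℤ → A)` given by the probability vector `p`. -/
def IsBernoulliMeasure {A : Type*} [MeasurableSpace A] (μ : Measure (ℤ → A)) (p : A → ℝ) : Prop :=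
  ∀ (F : Finset ℤ) (s : ℤ → A),
    μ {x | ∀ i ∈ F, x i = s i} = ENNReal.ofReal (∏ i ∈ F, p (s i))

/-- A strictly positive probability vector on a finite alphabet. -/
def IsProbVector {A : Type*} [Fintype A] (p : A → ℝ) : Prop :=
  (∀ i, 0 < p i) ∧ ∑ i, p i = 1

/-- The entropy `H(p) = -∑ p_i log p_i` of a probability vector. -/
def vecEntropy {A : Type*} [Fintype A] (p : A → ℝ) : ℝ := -∑ i, p i * Real.log (p i)

/-- A finitary isomorphism: a pair of mutually inverse finitary factor maps. -/
def IsFinitaryIsomorphism {A B : Type*} [MeasurableSpace A] [MeasurableSpace B]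
    (μ : Measure (ℤ → A)) (ν : Measure (ℤ → B))
    (D : Set (ℤ → A)) (E : Set (ℤ → B))
    (φ : (ℤ → A) → (ℤ → B)) (ψ : (ℤ → B) → (ℤ → A)) : Prop :=
  IsFactorMap μ ν D φ ∧ IsFactorMap ν μ E ψ ∧
  IsFinitary μ D φ ∧ IsFinitary ν E ψ ∧
  (∀ x ∈ D, φ x ∈ E ∧ ψ (φ x) = x) ∧ (∀ y ∈ E, ψ y ∈ D ∧ φ (ψ y) = y)

namespace KS
open scoped Classical

/-- A coupling of the finite weights `f` on `F` and `g` on `G` supported by the relation `R`. -/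
def Coupled {U V : Type*} (F : Finset U) (G : Finset V) (f : U → ℝ) (g : V → ℝ)
    (R : U → V → Prop) : Prop :=
  ∃ γ : U → V → ℝ, (∀ u v, 0 ≤ γ u v) ∧ (∀ u ∈ F, ∑ v ∈ G, γ u v = f u) ∧
    (∀ v ∈ G, ∑ u ∈ F, γ u v = g v) ∧ ∀ u ∈ F, ∀ v ∈ G, γ u v ≠ 0 → R u v

section Coupled
variable {U V : Type*} {F : Finset U} {G : Finset V} {f : U → ℝ} {g : V → ℝ}
  {R : U → V → Prop}

theorem Coupled.mono {R' : U → V → Prop} (h : Coupled F G f g R)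
    (hR : ∀ u ∈ F, ∀ v ∈ G, R u v → R' u v) : Coupled F G f g R' := by
  obtain ⟨γ, h0, h1, h2, h3⟩ := h
  exact ⟨γ, h0, h1, h2, fun u hu v hv h => hR u hu v hv (h3 u hu v hv h)⟩

theorem Coupled.swap (h : Coupled F G f g R) : Coupled G F g f (fun v u => R u v) := by
  obtain ⟨γ, h0, h1, h2, h3⟩ := h
  exact ⟨fun v u => γ u v, fun v u => h0 u v, h2, h1, fun v hv u hu h => h3 u hu v hv h⟩

theorem Coupled.transport (h : Coupled F G f g R) {QA : U → Prop} {QB : V → Prop}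
    (hQ : ∀ u ∈ F, ∀ v ∈ G, R u v → QB v → QA u) :
    ∑ v ∈ G with QB v, g v ≤ ∑ u ∈ F with QA u, f u := by
  obtain ⟨γ, h0, h1, h2, h3⟩ := h
  calc ∑ v ∈ G with QB v, g v = ∑ v ∈ G with QB v, ∑ u ∈ F, γ u v :=
        Finset.sum_congr rfl fun v hv => (h2 v (Finset.mem_filter.1 hv).1).symm
    _ = ∑ v ∈ G with QB v, ∑ u ∈ F with QA u, γ u v := by
        refine Finset.sum_congr rfl fun v hv => (Finset.sum_subset (Finset.filter_subset _ _) ?_).symm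
        intro u hu hu'
        by_contra hne
        obtain ⟨hv1, hv2⟩ := Finset.mem_filter.1 hv
        exact hu' (Finset.mem_filter.2 ⟨hu, hQ u hu v hv1 (h3 u hu v hv1 hne) hv2⟩)
    _ = ∑ u ∈ F with QA u, ∑ v ∈ G with QB v, γ u v := Finset.sum_comm
    _ ≤ ∑ u ∈ F with QA u, ∑ v ∈ G, γ u v := by
        gcongr with u hu
        · intros; exact h0 _ _
        · exact Finset.filter_subset _ _
    _ = ∑ u ∈ F with QA u, f u :=
        Finset.sum_congr rfl fun u hu => h1 u (Finset.mem_filter.1 hu).1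

theorem Coupled.exists_right (h : Coupled F G f g R) {u : U} (hu : u ∈ F) (hf : 0 < f u) :
    ∃ v ∈ G, R u v := by
  obtain ⟨γ, h0, h1, h2, h3⟩ := h
  by_contra! hc
  have : ∑ v ∈ G, γ u v = 0 := Finset.sum_eq_zero fun v hv => by
    by_contra hne
    exact hc v hv (h3 u hu v hv hne)
  rw [h1 u hu] at this
  exact hf.ne' this

/-- A coupling of labels lifts to a coupling. -/
theorem coupled_of_label {X Y : Type*} [DecidableEq X] [DecidableEq Y] (hf : ∀ u ∈ F, 0 < f u) (hg : ∀ v ∈ G, 0 < g v)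
    (lA : U → X) (lB : V → Y) (θ : X → Y → ℝ) (h0 : ∀ x y, 0 ≤ θ x y)
    (h1 : ∀ x ∈ F.image lA, ∑ y ∈ G.image lB, θ x y = ∑ u ∈ F with lA u = x, f u)
    (h2 : ∀ y ∈ G.image lB, ∑ x ∈ F.image lA, θ x y = ∑ v ∈ G with lB v = y, g v) :
    Coupled F G f g (fun u v => θ (lA u) (lB v) ≠ 0) := by
  set fx : X → ℝ := fun x => ∑ u ∈ F with lA u = x, f u with hfx
  set gy : Y → ℝ := fun y => ∑ v ∈ G with lB v = y, g v with hgy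
  have hfx0 : ∀ x, 0 ≤ fx x := fun x =>
    Finset.sum_nonneg fun u hu => (hf u (Finset.mem_filter.1 hu).1).le
  have hgy0 : ∀ y, 0 ≤ gy y := fun x =>
    Finset.sum_nonneg fun u hu => (hg u (Finset.mem_filter.1 hu).1).le
  have hfx1 : ∀ u ∈ F, 0 < fx (lA u) := fun u hu =>
    Finset.sum_pos (fun u hu => hf u (Finset.mem_filter.1 hu).1) ⟨u, by simp [hu]⟩
  have hgy1 : ∀ v ∈ G, 0 < gy (lB v) := fun u hu =>
    Finset.sum_pos (fun u hu => hg u (Finset.mem_filter.1 hu).1) ⟨u, by simp [hu]⟩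
  refine ⟨fun u v => if u ∈ F ∧ v ∈ G then
    θ (lA u) (lB v) * (f u / fx (lA u)) * (g v / gy (lB v)) else 0, ?_, ?_, ?_, ?_⟩
  · intro u v
    dsimp only
    split_ifs with h
    · have := hf u h.1; have := hg v h.2; have := hfx0 (lA u); have := hgy0 (lB v)
      have := h0 (lA u) (lB v)
      positivity
    · exact le_rfl
  · intro u hu
    have : ∀ v ∈ G, (if u ∈ F ∧ v ∈ G then
      θ (lA u) (lB v) * (f u / fx (lA u)) * (g v / gy (lB v)) else 0) =
      θ (lA u) (lB v) * (f u / fx (lA u)) * (g v / gy (lB v)) := fun v hv => by simp [hu, hv]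
    rw [Finset.sum_congr rfl this,
      ← Finset.sum_fiberwise_of_maps_to (t := G.image lB) (g := lB)
        (fun v hv => Finset.mem_image_of_mem _ hv)]
    have : ∀ y ∈ G.image lB, ∑ v ∈ G with lB v = y,
        θ (lA u) (lB v) * (f u / fx (lA u)) * (g v / gy (lB v)) =
        θ (lA u) y * (f u / fx (lA u)) := by
      intro y hy
      obtain ⟨v0, hv0, rfl⟩ := Finset.mem_image.1 hy
      have e : ∀ v ∈ G.filter (fun v => lB v = lB v0),
          θ (lA u) (lB v) * (f u / fx (lA u)) * (g v / gy (lB v)) =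
          (θ (lA u) (lB v0) * (f u / fx (lA u)) / gy (lB v0)) * g v := by
        intro v hv
        rw [(Finset.mem_filter.1 hv).2]; ring
      rw [Finset.sum_congr rfl e, ← Finset.mul_sum]
      change _ * gy (lB v0) = _
      rw [div_mul_cancel₀ _ (hgy1 v0 hv0).ne']
    rw [Finset.sum_congr rfl this, ← Finset.sum_mul, h1 _ (Finset.mem_image_of_mem _ hu)]
    change fx (lA u) * _ = _
    rw [mul_div_cancel₀ _ (hfx1 u hu).ne']
  · intro v hv
    have : ∀ u ∈ F, (if u ∈ F ∧ v ∈ G then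
      θ (lA u) (lB v) * (f u / fx (lA u)) * (g v / gy (lB v)) else 0) =
      θ (lA u) (lB v) * (f u / fx (lA u)) * (g v / gy (lB v)) := fun u hu => by simp [hu, hv]
    rw [Finset.sum_congr rfl this,
      ← Finset.sum_fiberwise_of_maps_to (t := F.image lA) (g := lA)
        (fun v hv => Finset.mem_image_of_mem _ hv)]
    have : ∀ x ∈ F.image lA, ∑ u ∈ F with lA u = x,
        θ (lA u) (lB v) * (f u / fx (lA u)) * (g v / gy (lB v)) =
        θ x (lB v) * (g v / gy (lB v)) := by
      intro y hy
      obtain ⟨u0, hu0, rfl⟩ := Finset.mem_image.1 hy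
      have e : ∀ u ∈ F.filter (fun v => lA v = lA u0),
          θ (lA u) (lB v) * (f u / fx (lA u)) * (g v / gy (lB v)) =
          (θ (lA u0) (lB v) * (g v / gy (lB v)) / fx (lA u0)) * f u := by
        intro u hu
        rw [(Finset.mem_filter.1 hu).2]; ring
      rw [Finset.sum_congr rfl e, ← Finset.mul_sum]
      change _ * fx (lA u0) = _
      rw [div_mul_cancel₀ _ (hfx1 u0 hu0).ne']
    rw [Finset.sum_congr rfl this, ← Finset.sum_mul, h2 _ (Finset.mem_image_of_mem _ hv)]
    change gy (lB v) * _ = _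
    rw [mul_div_cancel₀ _ (hgy1 v hv).ne']
  · intro u hu v hv h h'
    apply h
    simp [h']

/-- A transport plan between finitely supported positive weights can be chosen extremal. -/
theorem Coupled.extreme {X Y : Type*} [DecidableEq X] [DecidableEq Y] (h : Coupled F G f g R)
    (hf : ∀ u ∈ F, 0 < f u) (hg : ∀ v ∈ G, 0 < g v) (lA : U → X) (lB : V → Y) :
    ∃ ρ : X → Y → Prop, Coupled F G f g (fun u v => ρ (lA u) (lB v)) ∧
      (∀ x y, ρ x y → ∃ u ∈ F, ∃ v ∈ G, lA u = x ∧ lB v = y ∧ R u v) ∧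
      ((F.image lA).filter (fun x => ∃ y y', y ≠ y' ∧ ρ x y ∧ ρ x y')).card ≤
        (G.image lB).card + 1 := by
  rcases F.eq_empty_or_nonempty with rfl | hne
  · refine ⟨fun _ _ => False, ?_, by simp, by simp⟩
    obtain ⟨γ, h0, h1, h2, h3⟩ := h
    refine ⟨γ, h0, h1, h2, by simp⟩
  obtain ⟨γ, h0, h1, h2, h3⟩ := h
  set X0 := F.image lA
  set Y0 := G.image lB
  set M : ℝ := ∑ u ∈ F, f u with hM
  have hMpos : 0 < M := Finset.sum_pos hf hne
  have hMγ : ∑ u ∈ F, ∑ v ∈ G, γ u v = M := Finset.sum_congr rfl h1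
  let pt : X → Y → (X0 → ℝ) × (Y0 → ℝ) := fun x y =>
    (fun x' => if (x' : X) = x then 1 else 0, fun y' => if (y' : Y) = y then 1 else 0)
  let s : Set ((X0 → ℝ) × (Y0 → ℝ)) :=
    {z | ∃ x y, (∃ u ∈ F, ∃ v ∈ G, lA u = x ∧ lB v = y ∧ R u v) ∧ z = pt x y}
  let fx : X → ℝ := fun x => ∑ u ∈ F with lA u = x, f u
  let gy : Y → ℝ := fun y => ∑ v ∈ G with lB v = y, g v
  have hmem : ((fun x => fx x / M, fun y => gy y / M) : (X0 → ℝ) × (Y0 → ℝ)) ∈ convexHull ℝ s := by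
    set T := (F ×ˢ G).filter (fun q => γ q.1 q.2 ≠ 0)
    have key : ∑ q ∈ T, (γ q.1 q.2 / M) • pt (lA q.1) (lB q.2) ∈ convexHull ℝ s := by
      apply (convex_convexHull ℝ s).sum_mem
      · intro q _; have := h0 q.1 q.2; positivity
      · rw [← Finset.sum_div, Finset.sum_filter_ne_zero, Finset.sum_product, hMγ, div_self hMpos.ne']
      · intro q hq
        obtain ⟨hq1, hq2⟩ := Finset.mem_filter.1 hq
        obtain ⟨hu, hv⟩ := Finset.mem_product.1 hq1
        exact subset_convexHull ℝ s ⟨_, _, ⟨q.1, hu, q.2, hv, rfl, rfl, h3 _ hu _ hv hq2⟩, rfl⟩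
    convert key using 1
    have hT : ∑ q ∈ T, (γ q.1 q.2 / M) • pt (lA q.1) (lB q.2) =
        ∑ u ∈ F, ∑ v ∈ G, (γ u v / M) • pt (lA u) (lB v) := by
      rw [← Finset.sum_product']
      apply Finset.sum_subset (Finset.filter_subset _ _)
      intro q hq hq'
      have : γ q.1 q.2 = 0 := by
        by_contra hh
        exact hq' (Finset.mem_filter.2 ⟨hq, hh⟩)
      simp [this]
    rw [hT]
    refine Prod.ext ?_ ?_
    · funext x
      simp only [Prod.fst_sum, Finset.sum_apply, Prod.smul_fst, Pi.smul_apply, pt, smul_eq_mul]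
      change (∑ u ∈ F with lA u = x, f u) / M = _
      rw [Finset.sum_filter, Finset.sum_div]
      refine Finset.sum_congr rfl fun u hu => ?_
      rw [← Finset.sum_mul, ← Finset.sum_div, h1 u hu]
      split_ifs with h h' h'
      · ring
      · exact absurd h.symm h'
      · exact absurd h'.symm h
      · ring
    · funext y
      simp only [Prod.snd_sum, Finset.sum_apply, Prod.smul_snd, Pi.smul_apply, pt, smul_eq_mul]
      change (∑ v ∈ G with lB v = y, g v) / M = _
      rw [Finset.sum_comm, Finset.sum_filter, Finset.sum_div]
      refine Finset.sum_congr rfl fun v hv => ?_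
      rw [← Finset.sum_mul, ← Finset.sum_div, h2 v hv]
      split_ifs with h h' h'
      · ring
      · exact absurd h.symm h'
      · exact absurd h'.symm h
      · ring
  obtain ⟨ι, _, z, w, hz, haff, hw, hw1, hwz⟩ := eq_pos_convex_span_of_mem_convexHull hmem
  have hz' : ∀ i, z i ∈ s := fun i => hz ⟨i, rfl⟩
  choose xi yi hR hzi using hz'
  have hxi : ∀ i, xi i ∈ X0 := fun i => by
    obtain ⟨u, hu, v, hv, h1, h2, -⟩ := hR i
    exact h1 ▸ Finset.mem_image_of_mem _ hu
  have hyi : ∀ i, yi i ∈ Y0 := fun i => by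
    obtain ⟨u, hu, v, hv, h1, h2, -⟩ := hR i
    exact h2 ▸ Finset.mem_image_of_mem _ hv
  let θ : X → Y → ℝ := fun x y => M * ∑ i with xi i = x ∧ yi i = y, w i
  have hθ : ∀ x y, θ x y ≠ 0 → ∃ i, xi i = x ∧ yi i = y := by
    intro x y hxy
    by_contra! hc
    apply hxy
    have : (Finset.univ.filter fun i => xi i = x ∧ yi i = y) = ∅ := by
      ext i; simpa using hc i
    simp [θ, this]
  have hrow : ∀ x ∈ X0, ∑ i with xi i = x, w i = fx x / M := by
    intro x hx
    have := congrFun (congrArg Prod.fst hwz) ⟨x, hx⟩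
    simp only [Prod.fst_sum, Finset.sum_apply, Prod.smul_fst, Pi.smul_apply, hzi, pt,
      smul_eq_mul, mul_ite, mul_one, mul_zero] at this
    rw [← this, Finset.sum_filter]
    exact Finset.sum_congr rfl fun i _ => by simp only [eq_comm]
  have hcol : ∀ y ∈ Y0, ∑ i with yi i = y, w i = gy y / M := by
    intro y hy
    have := congrFun (congrArg Prod.snd hwz) ⟨y, hy⟩
    simp only [Prod.snd_sum, Finset.sum_apply, Prod.smul_snd, Pi.smul_apply, hzi, pt,
      smul_eq_mul, mul_ite, mul_one, mul_zero] at this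
    rw [← this, Finset.sum_filter]
    exact Finset.sum_congr rfl fun i _ => by simp only [eq_comm]
  refine ⟨fun x y => ∃ i, xi i = x ∧ yi i = y, ?_, ?_, ?_⟩
  · refine (coupled_of_label hf hg lA lB θ ?_ ?_ ?_).mono fun u _ v _ h => hθ _ _ h
    · intro x y
      exact mul_nonneg hMpos.le (Finset.sum_nonneg fun i _ => (hw i).le)
    · intro x hx
      simp only [θ]
      rw [← Finset.mul_sum]
      have : ∑ y ∈ Y0, ∑ i with xi i = x ∧ yi i = y, w i = ∑ i with xi i = x, w i := by
        rw [← Finset.sum_fiberwise_of_maps_to (t := Y0) (g := yi) (fun i _ => hyi i)]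
        simp only [Finset.filter_filter]
      rw [this, hrow x hx, mul_div_cancel₀ _ hMpos.ne']
    · intro y hy
      simp only [θ]
      rw [← Finset.mul_sum]
      have : ∑ x ∈ X0, ∑ i with xi i = x ∧ yi i = y, w i = ∑ i with yi i = y, w i := by
        rw [← Finset.sum_fiberwise_of_maps_to (t := X0) (g := xi) (fun i _ => hxi i)]
        simp only [Finset.filter_filter, and_comm]
      rw [this, hcol y hy, mul_div_cancel₀ _ hMpos.ne']
  · rintro x y ⟨i, rfl, rfl⟩
    exact hR i
  · have hcard : Fintype.card ι ≤ X0.card + Y0.card + 1 := by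
      refine haff.card_le_finrank_succ.trans ?_
      have := Submodule.finrank_le (vectorSpan ℝ (Set.range z))
      simp only [Module.finrank_prod, Module.finrank_fintype_fun_eq_card, Fintype.card_coe] at this
      omega
    have hsum : Fintype.card ι = ∑ x ∈ X0, (Finset.univ.filter fun i => xi i = x).card := by
      rw [← Finset.card_univ]
      exact Finset.card_eq_sum_card_fiberwise (fun i _ => hxi i)
    have hge : ∀ x ∈ X0, 1 + (if (∃ y y', y ≠ y' ∧ (∃ i, xi i = x ∧ yi i = y) ∧
        ∃ i, xi i = x ∧ yi i = y') then 1 else 0) ≤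
        (Finset.univ.filter fun i => xi i = x).card := by
      intro x hx
      split_ifs with hs
      · obtain ⟨_, _, hne', ⟨i, hi, rfl⟩, j, hj, rfl⟩ := hs
        rw [show 1 + 1 = 2 from rfl, Nat.succ_le_iff, Finset.one_lt_card]
        exact ⟨i, by simp [hi], j, by simp [hj], fun e => hne' (e ▸ rfl)⟩
      · rw [add_zero, Nat.succ_le_iff, Finset.card_pos]
        by_contra hc
        rw [Finset.not_nonempty_iff_eq_empty] at hc
        have h4 := hrow x hx
        rw [hc, Finset.sum_empty] at h4
        obtain ⟨u, hu, rfl⟩ := Finset.mem_image.1 hx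
        have : 0 < fx (lA u) := Finset.sum_pos (fun u hu => hf u (Finset.mem_filter.1 hu).1)
          ⟨u, by simp [hu]⟩
        have := div_pos this hMpos
        linarith
    have := Finset.sum_le_sum hge
    rw [← hsum, Finset.sum_add_distrib, ← Finset.card_filter, Finset.sum_const, smul_eq_mul,
      mul_one] at this
    beta_reduce
    omega

end Coupled
end KS

namespace KS
open scoped Classical

/-- A block at level `N`: all entries but the last are below `N`. -/
def IsBlk (N : ℕ) (S : List ℕ) : Prop := ∃ S0 m, S = S0 ++ [m] ∧ (∀ n ∈ S0, n < N) ∧ N ≤ m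

/-- Concatenations of blocks of level `N`. -/
inductive Cpl (N : ℕ) : List ℕ → Prop
  | nil : Cpl N []
  | append {b S : List ℕ} : IsBlk N b → Cpl N S → Cpl N (b ++ S)

theorem IsBlk.ne_nil {N : ℕ} {S : List ℕ} (h : IsBlk N S) : S ≠ [] := by
  obtain ⟨S0, m, rfl, -⟩ := h; simp

theorem IsBlk.cons {N n : ℕ} {S : List ℕ} (hn : n < N) (h : IsBlk N S) : IsBlk N (n :: S) := by
  obtain ⟨S0, m, rfl, h1, h2⟩ := h
  exact ⟨n :: S0, m, rfl, by simpa [hn] using h1, h2⟩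

theorem IsBlk.singleton {N m : ℕ} (h : N ≤ m) : IsBlk N [m] := ⟨[], m, rfl, by simp, h⟩

theorem IsBlk.le_sum {N : ℕ} {S : List ℕ} (h : IsBlk N S) : N ≤ S.sum := by
  obtain ⟨S0, m, rfl, h1, h2⟩ := h
  simp; omega

theorem isBlk_zero {S : List ℕ} : IsBlk 0 S ↔ ∃ m, S = [m] := by
  constructor
  · rintro ⟨S0, m, rfl, h1, -⟩
    rcases S0 with _ | ⟨a, S0⟩
    · exact ⟨m, rfl⟩
    · simpa using h1 a
  · rintro ⟨m, rfl⟩; exact .singleton (Nat.zero_le _)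

theorem cpl_append_singleton {N m : ℕ} (hm : N ≤ m) (S : List ℕ) : Cpl N (S ++ [m]) := by
  induction S with
  | nil => simpa using Cpl.append (.singleton hm) .nil
  | cons n S ih =>
    by_cases hn : N ≤ n
    · exact Cpl.append (b := [n]) (.singleton hn) ih
    · generalize hT : S ++ [m] = T at ih
      cases ih with
      | nil => simp at hT
      | @append b S' hb hS' =>
        simp only [List.cons_append, hT]
        exact Cpl.append (b := n :: b) (hb.cons (not_le.1 hn)) hS'

theorem IsBlk.cpl {N N' : ℕ} {S : List ℕ} (h : IsBlk N' S) (hN : N ≤ N') : Cpl N S := by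
  obtain ⟨S0, m, rfl, -, h2⟩ := h
  exact cpl_append_singleton (hN.trans h2) S0

/-- Splitting a list after each entry of size at least `N`. -/
def split {α : Type*} (f : α → ℕ) (N : ℕ) : List α → List (List α)
  | [] => []
  | a :: u => if N ≤ f a then [a] :: split f N u else
      match split f N u with
      | [] => [[a]]
      | b :: bs => (a :: b) :: bs

section split
variable {α β : Type*} (f : α → ℕ) {N : ℕ}

theorem split_append_blk {b : List α} (hb : IsBlk N (b.map f)) (u : List α) :
    split f N (b ++ u) = b :: split f N u := by
  induction b with
  | nil => exact absurd rfl hb.ne_nil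
  | cons a b ih =>
    obtain ⟨S0, m, h, h1, h2⟩ := hb
    rcases S0 with _ | ⟨n, S0⟩
    · simp only [List.map_cons, List.nil_append, List.cons.injEq, List.map_eq_nil_iff] at h
      obtain ⟨rfl, rfl⟩ := h
      simp [split, h2]
    · simp only [List.map_cons, List.cons_append, List.cons.injEq] at h
      obtain ⟨rfl, h⟩ := h
      have hn : ¬ N ≤ f a := by simpa using h1 (f a) (by simp)
      have := ih ⟨S0, m, h, fun n hn => h1 n (by simp [hn]), h2⟩
      simp [split, hn, this]

theorem split_append {u : List α} (hu : Cpl N (u.map f)) (v : List α) :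
    split f N (u ++ v) = split f N u ++ split f N v := by
  generalize hS : u.map f = S at hu
  induction hu generalizing u with
  | nil => simp at hS; simp [hS, split]
  | append hb _ ih =>
    obtain ⟨u1, u2, rfl, rfl, rfl⟩ := List.map_eq_append_iff.1 hS
    rw [List.append_assoc, split_append_blk f hb, split_append_blk f hb, ih rfl, List.cons_append]

theorem flatten_split (u : List α) : (split f N u).flatten = u := by
  induction u with
  | nil => rfl
  | cons a u ih =>
    simp only [split]
    split_ifs
    · simp [ih]
    · split <;> rename_i h <;> rw [h] at ih <;> simp at ih ⊢ <;> simp [ih]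

theorem split_map (g : β → α) (u : List β) :
    split f N (u.map g) = (split (f ∘ g) N u).map (List.map g) := by
  induction u with
  | nil => rfl
  | cons a u ih =>
    simp only [List.map_cons, split, ih, Function.comp]
    split_ifs
    · simp
    · rcases h : split (f ∘ g) N u with _ | ⟨b, bs⟩ <;> simp

end split

/-- A countable alphabet of words with weights, graded by word length. -/
structure Side (α A : Type*) where
  sp : α → List A
  wt : α → ℝ
  fib : ℕ → Finset α
  wt_pos : ∀ a, 0 < wt a
  mem_fib : ∀ {m a}, a ∈ fib m ↔ (sp a).length = m

namespace Side
variable {α β A B : Type*} (X : Side α A) (Y : Side β B)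

def len (a : α) : ℕ := (X.sp a).length
def pat (u : List α) : List ℕ := u.map X.len
def flat (u : List α) : List A := (u.map X.sp).flatten
def W (u : List α) : ℝ := (u.map X.wt).prod
def P (m : ℕ) : ℝ := ∑ a ∈ X.fib m, X.wt a
def PS (S : List ℕ) : ℝ := (S.map X.P).prod
def F : List ℕ → Finset (List α)
  | [] => {[]}
  | n :: S => (X.fib n ×ˢ F S).image fun q => q.1 :: q.2

@[simp] theorem pat_nil : X.pat [] = [] := rfl
@[simp] theorem pat_cons (a : α) (u) : X.pat (a :: u) = X.len a :: X.pat u := rfl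
@[simp] theorem pat_append (u v : List α) : X.pat (u ++ v) = X.pat u ++ X.pat v := by simp [pat]
@[simp] theorem flat_nil : X.flat [] = [] := rfl
@[simp] theorem flat_cons (a : α) (u) : X.flat (a :: u) = X.sp a ++ X.flat u := rfl
@[simp] theorem flat_append (u v : List α) : X.flat (u ++ v) = X.flat u ++ X.flat v := by
  simp [flat]
@[simp] theorem W_nil : X.W [] = 1 := rfl
@[simp] theorem W_cons (a : α) (u) : X.W (a :: u) = X.wt a * X.W u := by simp [W]
@[simp] theorem W_append (u v : List α) : X.W (u ++ v) = X.W u * X.W v := by simp [W]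
@[simp] theorem PS_nil : X.PS [] = 1 := rfl
@[simp] theorem PS_cons (a : ℕ) (u) : X.PS (a :: u) = X.P a * X.PS u := by simp [PS]

theorem length_flat (u : List α) : (X.flat u).length = (X.pat u).sum := by
  induction u with
  | nil => rfl
  | cons a u ih => simp [ih, len]

theorem W_pos (u : List α) : 0 < X.W u := by
  induction u with
  | nil => simp
  | cons a u ih => rw [W_cons]; exact mul_pos (X.wt_pos a) ih

theorem mem_F {S : List ℕ} {u : List α} : u ∈ X.F S ↔ X.pat u = S := by
  induction S generalizing u with
  | nil => simp [F, pat]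
  | cons n S ih =>
    rcases u with _ | ⟨a, u⟩
    · simp [F]
    · simp [F, ih, X.mem_fib, len]

theorem sum_F_cons {M : Type*} [AddCommMonoid M] (n : ℕ) (S : List ℕ) (f : List α → M) :
    ∑ u ∈ X.F (n :: S), f u = ∑ a ∈ X.fib n, ∑ u ∈ X.F S, f (a :: u) := by
  rw [F, Finset.sum_image, Finset.sum_product]
  rintro ⟨a, u⟩ - ⟨b, v⟩ - h
  simpa using h

theorem sum_F_append {M : Type*} [AddCommMonoid M] (S T : List ℕ) (f : List α → M) :
    ∑ u ∈ X.F (S ++ T), f u = ∑ u ∈ X.F S, ∑ v ∈ X.F T, f (u ++ v) := by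
  induction S generalizing f with
  | nil => simp [F]
  | cons n S ih => simp [sum_F_cons, ih]

theorem sum_W (S : List ℕ) : ∑ u ∈ X.F S, X.W u = X.PS S := by
  induction S with
  | nil => simp [F]
  | cons n S ih => simp [sum_F_cons, ← Finset.mul_sum, ih, ← Finset.sum_mul, P]

theorem P_pos (a : α) : 0 < X.P (X.len a) :=
  Finset.sum_pos (fun a _ => X.wt_pos a) ⟨a, X.mem_fib.2 rfl⟩

theorem P_nonneg (m : ℕ) : 0 ≤ X.P m := Finset.sum_nonneg fun a _ => (X.wt_pos a).le

theorem PS_nonneg (S : List ℕ) : 0 ≤ X.PS S := by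
  rw [← sum_W]; exact Finset.sum_nonneg fun a _ => (X.W_pos a).le

/-- Conditional information of a letter given its length. -/
def J (a : α) : ℝ := Real.log (X.P (X.len a)) - Real.log (X.wt a)
def Jc (c : ℕ) (u : List α) : ℝ := (u.map fun a => if X.len a ≤ c then X.J a else 0).sum
/-- A letter with its content hidden if it is longer than `c`. -/
def hide (c : ℕ) (a : α) : ℕ × Option α := (X.len a, if X.len a ≤ c then some a else none)
def mask (c : ℕ) (u : List α) : List (ℕ × Option α) := u.map (X.hide c)

theorem J_nonneg (a : α) : 0 ≤ X.J a := by
  rw [J, sub_nonneg]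
  exact Real.log_le_log (X.wt_pos a)
    (Finset.single_le_sum (f := X.wt) (fun a _ => (X.wt_pos a).le) (X.mem_fib.2 rfl))

theorem exp_neg_J (a : α) : X.P (X.len a) * Real.exp (-X.J a) = X.wt a := by
  rw [J, neg_sub, Real.exp_sub, Real.exp_log (X.wt_pos a), Real.exp_log (X.P_pos a),
    mul_div_cancel₀ _ (X.P_pos a).ne']

theorem pat_eq_of_mask {c : ℕ} {u v : List α} (h : X.mask c u = X.mask c v) :
    X.pat u = X.pat v := by
  have := congrArg (List.map Prod.fst) h
  simpa [mask, hide, pat, Function.comp_def] using this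

theorem mask_mono {c c' : ℕ} (hc : c ≤ c') {u v : List α} (h : X.mask c' u = X.mask c' v) :
    X.mask c u = X.mask c v := by
  have := congrArg (List.map fun q : ℕ × Option α => (q.1, if q.1 ≤ c then q.2 else none)) h
  have key : ∀ u, (X.mask c' u).map (fun q : ℕ × Option α => (q.1, if q.1 ≤ c then q.2 else none))
      = X.mask c u := by
    intro u
    rw [mask, mask, List.map_map]
    refine List.map_congr_left fun a _ => ?_
    have : X.len a ≤ c → X.len a ≤ c' := fun h => h.trans hc
    simp only [Function.comp, hide]
    by_cases h : X.len a ≤ c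
    · simp [h, this h]
    · simp [h]
  rwa [key, key] at this

theorem Jc_eq_of_mask {c : ℕ} {u v : List α} (h : X.mask c u = X.mask c v) :
    X.Jc c u = X.Jc c v := by
  have key : ∀ u, X.Jc c u = ((X.mask c u).map fun q : ℕ × Option α =>
      match q.2 with | none => 0 | some a => X.J a).sum := by
    intro u
    rw [mask, Jc, List.map_map]
    congr 1
    refine List.map_congr_left fun a _ => ?_
    simp only [Function.comp, hide]
    split_ifs <;> rfl
  rw [key, key, h]

theorem sum_mask_class (c : ℕ) (u : List α) :
    ∑ u' ∈ X.F (X.pat u) with X.mask c u' = X.mask c u, X.W u' =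
      X.PS (X.pat u) * Real.exp (-X.Jc c u) := by
  induction u with
  | nil => simp [F, mask, Jc, Finset.filter_singleton]
  | cons a u ih =>
    rw [Finset.sum_filter, pat_cons, sum_F_cons]
    have e : ∀ a' u', X.mask c (a' :: u') = X.mask c (a :: u) ↔
        X.hide c a' = X.hide c a ∧ X.mask c u' = X.mask c u := by
      intro a' u'; simp [mask]
    have e2 : ∀ a', ∑ u' ∈ X.F (X.pat u), (if X.mask c (a' :: u') = X.mask c (a :: u) then
        X.W (a' :: u') else 0) = if X.hide c a' = X.hide c a then
          X.wt a' * (X.PS (X.pat u) * Real.exp (-X.Jc c u)) else 0 := by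
      intro a'
      simp only [e]
      by_cases h : X.hide c a' = X.hide c a
      · simp only [h, true_and, W_cons, if_true]
        rw [← ih, Finset.sum_filter, Finset.mul_sum]
        simp
      · simp [h]
    simp only [e2]
    rw [← Finset.sum_filter, ← Finset.sum_mul]
    have e3 : ∑ a' ∈ X.fib (X.len a) with X.hide c a' = X.hide c a, X.wt a' =
        X.P (X.len a) * Real.exp (-if X.len a ≤ c then X.J a else 0) := by
      by_cases hc : X.len a ≤ c
      · have : (X.fib (X.len a)).filter (fun a' => X.hide c a' = X.hide c a) = {a} := by
          ext a'
          simp only [hide, hc, if_true, Prod.mk.injEq, Finset.mem_filter, Finset.mem_singleton]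
          constructor
          · rintro ⟨-, h1, h2⟩
            rw [h1, if_pos hc] at h2
            simpa using h2
          · rintro rfl
            exact ⟨X.mem_fib.2 rfl, rfl, by simp [hc]⟩
        rw [this, Finset.sum_singleton, if_pos hc, exp_neg_J]
      · rw [if_neg hc, neg_zero, Real.exp_zero, mul_one, P]
        refine Finset.sum_congr ?_ fun _ _ => rfl
        refine Finset.filter_true_of_mem fun a' ha' => ?_
        have : X.len a' = X.len a := X.mem_fib.1 ha'
        simp [hide, this, hc]
    rw [e3]
    simp only [PS_cons, Jc, List.map_cons, List.sum_cons, neg_add, Real.exp_add]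
    ring

end Side
end KS

namespace KS
open scoped Classical
open ENNReal Filter

namespace Side
variable {α β A B : Type*} (X : Side α A) (Y : Side β B)

theorem length_of_mem_F {S : List ℕ} {u : List α} (h : u ∈ X.F S) : u.length = S.length := by
  rw [← X.mem_F.1 h]; simp [pat]

variable {X Y}

theorem coupled_append {S T : List ℕ} {R R' R'' : List α → List β → Prop}
    (h : Coupled (X.F S) (Y.F S) X.W Y.W R) (h' : Coupled (X.F T) (Y.F T) X.W Y.W R')
    (hR : ∀ u ∈ X.F S, ∀ v ∈ Y.F S, ∀ u' ∈ X.F T, ∀ v' ∈ Y.F T, R u v → R' u' v' →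
      R'' (u ++ u') (v ++ v')) :
    Coupled (X.F (S ++ T)) (Y.F (S ++ T)) X.W Y.W R'' := by
  obtain ⟨γ, h0, h1, h2, h3⟩ := h
  obtain ⟨γ', h0', h1', h2', h3'⟩ := h'
  have tk : ∀ {u : List α} (u'), u ∈ X.F S → (u ++ u').take S.length = u ∧
      (u ++ u').drop S.length = u' := fun u' hu => by
    rw [← X.length_of_mem_F hu]; simp
  have tk' : ∀ {u : List β} (u'), u ∈ Y.F S → (u ++ u').take S.length = u ∧
      (u ++ u').drop S.length = u' := fun u' hu => by
    rw [← Y.length_of_mem_F hu]; simp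
  have spl : ∀ w ∈ X.F (S ++ T), ∃ u ∈ X.F S, ∃ u' ∈ X.F T, w = u ++ u' := fun w hw => by
    obtain ⟨u, u', rfl, hu, hu'⟩ := List.map_eq_append_iff.1 (X.mem_F.1 hw)
    exact ⟨u, X.mem_F.2 hu, u', X.mem_F.2 hu', rfl⟩
  have spl' : ∀ w ∈ Y.F (S ++ T), ∃ u ∈ Y.F S, ∃ u' ∈ Y.F T, w = u ++ u' := fun w hw => by
    obtain ⟨u, u', rfl, hu, hu'⟩ := List.map_eq_append_iff.1 (Y.mem_F.1 hw)
    exact ⟨u, Y.mem_F.2 hu, u', Y.mem_F.2 hu', rfl⟩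
  refine ⟨fun w z => γ (w.take S.length) (z.take S.length) *
    γ' (w.drop S.length) (z.drop S.length), fun _ _ => mul_nonneg (h0 _ _) (h0' _ _), ?_, ?_, ?_⟩
  · intro w hw
    obtain ⟨u, hu, u', hu', rfl⟩ := spl w hw
    beta_reduce
    rw [sum_F_append, (tk u' hu).1, (tk u' hu).2, W_append, ← h1 u hu, ← h1' u' hu',
      Finset.sum_mul_sum]
    exact Finset.sum_congr rfl fun v hv => Finset.sum_congr rfl fun v' _ => by
      rw [(tk' v' hv).1, (tk' v' hv).2]
  · intro w hw
    obtain ⟨u, hu, u', hu', rfl⟩ := spl' w hw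
    beta_reduce
    rw [sum_F_append, (tk' u' hu).1, (tk' u' hu).2, W_append, ← h2 u hu, ← h2' u' hu',
      Finset.sum_mul_sum]
    exact Finset.sum_congr rfl fun v hv => Finset.sum_congr rfl fun v' _ => by
      rw [(tk v' hv).1, (tk v' hv).2]
  · intro w hw z hz hne
    obtain ⟨u, hu, u', hu', rfl⟩ := spl w hw
    obtain ⟨v, hv, v', hv', rfl⟩ := spl' z hz
    beta_reduce at hne
    rw [(tk u' hu).1, (tk u' hu).2, (tk' v' hv).1, (tk' v' hv).2] at hne
    exact hR u hu v hv u' hu' v' hv' (h3 u hu v hv (left_ne_zero_of_mul hne))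
      (h3' u' hu' v' hv' (right_ne_zero_of_mul hne))

variable (X Y)

/-- Blockwise extension of a relation between blocks of level `N`. -/
def Star (N : ℕ) (R : List α → List β → Prop) (u : List α) (v : List β) : Prop :=
  List.Forall₂ R (split X.len N u) (split Y.len N v)

variable {X Y}

theorem Star.append {N : ℕ} {R : List α → List β → Prop} {u u' : List α} {v v' : List β}
    (hu : IsBlk N (X.pat u)) (hv : IsBlk N (Y.pat v)) (h : R u v) (h' : Star X Y N R u' v') :
    Star X Y N R (u ++ u') (v ++ v') := by
  rw [Star, split_append_blk X.len hu, split_append_blk Y.len hv]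
  exact .cons h h'

theorem coupled_star {N : ℕ} {R : List α → List β → Prop}
    (h : ∀ S, IsBlk N S → Coupled (X.F S) (Y.F S) X.W Y.W R) {S : List ℕ} (hS : Cpl N S) :
    Coupled (X.F S) (Y.F S) X.W Y.W (Star X Y N R) := by
  induction hS with
  | nil =>
    refine ⟨fun _ _ => 1, by simp, by simp [F], by simp [F], ?_⟩
    simp [F, Star, split]
  | append hb _ ih =>
    refine coupled_append (h _ hb) ih fun u hu v hv u' _ v' _ hR hR' => ?_
    exact Star.append (by rwa [X.mem_F.1 hu]) (by rwa [Y.mem_F.1 hv]) hR hR'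

theorem star_equivalence {N : ℕ} {E : List α → List α → Prop} (hE : Equivalence E) :
    Equivalence (Star X X N E) where
  refl u := List.forall₂_same.2 fun _ _ => hE.refl _
  symm h := (List.Forall₂.imp (fun _ _ => hE.symm) h.flip)
  trans {u v w} h h' := by
    unfold Star at *
    generalize split X.len N u = l at h
    generalize split X.len N v = l' at h h'
    generalize split X.len N w = l'' at h'
    induction h generalizing l'' with
    | nil => cases h'; exact .nil
    | cons h _ ih => cases h' with
      | cons h1 h2 => exact .cons (hE.trans h h1) (ih _ h2)

theorem star_sat {N : ℕ} {R : List α → List β → Prop} {EA : List α → List α → Prop}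
    {EB : List β → List β → Prop} (hs : ∀ u u' v v', R u v → EA u u' → EB v v' → R u' v')
    {u u' : List α} {v v' : List β} (h : Star X Y N R u v) (hu : Star X X N EA u u')
    (hv : Star Y Y N EB v v') : Star X Y N R u' v' := by
  unfold Star at *
  generalize split X.len N u = l at h hu
  generalize split Y.len N v = m at h hv
  generalize split X.len N u' = l' at hu
  generalize split Y.len N v' = m' at hv
  induction h generalizing l' m' with
  | nil => cases hu; cases hv; exact .nil
  | cons h _ ih => cases hu with
    | cons h1 h2 => cases hv with
      | cons h3 h4 => exact .cons (hs _ _ _ _ h h1 h3) (ih _ h2 _ h4)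

theorem star_of_mask {N c : ℕ} {E : List α → List α → Prop}
    (hE : ∀ u u', X.mask c u = X.mask c u' → E u u') {u u' : List α}
    (h : X.mask c u = X.mask c u') : Star X X N E u u' := by
  have key : ∀ u, (split X.len N u).map (X.mask c) = split Prod.fst N (X.mask c u) := fun u =>
    (split_map (N := N) Prod.fst (X.hide c) u).symm
  have h2 : (split X.len N u).map (X.mask c) = (split X.len N u').map (X.mask c) := by
    rw [key, key, h]
  have h3 : List.Forall₂ (· = ·) ((split X.len N u).map (X.mask c))
      ((split X.len N u').map (X.mask c)) := by rw [h2]; exact List.forall₂_same.2 fun _ _ => rfl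
  rw [List.forall₂_map_left_iff, List.forall₂_map_right_iff] at h3
  exact h3.imp fun _ _ => hE _ _

theorem label_eq {E : List α → List α → Prop} (hE : Equivalence E) {u u' : List α} :
    E u = E u' ↔ E u u' := by
  constructor
  · intro h; rw [h]; exact hE.refl _
  · intro h; funext w; exact propext ⟨hE.trans (hE.symm h), hE.trans h⟩

theorem card_image_le_of_imp {U V W : Type*} [DecidableEq V] [DecidableEq W] {s : Finset U} {f : U → V} {g : U → W}
    (h : ∀ u ∈ s, ∀ u' ∈ s, g u = g u' → f u = f u') : (s.image f).card ≤ (s.image g).card := by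
  rcases s.eq_empty_or_nonempty with rfl | ⟨u0, -⟩
  · simp
  have : Nonempty U := ⟨u0⟩
  choose! k hk1 hk2 using fun (w : W) (hw : w ∈ s.image g) => Finset.mem_image.1 hw
  have : s.image f ⊆ (s.image g).image (f ∘ k) := by
    intro y hy
    obtain ⟨u, hu, rfl⟩ := Finset.mem_image.1 hy
    refine Finset.mem_image.2 ⟨g u, Finset.mem_image_of_mem _ hu, ?_⟩
    exact h _ (hk1 _ (Finset.mem_image_of_mem _ hu)) _ hu (hk2 _ (Finset.mem_image_of_mem _ hu))
  exact (Finset.card_le_card this).trans Finset.card_image_le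

theorem card_star_le {N : ℕ} {E : List α → List α → Prop} (hE : Equivalence E) {a : ℝ}
    (h : ∀ S, IsBlk N S → (((X.F S).image E).card : ℝ) ≤ Real.exp (a * S.sum))
    {S : List ℕ} (hS : Cpl N S) :
    (((X.F S).image (Star X X N E)).card : ℝ) ≤ Real.exp (a * S.sum) := by
  induction hS with
  | nil => simp [F]
  | @append b S hb _ ih =>
    have h1 : ((X.F (b ++ S)).image (Star X X N E)).card ≤
        ((X.F b).image E ×ˢ (X.F S).image (Star X X N E)).card := by
      refine (card_image_le_of_imp (g := fun u => (E (u.take b.length),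
        Star X X N E (u.drop b.length))) ?_).trans (Finset.card_le_card ?_)
      · intro w hw w' hw' heq
        obtain ⟨u, u', rfl, hu, hu'⟩ := List.map_eq_append_iff.1 (X.mem_F.1 hw)
        obtain ⟨v, v', rfl, hv, hv'⟩ := List.map_eq_append_iff.1 (X.mem_F.1 hw')
        have l1 := X.length_of_mem_F (X.mem_F.2 hu)
        have l2 := X.length_of_mem_F (X.mem_F.2 hv)
        rw [label_eq (star_equivalence hE)]
        rw [List.take_left' l1, List.take_left' l2, List.drop_left' l1, List.drop_left' l2,
          Prod.mk.injEq, label_eq hE, label_eq (star_equivalence hE)] at heq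
        exact Star.append (by rw [pat, hu]; exact hb) (by rw [pat, hv]; exact hb) heq.1 heq.2
      · intro y hy
        obtain ⟨w, hw, rfl⟩ := Finset.mem_image.1 hy
        obtain ⟨u, u', rfl, hu, hu'⟩ := List.map_eq_append_iff.1 (X.mem_F.1 hw)
        have l1 := X.length_of_mem_F (X.mem_F.2 hu)
        rw [List.take_left' l1, List.drop_left' l1]
        exact Finset.mem_product.2 ⟨Finset.mem_image_of_mem _ (X.mem_F.2 hu),
          Finset.mem_image_of_mem _ (X.mem_F.2 hu')⟩
    rw [Finset.card_product] at h1
    calc (((X.F (b ++ S)).image (Star X X N E)).card : ℝ)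
        ≤ ((X.F b).image E).card * ((X.F S).image (Star X X N E)).card := by exact_mod_cast h1
      _ ≤ Real.exp (a * b.sum) * Real.exp (a * S.sum) := by
          gcongr
          exact h b hb
      _ = _ := by rw [← Real.exp_add]; simp; ring

/-- The number of masks of words with information at most `a` per symbol. -/
theorem card_mask_le {c : ℕ} {a : ℝ} {S : List ℕ} {typ : List α → Prop}
    (ht : ∀ u ∈ X.F S, typ u → X.Jc c u ≤ a * S.sum) :
    ((((X.F S).filter typ).image (X.mask c)).card : ℝ) ≤ Real.exp (a * S.sum) := by
  rcases ((X.F S).filter typ).eq_empty_or_nonempty with h | ⟨u0, hu0⟩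
  · rw [h]; simp; positivity
  have hPS : 0 < X.PS S := by
    rw [← sum_W]
    exact Finset.sum_pos (fun u _ => X.W_pos u) ⟨u0, (Finset.mem_filter.1 hu0).1⟩
  set K := ((X.F S).filter typ).image (X.mask c) with hK
  have h1 : ∑ m ∈ K, X.PS S * Real.exp (-(a * S.sum)) ≤
      ∑ m ∈ K, ∑ u ∈ X.F S with X.mask c u = m, X.W u := by
    refine Finset.sum_le_sum fun m hm => ?_
    obtain ⟨u, hu, rfl⟩ := Finset.mem_image.1 hm
    obtain ⟨hu1, hu2⟩ := Finset.mem_filter.1 hu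
    have := X.sum_mask_class c u
    rw [X.mem_F.1 hu1] at this
    rw [this]
    gcongr
    exact ht u hu1 hu2
  rw [Finset.sum_fiberwise_eq_sum_filter, Finset.sum_const, nsmul_eq_mul] at h1
  have h2 : ∑ u ∈ X.F S with X.mask c u ∈ K, X.W u ≤ X.PS S := by
    rw [← sum_W]
    exact Finset.sum_le_sum_of_subset_of_nonneg (Finset.filter_subset _ _)
      fun u _ _ => (X.W_pos u).le
  have h3 := h1.trans h2
  rw [Real.exp_neg] at h3
  have he := Real.exp_pos (a * S.sum)
  have h4 : (K.card : ℝ) * (Real.exp (a * S.sum))⁻¹ ≤ 1 := by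
    by_contra! hc
    have := mul_lt_mul_of_pos_left hc hPS
    linarith
  rwa [← div_eq_mul_inv, div_le_one he] at h4

/-- Total weight of few classes of words with information at least `b` per symbol. -/
theorem sum_typ_le {c : ℕ} {b : ℝ} {S : List ℕ} {typ : List α → Prop} {Lb : Type*}
    (lab : List α → Lb) (K : Finset Lb)
    (ht : ∀ u ∈ X.F S, typ u → b * S.sum ≤ X.Jc c u)
    (hl : ∀ u u', typ u → typ u' → lab u = lab u' → X.mask c u = X.mask c u') :
    ∑ u ∈ X.F S with typ u ∧ lab u ∈ K, X.W u ≤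
      K.card * (X.PS S * Real.exp (-(b * S.sum))) := by
  have e : ∑ u ∈ X.F S with typ u ∧ lab u ∈ K, X.W u =
      ∑ x ∈ K, ∑ u ∈ (X.F S).filter typ with lab u = x, X.W u := by
    have := Finset.sum_fiberwise_eq_sum_filter ((X.F S).filter typ) K lab X.W
    rw [Finset.filter_filter] at this
    convert this.symm
  rw [e, ← nsmul_eq_mul]
  refine Finset.sum_le_card_nsmul _ _ _ fun x _ => ?_
  rcases (((X.F S).filter typ).filter fun u => lab u = x).eq_empty_or_nonempty with h | ⟨u0, hu0⟩
  · rw [h, Finset.sum_empty]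
    exact mul_nonneg (X.PS_nonneg S) (Real.exp_pos _).le
  · simp only [Finset.mem_filter] at hu0
    obtain ⟨⟨hu1, hu2⟩, rfl⟩ := hu0
    have := X.sum_mask_class c u0
    rw [X.mem_F.1 hu1] at this
    calc _ ≤ ∑ u' ∈ X.F S with X.mask c u' = X.mask c u0, X.W u' := by
          refine Finset.sum_le_sum_of_subset_of_nonneg ?_ fun u _ _ => (X.W_pos u).le
          intro u hu
          simp only [Finset.mem_filter] at hu ⊢
          exact ⟨hu.1.1, hl _ _ hu.1.2 hu2 hu.2⟩
      _ ≤ _ := by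
          rw [this]
          gcongr
          · exact X.PS_nonneg S
          · exact ht u0 hu1 hu2

end Side
end KS

namespace KS
open scoped Classical
open ENNReal Filter Topology

namespace Side
variable {α β A B : Type*}

/-- Words whose visible information per symbol is `δ`-close to `j`. -/
def Typ (X : Side α A) (c : ℕ) (j δ : ℝ) (u : List α) : Prop :=
  |X.Jc c u - j * (X.pat u).sum| ≤ δ * (X.pat u).sum

theorem Typ.of_mask {X : Side α A} {c : ℕ} {j δ : ℝ} {u u' : List α} (h : Typ X c j δ u)
    (hm : X.mask c u = X.mask c u') : Typ X c j δ u' := by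
  rwa [Typ, ← X.pat_eq_of_mask hm, ← X.Jc_eq_of_mask hm]

/-- A partition of blocks of level `N` into few classes, coarser than masking. -/
structure IsPart (X : Side α A) (N : ℕ) (h : ℝ) (E : List α → List α → Prop) : Prop where
  equiv : Equivalence E
  pat_eq : ∀ u u', E u u' → X.pat u = X.pat u'
  mask : ∃ c, ∀ u u', X.mask c u = X.mask c u' → E u u'
  card : ∃ a < h, ∀ S, IsBlk N S → (((X.F S).image E).card : ℝ) ≤ Real.exp (a * S.sum)

/-- Refinement of a partition: typical words are classified by their masks. -/
def refineE (X : Side α A) (N : ℕ) (E : List α → List α → Prop) (c : ℕ) (typ : List α → Prop)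
    (u u' : List α) : Prop :=
  X.pat u = X.pat u' ∧ ((typ u ∧ typ u' ∧ X.mask c u = X.mask c u') ∨
    (¬ typ u ∧ ¬ typ u' ∧ Star X X N E u u'))

theorem refineE_equiv {X : Side α A} {N : ℕ} {E : List α → List α → Prop} (hE : Equivalence E)
    (c : ℕ) (typ : List α → Prop) : Equivalence (refineE X N E c typ) where
  refl u := ⟨rfl, by
    by_cases h : typ u
    · exact .inl ⟨h, h, rfl⟩
    · exact .inr ⟨h, h, (star_equivalence hE).refl u⟩⟩
  symm := by
    rintro u v ⟨h, h' | h'⟩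
    · exact ⟨h.symm, .inl ⟨h'.2.1, h'.1, h'.2.2.symm⟩⟩
    · exact ⟨h.symm, .inr ⟨h'.2.1, h'.1, (star_equivalence hE).symm h'.2.2⟩⟩
  trans := by
    rintro u v w ⟨h, h1 | h1⟩ ⟨h', h2 | h2⟩
    · exact ⟨h.trans h', .inl ⟨h1.1, h2.2.1, h1.2.2.trans h2.2.2⟩⟩
    · exact absurd h1.2.1 h2.1
    · exact absurd h2.1 h1.2.1
    · exact ⟨h.trans h', .inr ⟨h1.1, h2.2.1, (star_equivalence hE).trans h1.2.2 h2.2.2⟩⟩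

theorem IsPart.refine {X : Side α A} {N : ℕ} {h : ℝ} {E : List α → List α → Prop}
    (hE : IsPart X N h E) : ∃ c0, ∀ c ≥ c0, ∀ j δ : ℝ, j + δ < h →
      (∀ u u', refineE X N E c (Typ X c j δ) u u' → Star X X N E u u') ∧
      ∃ a' < h, ∀ᶠ N' in atTop, IsPart X N' h (refineE X N E c (Typ X c j δ)) ∧
        ∀ S, IsBlk N' S →
          (((X.F S).image (refineE X N E c (Typ X c j δ))).card : ℝ) ≤ Real.exp (a' * S.sum) := by
  obtain ⟨c0, hc0⟩ := hE.mask
  obtain ⟨a, ha, hcard⟩ := hE.card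
  refine ⟨c0, fun c hc j δ hj => ⟨?_, ?_⟩⟩
  · rintro u u' ⟨-, h' | h'⟩
    · exact star_of_mask hc0 (X.mask_mono hc h'.2.2)
    · exact h'.2.2
  set m := max a (j + δ)
  have hm : m < h := max_lt ha hj
  set a' := (m + h) / 2 with ha'
  have hma' : m < a' := by rw [ha']; linarith
  have ha'h : a' < h := by rw [ha']; linarith
  refine ⟨a', ha'h, ?_⟩
  have hlog : ∀ᶠ n : ℕ in atTop, Real.log 2 ≤ (a' - m) * n :=
    (tendsto_natCast_atTop_atTop.const_mul_atTop (sub_pos.2 hma')).eventually_ge_atTop _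
  filter_upwards [eventually_forall_ge_atTop.2 hlog, eventually_ge_atTop N] with N' hN' hNN'
  have key : ∀ S, IsBlk N' S →
      (((X.F S).image (refineE X N E c (Typ X c j δ))).card : ℝ) ≤ Real.exp (a' * S.sum) := by
    intro S hS
    set E' := refineE X N E c (Typ X c j δ)
    have hE' : Equivalence E' := refineE_equiv hE.equiv c _
    have h1 : ((X.F S).image E').card ≤
        (((X.F S).filter (Typ X c j δ)).image E').card +
        (((X.F S).filter (fun u => ¬ Typ X c j δ u)).image E').card := by
      rw [← Finset.filter_union_filter_not_eq (Typ X c j δ) (X.F S), Finset.image_union]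
      simp only [Finset.filter_union_filter_not_eq]
      exact Finset.card_union_le _ _
    have h2 : (((X.F S).filter (Typ X c j δ)).image E').card ≤
        (((X.F S).filter (Typ X c j δ)).image (X.mask c)).card := by
      refine card_image_le_of_imp fun u hu u' hu' hm => (label_eq hE').2 ?_
      simp only [Finset.mem_filter] at hu hu'
      exact ⟨X.pat_eq_of_mask hm, .inl ⟨hu.2, hu'.2, hm⟩⟩
    have h3 : (((X.F S).filter (fun u => ¬ Typ X c j δ u)).image E').card ≤
        ((X.F S).image (Star X X N E)).card := by
      refine (card_image_le_of_imp (g := Star X X N E) fun u hu u' hu' hm =>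
        (label_eq hE').2 ?_).trans
        (Finset.card_le_card (Finset.image_subset_image (Finset.filter_subset _ _)))
      simp only [Finset.mem_filter] at hu hu'
      exact ⟨by rw [X.mem_F.1 hu.1, X.mem_F.1 hu'.1],
        .inr ⟨hu.2, hu'.2, (label_eq (star_equivalence hE.equiv)).1 hm⟩⟩
    have h4 : ((((X.F S).filter (Typ X c j δ)).image (X.mask c)).card : ℝ) ≤
        Real.exp ((j + δ) * S.sum) := by
      refine card_mask_le fun u hu ht => ?_
      rw [Typ, X.mem_F.1 hu] at ht
      have := (abs_le.1 ht).2
      linarith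
    have h5 := card_star_le hE.equiv hcard (hS.cpl hNN')
    have h6 : (((X.F S).image E').card : ℝ) ≤
        Real.exp ((j + δ) * S.sum) + Real.exp (a * S.sum) := by
      have : (((X.F S).image E').card : ℝ) ≤
        (((X.F S).filter (Typ X c j δ)).image (X.mask c)).card +
        ((X.F S).image (Star X X N E)).card := by exact_mod_cast h1.trans (add_le_add h2 h3)
      linarith
    refine h6.trans ?_
    have h7 : Real.exp ((j + δ) * S.sum) ≤ Real.exp (m * S.sum) := by
      gcongr; exact le_max_right _ _
    have h8 : Real.exp (a * S.sum) ≤ Real.exp (m * S.sum) := by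
      gcongr; exact le_max_left _ _
    have h9 := hN' S.sum hS.le_sum
    calc _ ≤ 2 * Real.exp (m * S.sum) := by linarith
      _ = Real.exp (Real.log 2 + m * S.sum) := by rw [Real.exp_add, Real.exp_log two_pos]
      _ ≤ _ := by gcongr; linarith
  refine ⟨⟨refineE_equiv hE.equiv c _, fun u u' h => h.1, ⟨c, fun u u' hm => ?_⟩,
    ⟨a', ha'h, key⟩⟩, key⟩
  refine ⟨X.pat_eq_of_mask hm, ?_⟩
  by_cases ht : Typ X c j δ u
  · exact .inl ⟨ht, ht.of_mask hm, hm⟩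
  · exact .inr ⟨ht, fun h => ht (h.of_mask hm.symm), star_of_mask hc0 (X.mask_mono hc hm)⟩

/-- Compatible relation between blocks of level `N` on the two sides. -/
structure IsSys (X : Side α A) (Y : Side β B) (N : ℕ) (h : ℝ) (R : List α → List β → Prop)
    (EA : List α → List α → Prop) (EB : List β → List β → Prop) : Prop where
  partA : IsPart X N h EA
  partB : IsPart Y N h EB
  sat : ∀ u u' v v', R u v → EA u u' → EB v v' → R u' v'
  blk : ∀ u v, R u v → IsBlk N (X.pat u)
  pat_eq : ∀ u v, R u v → Y.pat v = X.pat u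
  coup : ∀ S, IsBlk N S → Coupled (X.F S) (Y.F S) X.W Y.W R

theorem IsSys.swap {X : Side α A} {Y : Side β B} {N : ℕ} {h : ℝ} {R : List α → List β → Prop}
    {EA : List α → List α → Prop} {EB : List β → List β → Prop} (hs : IsSys X Y N h R EA EB) :
    IsSys Y X N h (fun v u => R u v) EB EA where
  partA := hs.partB
  partB := hs.partA
  sat u u' v v' h h1 h2 := hs.sat _ _ _ _ h h2 h1
  blk u v h := by rw [hs.pat_eq _ _ h]; exact hs.blk _ _ h
  pat_eq u v h := (hs.pat_eq _ _ h).symm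
  coup S hS := (hs.coup S hS).swap

theorem isPart_zero (X : Side α A) {h : ℝ} (hh : 0 < h) :
    IsPart X 0 h (fun u u' => X.pat u = X.pat u') where
  equiv := ⟨fun _ => rfl, fun h => h.symm, fun h h' => h.trans h'⟩
  pat_eq _ _ h := h
  mask := ⟨0, fun _ _ h => X.pat_eq_of_mask h⟩
  card := ⟨0, hh, fun S _ => by
    rw [zero_mul, Real.exp_zero]
    have : ((X.F S).image fun u u' => X.pat u = X.pat u') ⊆ {fun u' => S = X.pat u'} := by
      intro f hf
      obtain ⟨u, hu, rfl⟩ := Finset.mem_image.1 hf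
      simp [X.mem_F.1 hu]
    exact_mod_cast Finset.card_le_card this⟩

theorem isSys_zero (X : Side α A) (Y : Side β B) (hP : ∀ m, X.P m = Y.P m) {h : ℝ} (hh : 0 < h) :
    IsSys X Y 0 h (fun u v => IsBlk 0 (X.pat u) ∧ Y.pat v = X.pat u)
      (fun u u' => X.pat u = X.pat u') (fun v v' => Y.pat v = Y.pat v') where
  partA := isPart_zero X hh
  partB := isPart_zero Y hh
  sat u u' v v' h h1 h2 := by rwa [← h1, ← h2]
  blk u v h := h.1
  pat_eq u v h := h.2
  coup S hS := by
    have hPS : X.PS S = Y.PS S := by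
      unfold PS; congr 2; funext m; exact hP m
    refine (coupled_of_label (fun u _ => X.W_pos u) (fun v _ => Y.W_pos v) (fun _ => ()) (fun _ => ())
      (fun _ _ => X.PS S) (fun _ _ => X.PS_nonneg S) ?_ ?_).mono fun u hu v hv _ => ?_
    · intro x hx
      simp only [Finset.filter_true, sum_W]
      rcases (Y.F S).eq_empty_or_nonempty with h | h
      · have : Y.PS S = 0 := by rw [← sum_W, h]; simp
        simp [hPS, this]
      · rw [Finset.image_const h]; simp
    · intro x hx
      simp only [Finset.filter_true, sum_W]
      rcases (X.F S).eq_empty_or_nonempty with h | h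
      · have : X.PS S = 0 := by rw [← sum_W, h]; simp
        simp [← hPS, this]
      · rw [Finset.image_const h]; simp [hPS]
    · rw [X.mem_F.1 hu, Y.mem_F.1 hv]; exact ⟨hS, rfl⟩

/-- Position `d` lies in an entry of size at most `c`. -/
def Short (c : ℕ) : List ℕ → ℕ → Prop
  | [], _ => True
  | n :: S, d => if d < n then n ≤ c else Short c S (d - n)

theorem getElem_flat_of_mask {X : Side α A} {c : ℕ} {u u' : List α} (h : X.mask c u = X.mask c u')
    {d : ℕ} (hs : Short c (X.pat u) d) : (X.flat u)[d]? = (X.flat u')[d]? := by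
  induction u generalizing u' d with
  | nil =>
    have : u' = [] := by simpa [mask] using h.symm
    rw [this]
  | cons a u ih =>
    rcases u' with _ | ⟨a', u'⟩
    · simp [mask] at h
    simp only [mask, List.map_cons, List.cons.injEq] at h
    obtain ⟨h1, h2⟩ := h
    have hl : X.len a = X.len a' := congrArg Prod.fst h1
    rw [flat_cons, flat_cons]
    rw [pat_cons, Short] at hs
    split_ifs at hs with hd
    · have : a = a' := by
        have := congrArg Prod.snd h1
        simp only [hide, ← hl, hs, if_true, Option.some.injEq] at this
        exact this
      subst this
      rw [List.getElem?_append_left hd, List.getElem?_append_left hd]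
    · rw [List.getElem?_append_right (not_lt.1 hd),
        List.getElem?_append_right (by rw [not_lt, hl] at hd; exact hd)]
      change (X.flat u)[d - X.len a]? = (X.flat u')[d - X.len a']?
      rw [← hl]
      exact ih h2 hs

/-- The relation `R` determines the letter at position `d` of the partners of `u`. -/
def Det (Y : Side β B) (R : List α → List β → Prop) (u : List α) (d : ℕ) : Prop :=
  ∀ v v', R u v → R u v' → (Y.flat v)[d]? = (Y.flat v')[d]?

/-- Probability that the origin lies at position `d` of a block `u` of level `N` with `Q d u`. -/
def BP (X : Side α A) (κ : ℕ → ℝ≥0∞) (N : ℕ) (Q : ℕ → List α → Prop) : ℝ≥0∞ :=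
  ∑' S : List ℕ, if IsBlk N S then
    ∑ d ∈ Finset.range S.sum, κ N * ENNReal.ofReal (∑ u ∈ X.F S with Q d u, X.W u) else 0

theorem BP_le_add {X : Side α A} {κ : ℕ → ℝ≥0∞} {N : ℕ} {Q Q1 Q2 : ℕ → List α → Prop}
    (h : ∀ d u, IsBlk N (X.pat u) → Q d u → Q1 d u ∨ Q2 d u) :
    BP X κ N Q ≤ BP X κ N Q1 + BP X κ N Q2 := by
  unfold BP
  rw [← ENNReal.tsum_add]
  refine ENNReal.tsum_le_tsum fun S => ?_
  split_ifs with hS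
  · rw [← Finset.sum_add_distrib]
    refine Finset.sum_le_sum fun d _ => ?_
    rw [← mul_add]
    gcongr
    refine (ENNReal.ofReal_le_ofReal ?_).trans ENNReal.ofReal_add_le
    calc ∑ u ∈ X.F S with Q d u, X.W u ≤ ∑ u ∈ X.F S with (Q1 d u ∨ Q2 d u), X.W u := by
          refine Finset.sum_le_sum_of_subset_of_nonneg ?_ fun u _ _ => (X.W_pos u).le
          intro u hu
          simp only [Finset.mem_filter] at hu ⊢
          exact ⟨hu.1, h d u (by rwa [X.mem_F.1 hu.1]) hu.2⟩
      _ ≤ _ := by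
          rw [Finset.filter_or]
          have := Finset.sum_union_inter (s₁ := (X.F S).filter (Q1 d)) (s₂ := (X.F S).filter (Q2 d))
            (f := X.W)
          have : 0 ≤ ∑ u ∈ (X.F S).filter (Q1 d) ∩ (X.F S).filter (Q2 d), X.W u :=
            Finset.sum_nonneg fun u _ => (X.W_pos u).le
          linarith
  · simp

theorem BP_le_mul {X : Side α A} {Y : Side β B} {κ : ℕ → ℝ≥0∞} {N : ℕ}
    {Q : ℕ → List α → Prop} {Q' : ℕ → List β → Prop} {C : ℝ} (hC : 0 ≤ C)
    (h : ∀ S, IsBlk N S → ∀ d, ∑ u ∈ X.F S with Q d u, X.W u ≤ C * ∑ v ∈ Y.F S with Q' d v, Y.W v) :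
    BP X κ N Q ≤ ENNReal.ofReal C * BP Y κ N Q' := by
  unfold BP
  rw [← ENNReal.tsum_mul_left]
  refine ENNReal.tsum_le_tsum fun S => ?_
  split_ifs with hS
  · rw [Finset.mul_sum]
    refine Finset.sum_le_sum fun d _ => ?_
    rw [mul_left_comm, ← ENNReal.ofReal_mul hC]
    gcongr
    exact h S hS d
  · simp

/-- The probabilistic input on one side. -/
structure Hyp (X : Side α A) (κ : ℕ → ℝ≥0∞) (h : ℝ) (j : ℕ → ℝ) : Prop where
  bp_true : ∀ N, BP X κ N (fun _ _ => True) ≤ 1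
  lln : ∀ c, ∀ δ > 0, Tendsto (fun N => BP X κ N (fun _ u => ¬ Typ X c (j c) δ u)) atTop (𝓝 0)
  short : ∀ ε : ℝ, 0 < ε → ∃ c0, ∀ c ≥ c0, ∀ N,
    BP X κ N (fun d u => ¬ Short c (X.pat u) d) ≤ ENNReal.ofReal ε
  j_lt : ∀ c, j c < h
  j_tendsto : Tendsto j atTop (𝓝 h)

theorem IsSys.step {X : Side α A} {Y : Side β B} {κ : ℕ → ℝ≥0∞} {h : ℝ} (hh : 0 < h)
    {jA jB : ℕ → ℝ} (HA : Hyp X κ h jA) (HB : Hyp Y κ h jB) {N : ℕ} {R : List α → List β → Prop}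
    {EA : List α → List α → Prop} {EB : List β → List β → Prop} (hs : IsSys X Y N h R EA EB)
    {ε : ℝ} (hε : 0 < ε) :
    ∃ N' > N, ∃ R' EA' EB', IsSys X Y N' h R' EA' EB' ∧ (∀ u v, R' u v → Star X Y N R u v) ∧
      BP X κ N' (fun d u => ¬ Det Y R' u d) ≤ ENNReal.ofReal ε := by
  obtain ⟨cA0, hcA0⟩ := hs.partA.refine
  obtain ⟨cB0, hcB0⟩ := hs.partB.refine
  obtain ⟨cS, hcS⟩ := HA.short (ε / 4) (by positivity)
  set cB := max cB0 cS
  have hjB := HB.j_lt cB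
  set δB := (h - jB cB) / 2 with hδB
  have hδB0 : 0 < δB := by rw [hδB]; linarith
  obtain ⟨hstarB, aB, haB, hevB⟩ := hcB0 cB (le_max_left _ _) (jB cB) δB (by rw [hδB]; linarith)
  set b := (max aB 0 + h) / 2 with hb
  have hbmax : max aB 0 < b := by rw [hb]; have := max_lt haB hh; linarith
  have hbh : b < h := by rw [hb]; have := max_lt haB hh; linarith
  have haBb : aB < b := (le_max_left _ _).trans_lt hbmax
  have hb0 : 0 < b := (le_max_right _ _).trans_lt hbmax
  obtain ⟨cA, hcA, hcAb⟩ := ((eventually_ge_atTop cA0).and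
    (HA.j_tendsto.eventually_const_lt hbh)).exists
  have hjA := HA.j_lt cA
  set δA := min ((h - jA cA) / 2) (jA cA - b) with hδA
  have hδA0 : 0 < δA := lt_min (by linarith) (by linarith)
  have hδA1 : jA cA + δA < h := by
    have := min_le_left ((h - jA cA) / 2) (jA cA - b); rw [← hδA] at this; linarith
  have hδA2 : b ≤ jA cA - δA := by
    have := min_le_right ((h - jA cA) / 2) (jA cA - b); rw [← hδA] at this; linarith
  obtain ⟨hstarA, aA, -, hevA⟩ := hcA0 cA hcA (jA cA) δA hδA1
  have hexp : ∀ᶠ n : ℕ in atTop, (Real.exp (aB * n) + 1) * Real.exp (-(b * n)) ≤ ε / 4 := by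
    have t1 : Tendsto (fun n : ℕ => Real.exp ((aB - b) * n) + Real.exp (-b * n)) atTop
        (𝓝 (0 + 0)) := by
      refine Tendsto.add ?_ ?_
      · exact Real.tendsto_exp_atBot.comp
          (tendsto_natCast_atTop_atTop.const_mul_atTop_of_neg (by linarith))
      · exact Real.tendsto_exp_atBot.comp
          (tendsto_natCast_atTop_atTop.const_mul_atTop_of_neg (by linarith))
    rw [add_zero] at t1
    filter_upwards [t1.eventually_le_const (show (0 : ℝ) < ε / 4 by positivity)] with n hn
    rw [add_mul, ← Real.exp_add, one_mul, show aB * n + -(b * n) = (aB - b) * n by ring,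
      ← neg_mul]
    exact hn
  have hε4 : (0 : ℝ≥0∞) < ENNReal.ofReal (ε / 4) := by simpa using hε
  obtain ⟨N', hN'1, ⟨hpB, hcardB⟩, ⟨hpA, -⟩, hN'2, hN'3, hN'4⟩ :=
    ((eventually_gt_atTop N).and (hevB.and (hevA.and ((eventually_forall_ge_atTop.2 hexp).and
    (((HA.lln cA δA hδA0).eventually_le_const hε4).and
    ((HB.lln cB δB hδB0).eventually_le_const hε4)))))).exists
  set tA := Typ X cA (jA cA) δA
  set tB := Typ Y cB (jB cB) δB
  set EA' := refineE X N EA cA tA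
  set EB' := refineE Y N EB cB tB
  have hcoup : ∀ S, IsBlk N' S → Coupled (X.F S) (Y.F S) X.W Y.W (Star X Y N R) := fun S hS =>
    coupled_star hs.coup (hS.cpl hN'1.le)
  have hext : ∀ S, ∃ ρ : (List α → Prop) → (List β → Prop) → Prop, IsBlk N' S →
      Coupled (X.F S) (Y.F S) X.W Y.W (fun u v => ρ (EA' u) (EB' v)) ∧
      (∀ x y, ρ x y → ∃ u ∈ X.F S, ∃ v ∈ Y.F S, EA' u = x ∧ EB' v = y ∧ Star X Y N R u v) ∧
      (((X.F S).image EA').filter (fun x => ∃ y y', y ≠ y' ∧ ρ x y ∧ ρ x y')).card ≤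
        ((Y.F S).image EB').card + 1 := by
    intro S
    by_cases hS : IsBlk N' S
    · obtain ⟨ρ, h⟩ := (hcoup S hS).extreme (fun u _ => X.W_pos u) (fun v _ => Y.W_pos v) EA' EB'
      exact ⟨ρ, fun _ => h⟩
    · exact ⟨fun _ _ => True, fun h => absurd h hS⟩
  choose ρ hρ using hext
  set R' : List α → List β → Prop := fun u v => IsBlk N' (X.pat u) ∧ Y.pat v = X.pat u ∧
    ρ (X.pat u) (EA' u) (EB' v) with hR'
  have hcoup' : ∀ S, IsBlk N' S → Coupled (X.F S) (Y.F S) X.W Y.W R' := fun S hS =>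
    (hρ S hS).1.mono fun u hu v hv h => by
      rw [hR']
      simp only [X.mem_F.1 hu, Y.mem_F.1 hv]
      exact ⟨hS, trivial, h⟩
  refine ⟨N', hN'1, R', EA', EB', ⟨hpA, hpB, ?_, fun u v h => h.1, fun u v h => h.2.1, hcoup'⟩,
    ?_, ?_⟩
  · rintro u u' v v' ⟨h1, h2, h3⟩ hu hv
    refine ⟨?_, ?_, ?_⟩
    · rwa [← hu.1]
    · rwa [← hu.1, ← hv.1]
    · rwa [← hu.1, ← (label_eq hpA.equiv).2 hu, ← (label_eq hpB.equiv).2 hv]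
  · rintro u v ⟨h1, h2, h3⟩
    obtain ⟨u0, -, v0, -, h4, h5, h6⟩ := (hρ _ h1).2.1 _ _ h3
    exact star_sat hs.sat h6 (hstarA _ _ ((label_eq hpA.equiv).1 h4))
      (hstarB _ _ ((label_eq hpB.equiv).1 h5))
  · set Sp : List α → Prop := fun u =>
      ∃ y y', y ≠ y' ∧ ρ (X.pat u) (EA' u) y ∧ ρ (X.pat u) (EA' u) y'
    have e1 : BP X κ N' (fun d u => ¬ Det Y R' u d) ≤
        BP X κ N' (fun d u => ¬ Short cB (X.pat u) d) + (BP X κ N' (fun _ u => ¬ tA u) +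
        (BP X κ N' (fun _ u => tA u ∧ Sp u) +
          BP X κ N' (fun _ u => ¬ Sp u ∧ ∃ v, R' u v ∧ ¬ tB v))) := by
      refine (BP_le_add (Q2 := fun d u => ¬ tA u ∨ (tA u ∧ Sp u) ∨
        (¬ Sp u ∧ ∃ v, R' u v ∧ ¬ tB v)) ?_).trans
        (add_le_add le_rfl ((BP_le_add (Q2 := fun d u => (tA u ∧ Sp u) ∨
        (¬ Sp u ∧ ∃ v, R' u v ∧ ¬ tB v)) ?_).trans (add_le_add le_rfl (BP_le_add ?_))))
      · intro d u hu hd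
        by_contra! hc
        obtain ⟨c1, c2, c3, c4⟩ := hc
        have hsp : ¬ Sp u := c3 c2
        apply hd
        intro v v' hv hv'
        have hl : EB' v = EB' v' := by
          by_contra hne
          exact hsp ⟨_, _, hne, hv.2.2, hv'.2.2⟩
        have hE := (label_eq hpB.equiv).1 hl
        have ht := c4 hsp v hv
        rcases hE.2 with h | h
        · exact getElem_flat_of_mask h.2.2 (by rwa [hv.2.1])
        · exact absurd ht h.1
      · exact fun _ _ _ h => h
      · exact fun _ _ _ h => h
    have b1 : BP X κ N' (fun d u => ¬ Short cB (X.pat u) d) ≤ ENNReal.ofReal (ε / 4) :=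
      hcS cB (le_max_right _ _) N'
    have b3 : BP X κ N' (fun _ u => tA u ∧ Sp u) ≤ ENNReal.ofReal (ε / 4) := by
      refine (BP_le_mul (Y := X) (Q' := fun _ _ => True) (C := ε / 4) (by positivity) ?_).trans
        ((mul_le_mul_right (HA.bp_true N') _).trans (mul_one _).le)
      intro S hS d
      rw [Finset.filter_true, sum_W]
      set K := ((X.F S).image EA').filter (fun x => ∃ y y', y ≠ y' ∧ ρ S x y ∧ ρ S x y')
      have hK : (K.card : ℝ) ≤ Real.exp (aB * S.sum) + 1 := by
        have : (K.card : ℝ) ≤ ((Y.F S).image EB').card + 1 := by exact_mod_cast (hρ S hS).2.2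
        linarith [hcardB S hS]
      refine (le_of_eq (by congr!)).trans (?_ : ∑ u ∈ X.F S with (tA u ∧ Sp u), X.W u ≤ _)
      calc ∑ u ∈ X.F S with (tA u ∧ Sp u), X.W u
          ≤ ∑ u ∈ X.F S with (tA u ∧ EA' u ∈ K), X.W u := by
            refine Finset.sum_le_sum_of_subset_of_nonneg ?_ fun u _ _ => (X.W_pos u).le
            intro u hu
            simp only [Finset.mem_filter] at hu ⊢
            refine ⟨hu.1, hu.2.1, ?_⟩
            have := hu.2.2
            simp only [Sp, X.mem_F.1 hu.1] at this
            exact Finset.mem_filter.2 ⟨Finset.mem_image_of_mem _ hu.1, this⟩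
        _ ≤ K.card * (X.PS S * Real.exp (-(b * S.sum))) := by
            refine sum_typ_le (c := cA) EA' K ?_ ?_
            · intro u hu ht
              have ht : |_| ≤ _ := ht
              rw [X.mem_F.1 hu] at ht
              have h1 := (abs_le.1 ht).1
              have h2 : b * S.sum ≤ (jA cA - δA) * S.sum := by gcongr
              linarith
            · intro u u' hu hu' hl
              rcases ((label_eq hpA.equiv).1 hl).2 with h | h
              · exact h.2.2
              · exact absurd hu h.1
        _ ≤ (Real.exp (aB * S.sum) + 1) * (X.PS S * Real.exp (-(b * S.sum))) := by
            gcongr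
            exact mul_nonneg (X.PS_nonneg S) (Real.exp_pos _).le
        _ = ((Real.exp (aB * S.sum) + 1) * Real.exp (-(b * S.sum))) * X.PS S := by ring
        _ ≤ _ := mul_le_mul_of_nonneg_right (hN'2 _ hS.le_sum) (X.PS_nonneg S)
    have b4 : BP X κ N' (fun _ u => ¬ Sp u ∧ ∃ v, R' u v ∧ ¬ tB v) ≤ ENNReal.ofReal (ε / 4) := by
      have : BP X κ N' (fun _ u => ¬ Sp u ∧ ∃ v, R' u v ∧ ¬ tB v) ≤
          ENNReal.ofReal 1 * BP Y κ N' (fun _ v => ¬ tB v) := by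
        refine BP_le_mul zero_le_one fun S hS d => ?_
        rw [one_mul]
        refine (hcoup' S hS).swap.transport ?_
        rintro v hv u hu hR ⟨hsp, v', hR1, htv⟩
        have hl : EB' v = EB' v' := by
          by_contra hne
          exact hsp ⟨_, _, hne, hR.2.2, hR1.2.2⟩
        rcases ((label_eq hpB.equiv).1 hl).2 with h | h
        · exact absurd h.2.1 htv
        · exact h.1
      rw [ENNReal.ofReal_one, one_mul] at this
      exact this.trans hN'4
    calc _ ≤ _ := e1
      _ ≤ ENNReal.ofReal (ε / 4) + (ENNReal.ofReal (ε / 4) +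
          (ENNReal.ofReal (ε / 4) + ENNReal.ofReal (ε / 4))) := by gcongr
      _ = ENNReal.ofReal ε := by
          rw [← ENNReal.ofReal_add, ← ENNReal.ofReal_add, ← ENNReal.ofReal_add] <;>
            first | positivity | (congr 1; ring)

end Side
end KS

namespace KS
open scoped Classical
open ENNReal Filter Topology

namespace Side
variable {α β A B : Type*}

theorem Star.swap {X : Side α A} {Y : Side β B} {N : ℕ} {R : List α → List β → Prop}
    {u : List α} {v : List β} (h : Star X Y N R u v) : Star Y X N (fun v u => R u v) v u :=
  h.flip

/-- An increasing sequence of nested relations which determine each other's letters. -/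
structure IsTower (X : Side α A) (Y : Side β B) (κ : ℕ → ℝ≥0∞) (N : ℕ → ℕ)
    (R : ℕ → List α → List β → Prop) : Prop where
  mono : StrictMono N
  blk : ∀ r u v, R r u v → IsBlk (N r) (X.pat u)
  pat_eq : ∀ r u v, R r u v → Y.pat v = X.pat u
  coup : ∀ r S, IsBlk (N r) S → Coupled (X.F S) (Y.F S) X.W Y.W (R r)
  nest : ∀ r u v, R (r + 1) u v → Star X Y (N r) (R r) u v
  detA : ∀ ε > 0, ∀ r0, ∃ r ≥ r0,
    BP X κ (N r) (fun d u => ¬ Det Y (R r) u d) ≤ ENNReal.ofReal ε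
  detB : ∀ ε > 0, ∀ r0, ∃ r ≥ r0,
    BP Y κ (N r) (fun d v => ¬ Det X (fun v u => R r u v) v d) ≤ ENNReal.ofReal ε

theorem IsTower.swap {X : Side α A} {Y : Side β B} {κ : ℕ → ℝ≥0∞} {N : ℕ → ℕ}
    {R : ℕ → List α → List β → Prop} (h : IsTower X Y κ N R) :
    IsTower Y X κ N (fun r v u => R r u v) where
  mono := h.mono
  blk r v u hR := by rw [h.pat_eq r u v hR]; exact h.blk r u v hR
  pat_eq r v u hR := (h.pat_eq r u v hR).symm
  coup r S hS := (h.coup r S hS).swap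
  nest r v u hR := (h.nest r u v hR).swap
  detA := h.detB
  detB := h.detA

theorem exists_tower {X : Side α A} {Y : Side β B} {κ : ℕ → ℝ≥0∞} {h : ℝ} (hh : 0 < h)
    (hP : ∀ m, X.P m = Y.P m)
    {jA jB : ℕ → ℝ} (HA : Hyp X κ h jA) (HB : Hyp Y κ h jB) : ∃ N R, IsTower X Y κ N R := by
  let St := {s : ℕ × (List α → List β → Prop) × (List α → List α → Prop) ×
    (List β → List β → Prop) // IsSys X Y s.1 h s.2.1 s.2.2.1 s.2.2.2}
  have hnext : ∀ (n : ℕ) (s : St), ∃ s' : St, s.1.1 < s'.1.1 ∧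
      (∀ u v, s'.1.2.1 u v → Star X Y s.1.1 s.1.2.1 u v) ∧
      (Even n → BP X κ s'.1.1 (fun d u => ¬ Det Y s'.1.2.1 u d) ≤ ENNReal.ofReal (1 / (n + 1))) ∧
      (¬ Even n → BP Y κ s'.1.1 (fun d v => ¬ Det X (fun v u => s'.1.2.1 u v) v d) ≤
        ENNReal.ofReal (1 / (n + 1))) := by
    rintro n ⟨⟨N, R, EA, EB⟩, hs⟩
    by_cases hn : Even n
    · obtain ⟨N', hN', R', EA', EB', hs', h1, h2⟩ := hs.step hh HA HB
        (show (0 : ℝ) < 1 / (n + 1) by positivity)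
      exact ⟨⟨⟨N', R', EA', EB'⟩, hs'⟩, hN', h1, fun _ => h2, fun h => absurd hn h⟩
    · obtain ⟨N', hN', R', EA', EB', hs', h1, h2⟩ := hs.swap.step hh HB HA
        (show (0 : ℝ) < 1 / (n + 1) by positivity)
      exact ⟨⟨⟨N', fun u v => R' v u, EB', EA'⟩, hs'.swap⟩, hN', fun u v h => (h1 v u h).swap,
        fun h => absurd h hn, fun _ => h2⟩
  choose next hn1 hn2 hn3 hn4 using hnext
  let s : ℕ → St := fun n => Nat.rec ⟨⟨0, _, _, _⟩, isSys_zero X Y hP hh⟩ next n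
  have hlim : ∀ ε : ℝ, 0 < ε → ∀ r0 : ℕ, ∃ n ≥ r0, (1 : ℝ) / (n + 1) ≤ ε ∧
      (1 : ℝ) / ((n + 1 : ℕ) + 1) ≤ ε := by
    intro ε hε r0
    obtain ⟨n, hn, h1, h2⟩ := ((eventually_ge_atTop r0).and
      ((tendsto_one_div_add_atTop_nhds_zero_nat.eventually_le_const hε).and
      (((tendsto_add_atTop_iff_nat 1).2 tendsto_one_div_add_atTop_nhds_zero_nat).eventually_le_const
        hε))).exists
    exact ⟨n, hn, h1, h2⟩
  refine ⟨fun r => (s r).1.1, fun r => (s r).1.2.1, strictMono_nat_of_lt_succ fun n => hn1 n _,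
    fun r => (s r).2.blk, fun r => (s r).2.pat_eq, fun r => (s r).2.coup, fun r => hn2 r _, ?_, ?_⟩
  · intro ε hε r0
    obtain ⟨n, hn, h1, h2⟩ := hlim ε hε r0
    by_cases he : Even n
    · exact ⟨n + 1, by omega, (hn3 n (s n) he).trans (ENNReal.ofReal_le_ofReal h1)⟩
    · have he' : Even (n + 1) := Nat.even_add_one.2 he
      exact ⟨n + 1 + 1, by omega, (hn3 (n + 1) (s (n + 1)) he').trans
        (ENNReal.ofReal_le_ofReal h2)⟩
  · intro ε hε r0
    obtain ⟨n, hn, h1, h2⟩ := hlim ε hε r0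
    by_cases he : Even n
    · have he' : ¬ Even (n + 1) := by rw [Nat.even_add_one]; simpa using he
      exact ⟨n + 1 + 1, by omega, (hn4 (n + 1) (s (n + 1)) he').trans
        (ENNReal.ofReal_le_ofReal h2)⟩
    · exact ⟨n + 1, by omega, (hn4 n (s n) he).trans (ENNReal.ofReal_le_ofReal h1)⟩

end Side
end KS

namespace KS
open scoped Classical
open ENNReal Filter Topology

/-! ### Words in bi-infinite sequences -/

section Words
variable {A : Type*}

/-- The word of length `n` of `x` starting at position `i`. -/
def wd (x : ℤ → A) (i : ℤ) (n : ℕ) : List A := (List.range n).map fun t : ℕ => x (i + t)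

@[simp] theorem length_wd (x : ℤ → A) (i : ℤ) (n : ℕ) : (wd x i n).length = n := by simp [wd]

@[simp] theorem wd_zero (x : ℤ → A) (i : ℤ) : wd x i 0 = [] := rfl

theorem wd_add (x : ℤ → A) (i : ℤ) (m n : ℕ) : wd x i (m + n) = wd x i m ++ wd x (i + m) n := by
  simp only [wd, List.range_add, List.map_append, List.map_map, List.append_cancel_left_eq]
  refine List.map_congr_left fun t _ => ?_
  simp [add_assoc]

theorem getElem?_wd (x : ℤ → A) (i : ℤ) {n t : ℕ} (h : t < n) : (wd x i n)[t]? = some (x (i + t)) := by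
  simp [wd, h]

theorem wd_congr {x y : ℤ → A} {i j : ℤ} {n : ℕ} (h : ∀ t < n, x (i + t) = y (j + t)) :
    wd x i n = wd y j n :=
  List.map_congr_left fun t ht => h t (List.mem_range.1 ht)

theorem wd_eq_iff {x : ℤ → A} {i : ℤ} {l : List A} {n : ℕ} (hn : l.length = n) :
    wd x i n = l ↔ ∀ t < n, l[t]? = some (x (i + t)) := by
  constructor
  · rintro rfl t ht
    exact getElem?_wd x i ht
  · intro h
    refine List.ext_getElem? fun t => ?_
    by_cases ht : t < n
    · rw [getElem?_wd x i ht, h t ht]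
    · rw [List.getElem?_eq_none (by simp; omega), List.getElem?_eq_none (by omega)]

theorem wd_append_iff {x : ℤ → A} {i : ℤ} {l l' : List A} :
    wd x i (l ++ l').length = l ++ l' ↔
      wd x i l.length = l ∧ wd x (i + l.length) l'.length = l' := by
  rw [List.length_append, wd_add]
  constructor
  · intro h; exact List.append_inj h (by simp)
  · rintro ⟨h1, h2⟩; rw [h1, h2]

theorem take_wd (x : ℤ → A) (i : ℤ) {m n : ℕ} (h : m ≤ n) : (wd x i n).take m = wd x i m := by
  obtain ⟨d, rfl⟩ := Nat.exists_eq_add_of_le h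
  rw [wd_add, List.take_left' (by simp)]

theorem drop_wd (x : ℤ → A) (i : ℤ) {m n : ℕ} (h : m ≤ n) :
    (wd x i n).drop m = wd x (i + m) (n - m) := by
  obtain ⟨d, rfl⟩ := Nat.exists_eq_add_of_le h
  rw [wd_add, List.drop_left' (by simp)]; simp

theorem suffix_wd_iff {x : ℤ → A} {i : ℤ} {l : List A} {n : ℕ} :
    l <:+ wd x i n ↔ l.length ≤ n ∧ wd x (i + n - l.length) l.length = l := by
  constructor
  · intro h
    have hl : l.length ≤ n := by simpa using h.length_le
    refine ⟨hl, ?_⟩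
    rw [List.suffix_iff_eq_drop, length_wd, drop_wd _ _ (Nat.sub_le _ _)] at h
    conv_rhs => rw [h]
    rw [show n - (n - l.length) = l.length by omega]
    congr 1; omega
  · rintro ⟨hl, h⟩
    rw [List.suffix_iff_eq_drop, length_wd, drop_wd _ _ (Nat.sub_le _ _)]
    conv_lhs => rw [← h]
    rw [show n - (n - l.length) = l.length by omega]
    congr 1; omega

/-- The word `u` ends with its only occurrence of `w`. -/
def FP (w u : List A) : Prop := w <:+ u ∧ ∀ j < u.length, ¬ w <:+ u.take j

end Words

/-- A Bernoulli scheme together with an unbordered marker word. -/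
structure Scheme (A : Type*) [Fintype A] where
  p : A → ℝ
  prob : IsProbVector p
  w : List A
  w_ne : w ≠ []
  unb : ∀ m, 0 < m → m < w.length → w.drop m ≠ w.take (w.length - m)
  rich : ∀ M : ℕ, ∃ u v, FP w u ∧ FP w v ∧ u ≠ v ∧ u.length = v.length ∧ M ≤ u.length

namespace Scheme
variable {A : Type*} [Fintype A] (X : Scheme A)

/-- The letters of the induced alphabet: words between consecutive markers. -/
abbrev Ltr : Type _ := {u : List A // FP X.w u}

def k : ℕ := X.w.length

theorem k_pos : 0 < X.k := List.length_pos_iff.2 X.w_ne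

/-- The induced alphabet with the induced weights. -/
def side : Side X.Ltr A where
  sp := Subtype.val
  wt a := (a.1.map X.p).prod
  fib m := ((List.finite_length_eq A m).preimage (Subtype.val_injective (p := FP X.w)).injOn).toFinset
  wt_pos a := List.prod_pos fun b hb => by
    obtain ⟨c, _, rfl⟩ := List.mem_map.1 hb
    exact X.prob.1 c
  mem_fib := by simp

theorem sp_eq (a : X.Ltr) : X.side.sp a = a.1 := rfl
theorem len_eq (a : X.Ltr) : X.side.len a = a.1.length := rfl

theorem k_le_len (a : X.Ltr) : X.k ≤ X.side.len a := a.2.1.length_le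

theorem len_pos (a : X.Ltr) : 0 < X.side.len a := X.k_pos.trans_le (X.k_le_len a)

/-- A marker of `x` ends just before position `i`. -/
def Bd (x : ℤ → A) (i : ℤ) : Prop := wd x (i - X.k) X.k = X.w

/-- A marker ends just before `i`, and no other one in the preceding `N` positions. -/
def Cut (N : ℕ) (x : ℤ → A) (i : ℤ) : Prop := X.Bd x i ∧ ∀ j, i - N < j → j < i → ¬ X.Bd x j

variable {X} {x : ℤ → A}

theorem nonempty_alphabet (X : Scheme A) : Nonempty A := ⟨X.w.head X.w_ne⟩

theorem Cut.mono {N N' : ℕ} (h : N ≤ N') {i : ℤ} (hc : X.Cut N' x i) : X.Cut N x i :=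
  ⟨hc.1, fun j hj => hc.2 j (by omega)⟩

theorem not_bd_of_close {i j : ℤ} (hi : X.Bd x i) (hij : i < j) (hj : j < i + X.k) : ¬ X.Bd x j := by
  intro hb
  obtain ⟨m, rfl⟩ : ∃ m : ℕ, j = i + m := ⟨(j - i).toNat, by omega⟩
  have hm : m < X.k := by omega
  refine X.unb m (by omega) hm ?_
  have h1 : X.w.drop m = wd x (i - X.k + m) (X.k - m) := by
    rw [← drop_wd _ _ hm.le]; exact congrArg _ hi.symm
  have h2 : X.w.take (X.k - m) = wd x (i + m - X.k) (X.k - m) := by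
    rw [← take_wd _ _ (Nat.sub_le X.k m)]; exact congrArg _ hb.symm
  rw [h1]; refine Eq.trans ?_ h2.symm; congr 1; omega

/-- The word of `x` from `i` is spelled by the single letter `a`. -/
def IsLtr (X : Scheme A) (x : ℤ → A) (i : ℤ) (a : X.Ltr) : Prop :=
  X.Bd x i ∧ wd x i (X.side.len a) = a.1

theorem IsLtr.bd_end {i : ℤ} {a : X.Ltr} (h : X.IsLtr x i a) : X.Bd x (i + X.side.len a) := by
  have := a.2.1
  rw [← h.2, suffix_wd_iff] at this
  exact this.2

theorem IsLtr.not_bd {i j : ℤ} {a : X.Ltr} (h : X.IsLtr x i a) (hij : i < j)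
    (hj : j < i + X.side.len a) : ¬ X.Bd x j := by
  intro hb
  by_cases hc : j < i + X.k
  · exact not_bd_of_close h.1 hij hc hb
  obtain ⟨m, rfl⟩ : ∃ m : ℕ, j = i + m := ⟨(j - i).toNat, by omega⟩
  refine a.2.2 m (by rw [← len_eq]; omega) ?_
  rw [← h.2, take_wd _ _ (by omega), suffix_wd_iff]
  exact ⟨by rw [← k]; omega, hb⟩

theorem exists_isLtr {i j : ℤ} (hi : X.Bd x i) (hj : X.Bd x j) (hij : i < j)
    (h : ∀ l, i < l → l < j → ¬ X.Bd x l) : ∃ a, X.IsLtr x i a ∧ i + X.side.len a = j := by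
  obtain ⟨m, rfl⟩ : ∃ m : ℕ, j = i + m := ⟨(j - i).toNat, by omega⟩
  have hm : X.k ≤ m := by
    by_contra hc
    exact not_bd_of_close hi hij (by omega) hj
  refine ⟨⟨wd x i m, suffix_wd_iff.2 ⟨hm, hj⟩, fun t ht hs => ?_⟩, ⟨hi, ?_⟩, ?_⟩
  · rw [length_wd] at ht
    rw [take_wd _ _ ht.le, suffix_wd_iff] at hs
    have := hs.1
    exact h (i + t) (by have := X.k_pos; rw [k] at this; omega) (by omega) hs.2
  · simp [len_eq]
  · simp [len_eq]

/-- The word of `x` from `i` is spelled by the letters of `u`. -/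
def IsSp (X : Scheme A) (x : ℤ → A) (i : ℤ) (u : List X.Ltr) : Prop :=
  X.Bd x i ∧ wd x i (X.side.flat u).length = X.side.flat u

theorem isSp_cons {i : ℤ} {a : X.Ltr} {u : List X.Ltr} :
    X.IsSp x i (a :: u) ↔ X.IsLtr x i a ∧ X.IsSp x (i + X.side.len a) u := by
  rw [IsSp, Side.flat_cons, wd_append_iff]
  constructor
  · rintro ⟨h, h1, h2⟩
    have : X.IsLtr x i a := ⟨h, h1⟩
    exact ⟨this, this.bd_end, h2⟩
  · rintro ⟨⟨h, h1⟩, _, h2⟩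
    exact ⟨h, h1, h2⟩

theorem isSp_append {i : ℤ} {u v : List X.Ltr} :
    X.IsSp x i (u ++ v) ↔ X.IsSp x i u ∧ X.IsSp x (i + (X.side.pat u).sum) v := by
  induction u generalizing i with
  | nil => simp [IsSp]
  | cons a u ih =>
    rw [List.cons_append, isSp_cons, ih, isSp_cons]
    simp [add_assoc, and_assoc]

theorem isSp_inj {i : ℤ} {u v : List X.Ltr} (hu : X.IsSp x i u) (hv : X.IsSp x i v)
    (h : (X.side.pat u).sum = (X.side.pat v).sum) : u = v := by
  induction u generalizing i v with
  | nil =>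
    cases v with
    | nil => rfl
    | cons b v => have := X.len_pos b; simp at h; omega
  | cons a u ih =>
    cases v with
    | nil => have := X.len_pos a; simp at h; omega
    | cons b v =>
      rw [isSp_cons] at hu hv
      have hab : X.side.len a = X.side.len b := by
        have ha := X.len_pos a
        have hb := X.len_pos b
        rcases lt_trichotomy (X.side.len a) (X.side.len b) with h' | h' | h'
        · exact absurd hu.1.bd_end (hv.1.not_bd (by omega) (by omega))
        · exact h'
        · exact absurd hv.1.bd_end (hu.1.not_bd (by omega) (by omega))
      have : a = b := by
        apply Subtype.ext; rw [← hu.1.2, ← hv.1.2, hab]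
      subst this
      rw [ih hu.2 hv.2 (by simpa using h)]

theorem exists_isSp {i j : ℤ} (hi : X.Bd x i) (hj : X.Bd x j) (hij : i ≤ j) :
    ∃ u, X.IsSp x i u ∧ i + (X.side.pat u).sum = j := by
  obtain ⟨m, rfl⟩ : ∃ m : ℕ, j = i + m := ⟨(j - i).toNat, by omega⟩
  induction m using Nat.strong_induction_on generalizing i with
  | _ m ih =>
    rcases Nat.eq_zero_or_pos m with rfl | hm
    · exact ⟨[], ⟨hi, by simp⟩, by simp⟩
    have hex : ∃ n : ℕ, 0 < n ∧ X.Bd x (i + n) := ⟨m, hm, hj⟩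
    have hn := Nat.find_spec hex
    set n := Nat.find hex with hn_def
    have hnm : n ≤ m := Nat.find_min' hex ⟨hm, hj⟩
    obtain ⟨a, ha, hla⟩ := exists_isLtr hi hn.2 (by omega) (fun l h1 h2 hb => by
      obtain ⟨t, rfl⟩ : ∃ t : ℕ, l = i + t := ⟨(l - i).toNat, by omega⟩
      exact Nat.find_min hex (m := t) (by omega) ⟨by omega, hb⟩)
    obtain ⟨u, hu, hs⟩ := ih (m - n) (by omega) hn.2
      (by convert hj using 1; push_cast [hnm]; ring) (by omega)
    have : X.side.len a = n := by omega
    refine ⟨a :: u, isSp_cons.2 ⟨ha, by rwa [hla]⟩, ?_⟩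
    simp only [Side.pat_cons, List.sum_cons]; push_cast [hnm] at hs ⊢; omega

/-- `u` is the block of level `N` of `x` starting at `i`. -/
def Blk (X : Scheme A) (N : ℕ) (x : ℤ → A) (i : ℤ) (u : List X.Ltr) : Prop :=
  X.Cut N x i ∧ IsBlk N (X.side.pat u) ∧ X.IsSp x i u

/-- Cuts inside and at the end of a spelled list. -/
theorem IsLtr.cut_end_iff {N : ℕ} {i : ℤ} {a : X.Ltr} (h : X.IsLtr x i a) :
    X.Cut N x (i + X.side.len a) ↔ N ≤ X.side.len a := by
  constructor
  · rintro ⟨_, hc⟩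
    by_contra hN
    exact hc i (by omega) (by have := X.len_pos a; omega) h.1
  · intro hN
    exact ⟨h.bd_end, fun j h1 h2 => h.not_bd (by omega) h2⟩

theorem IsSp.not_cut {N : ℕ} {i j : ℤ} {u : List X.Ltr} (h : X.IsSp x i u)
    (hu : ∀ n ∈ X.side.pat u, n < N) (hij : i < j) (hj : j ≤ i + (X.side.pat u).sum) :
    ¬ X.Cut N x j := by
  induction u generalizing i with
  | nil => simp at hj; omega
  | cons a u ih =>
    rw [isSp_cons] at h
    simp [-Nat.cast_list_sum] at hu hj
    rcases lt_trichotomy j (i + X.side.len a) with h' | h' | h'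
    · exact fun hc => h.1.not_bd hij h' hc.1
    · rw [h', h.1.cut_end_iff]; omega
    · exact ih h.2 hu.2 h' (by omega)

theorem IsSp.cut_end {N : ℕ} {i : ℤ} {u : List X.Ltr} (hs : X.IsSp x i u)
    (hu : IsBlk N (X.side.pat u)) : X.Cut N x (i + (X.side.pat u).sum) := by
  obtain ⟨S0, m, hS, h0, hm⟩ := hu
  obtain ⟨u0, u1, rfl, hu0, hu1⟩ := List.map_eq_append_iff.1 hS
  obtain ⟨a, rfl, rfl⟩ : ∃ a, u1 = [a] ∧ X.side.len a = m := by
    simpa using hu1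
  rw [isSp_append, isSp_cons] at hs
  have := hs.2.1.cut_end_iff.2 hm
  simpa [add_assoc] using this

theorem Blk.cut_end {N : ℕ} {i : ℤ} {u : List X.Ltr} (h : X.Blk N x i u) :
    X.Cut N x (i + (X.side.pat u).sum) := h.2.2.cut_end h.2.1

theorem Blk.not_cut {N : ℕ} {i j : ℤ} {u : List X.Ltr} (h : X.Blk N x i u) (hij : i < j)
    (hj : j < i + (X.side.pat u).sum) : ¬ X.Cut N x j := by
  obtain ⟨-, ⟨S0, m, hS, h0, hm⟩, hs⟩ := h
  obtain ⟨u0, u1, rfl, hu0, hu1⟩ := List.map_eq_append_iff.1 hS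
  obtain ⟨a, rfl, rfl⟩ : ∃ a, u1 = [a] ∧ X.side.len a = m := by
    simpa using hu1
  rw [isSp_append, isSp_cons] at hs
  simp [-Nat.cast_list_sum] at hj
  by_cases h' : j ≤ i + (X.side.pat u0).sum
  · exact hs.1.not_cut (by rw [Side.pat, hu0]; exact h0) hij h'
  · exact fun hc => hs.2.1.not_bd (by omega) (by omega) hc.1

theorem Blk.unique {N : ℕ} {i i' l : ℤ} {u u' : List X.Ltr} (h : X.Blk N x i u)
    (h' : X.Blk N x i' u') (hl : i ≤ l) (hr : l < i + (X.side.pat u).sum) (hl' : i' ≤ l)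
    (hr' : l < i' + (X.side.pat u').sum) : i = i' ∧ u = u' := by
  have hi : i = i' := by
    rcases lt_trichotomy i i' with hc | hc | hc
    · exact absurd h'.1 (h.not_cut hc (by omega))
    · exact hc
    · exact absurd h.1 (h'.not_cut hc (by omega))
  subst hi
  refine ⟨rfl, isSp_inj h.2.2 h'.2.2 ?_⟩
  rcases lt_trichotomy (X.side.pat u).sum (X.side.pat u').sum with hc | hc | hc
  · exact absurd h.cut_end (h'.not_cut (by omega) (by omega))
  · exact hc
  · exact absurd h'.cut_end (h.not_cut (by omega) (by omega))

/-- Two consecutive cuts bound a block. -/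
theorem exists_blk_of_cuts {N : ℕ} {i j : ℤ} (hi : X.Cut N x i) (hj : X.Cut N x j) (hij : i < j)
    (h : ∀ l, i < l → l < j → ¬ X.Cut N x l) :
    ∃ u, X.Blk N x i u ∧ i + (X.side.pat u).sum = j := by
  obtain ⟨u, hu, hs⟩ := exists_isSp hi.1 hj.1 hij.le
  refine ⟨u, ⟨hi, ?_, hu⟩, hs⟩
  have key : ∀ (u : List X.Ltr) (i : ℤ), i < j → X.IsSp x i u → i + (X.side.pat u).sum = j →
      (∀ l, i < l → l < j → ¬ X.Cut N x l) → IsBlk N (X.side.pat u) := by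
    intro u
    induction u with
    | nil => intro i h1 _ h2 _; simp at h2; omega
    | cons a u ih =>
      intro i h1 h2 h3 h4
      rw [isSp_cons] at h2
      simp [-Nat.cast_list_sum] at h3
      have ha := X.len_pos a
      rcases eq_or_ne u [] with rfl | hne
      · simp at h3
        refine IsBlk.singleton (h2.1.cut_end_iff.1 ?_)
        rwa [h3]
      · have hpos : 0 < (X.side.pat u).sum := by
          obtain ⟨b, u, rfl⟩ := List.exists_cons_of_ne_nil hne
          have := X.len_pos b
          simp; omega
        refine IsBlk.cons ?_ (ih _ (by omega) h2.2 (by omega) fun l hl => h4 l (by omega))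
        have := h4 (i + X.side.len a) (by omega) (by omega)
        rw [h2.1.cut_end_iff] at this
        omega
  exact key u i hij hu hs h

theorem exists_blk {N : ℕ} {l : ℤ} (hl : ∃ i ≤ l, X.Cut N x i) (hr : ∃ i, l < i ∧ X.Cut N x i) :
    ∃ i u, X.Blk N x i u ∧ i ≤ l ∧ l < i + (X.side.pat u).sum := by
  obtain ⟨i, ⟨hi, hi'⟩, him⟩ := Int.exists_greatest_of_bdd (P := fun i => i ≤ l ∧ X.Cut N x i)
    ⟨l, fun z hz => hz.1⟩ hl
  obtain ⟨j, ⟨hj, hj'⟩, hjm⟩ := Int.exists_least_of_bdd (P := fun i => l < i ∧ X.Cut N x i)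
    ⟨l, fun z hz => hz.1.le⟩ hr
  obtain ⟨u, hu, hs⟩ := exists_blk_of_cuts hi' hj' (by omega) (fun m h1 h2 hc => by
    by_cases hm : m ≤ l
    · have := him m ⟨hm, hc⟩; omega
    · have := hjm m ⟨by omega, hc⟩; omega)
  exact ⟨i, u, hu, hi, by omega⟩

/-- The block of a lower level at a given place of a concatenation of blocks. -/
theorem exists_sub_blk {N : ℕ} {S : List ℕ} (hS : Cpl N S) {i l : ℤ} {U : List X.Ltr}
    (hU : X.side.pat U = S) (hc : X.Cut N x i) (hs : X.IsSp x i U) (hl : i ≤ l)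
    (hr : l < i + (X.side.pat U).sum) :
    ∃ u1 u u3, U = u1 ++ (u ++ u3) ∧ Cpl N (X.side.pat u1) ∧
      X.Blk N x (i + (X.side.pat u1).sum) u ∧ i + (X.side.pat u1).sum ≤ l ∧
      l < i + (X.side.pat u1).sum + (X.side.pat u).sum := by
  induction hS generalizing i U with
  | nil => rw [hU] at hr; simp at hr; omega
  | @append b S hb _ ih =>
    obtain ⟨u, v, rfl, rfl, rfl⟩ := List.map_eq_append_iff.1 hU
    rw [isSp_append] at hs
    have hB : X.Blk N x i u := ⟨hc, hb, hs.1⟩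
    by_cases h : l < i + (X.side.pat u).sum
    · exact ⟨[], u, v, rfl, .nil, by simpa using hB, by simpa using hl, by simpa using h⟩
    · obtain ⟨u1, u', u3, rfl, h1, h2, h3, h4⟩ := ih rfl hB.cut_end hs.2 (by omega)
        (by simp [-Nat.cast_list_sum] at hr; omega)
      refine ⟨u ++ u1, u', u3, by simp, by rw [Side.pat_append]; exact Cpl.append hb h1, ?_, ?_, ?_⟩
      · simpa [add_assoc] using h2
      · simp [-Nat.cast_list_sum]; omega
      · simp [-Nat.cast_list_sum]; omega

theorem Blk.exists_sub {N N' : ℕ} (hN : N ≤ N') {i' i l : ℤ} {U u : List X.Ltr}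
    (hU : X.Blk N' x i' U) (hu : X.Blk N x i u) (hl' : i' ≤ l)
    (hr' : l < i' + (X.side.pat U).sum) (hl : i ≤ l) (hr : l < i + (X.side.pat u).sum) :
    ∃ u1 u3, U = u1 ++ (u ++ u3) ∧ Cpl N (X.side.pat u1) ∧ i = i' + (X.side.pat u1).sum := by
  obtain ⟨u1, u', u3, h1, h2, h3, h4, h5⟩ :=
    exists_sub_blk (hU.2.1.cpl hN) rfl (hU.1.mono hN) hU.2.2 hl' hr'
  obtain ⟨rfl, rfl⟩ := h3.unique hu h4 h5 hl hr
  exact ⟨u1, u3, h1, h2, rfl⟩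

/-! ### Dependence on finitely many coordinates -/

theorem bd_congr {y : ℤ → A} {i j : ℤ} (h : ∀ t : ℤ, -(X.k : ℤ) ≤ t → t < 0 → x (i + t) = y (j + t)) :
    X.Bd x i ↔ X.Bd y j := by
  rw [Bd, Bd, wd_congr (y := y) (j := j - X.k)]
  intro t ht
  have := h (t - X.k) (by omega) (by omega)
  convert this using 2 <;> ring

theorem cut_congr {N : ℕ} {y : ℤ → A} {i j : ℤ}
    (h : ∀ t : ℤ, -(X.k + N : ℤ) ≤ t → t < 0 → x (i + t) = y (j + t)) :
    X.Cut N x i ↔ X.Cut N y j := by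
  have h1 : ∀ s : ℤ, -(N : ℤ) ≤ s → s ≤ 0 → (X.Bd x (i + s) ↔ X.Bd y (j + s)) := fun s h1 h2 =>
    bd_congr fun t h3 h4 => by simpa [add_assoc] using h (s + t) (by omega) (by omega)
  have h0 := h1 0 (by omega) (by omega)
  simp only [add_zero] at h0
  rw [Cut, Cut, h0]
  refine and_congr_right fun _ => ⟨fun H l h2 h3 hb => ?_, fun H l h2 h3 hb => ?_⟩
  · exact H (i + (l - j)) (by omega) (by omega)
      ((h1 _ (by omega) (by omega)).2 (by convert hb using 1; ring))
  · exact H (j + (l - i)) (by omega) (by omega)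
      ((h1 _ (by omega) (by omega)).1 (by convert hb using 1; ring))

theorem isSp_congr {y : ℤ → A} {i j : ℤ} {u : List X.Ltr}
    (h : ∀ t : ℤ, -(X.k : ℤ) ≤ t → t < (X.side.pat u).sum → x (i + t) = y (j + t)) :
    X.IsSp x i u ↔ X.IsSp y j u := by
  rw [IsSp, IsSp, bd_congr (y := y) (j := j) fun t h1 h2 => h t h1 (by omega),
    wd_congr (y := y) (j := j)]
  rw [Side.length_flat]
  exact fun t ht => h t (by omega) (by omega)

theorem isLtr_iff_isSp {i : ℤ} {a : X.Ltr} : X.IsLtr x i a ↔ X.IsSp x i [a] := by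
  rw [isSp_cons, and_iff_left_of_imp]
  exact fun h => ⟨h.bd_end, by simp⟩

theorem blk_congr {N : ℕ} {y : ℤ → A} {i j : ℤ} {u : List X.Ltr}
    (h : ∀ t : ℤ, -(X.k + N : ℤ) ≤ t → t < (X.side.pat u).sum → x (i + t) = y (j + t)) :
    X.Blk N x i u ↔ X.Blk N y j u := by
  rw [Blk, Blk, cut_congr (y := y) (j := j) fun t h1 h2 => h t h1 (by omega),
    isSp_congr (y := y) (j := j) fun t h1 h2 => h t (by omega) h2]

end Scheme
end KS

namespace KS
open scoped Classical
open ENNReal Filter Topology MeasureTheory ProbabilityTheory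

/-! ### Bernoulli measures -/

section Bernoulli
variable {A : Type*} [Fintype A] [MeasurableSpace A] [DiscreteMeasurableSpace A]

/-- The measure on the alphabet with weights `p`. -/
def letterMeasure (p : A → ℝ) : Measure A := ∑ a, ENNReal.ofReal (p a) • Measure.dirac a

theorem letterMeasure_singleton (p : A → ℝ) (a : A) :
    letterMeasure p {a} = ENNReal.ofReal (p a) := by
  simp only [letterMeasure, Measure.coe_finsetSum, Finset.sum_apply, Measure.smul_apply,
    smul_eq_mul]
  rw [Finset.sum_eq_single a]
  · simp
  · intro b _ hb; simp [hb]
  · simp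

theorem isProbabilityMeasure_letterMeasure {p : A → ℝ} (hp : IsProbVector p) :
    IsProbabilityMeasure (letterMeasure p) := by
  constructor
  simp only [letterMeasure, Measure.coe_finsetSum, Finset.sum_apply, Measure.smul_apply,
    smul_eq_mul, measure_univ, mul_one]
  rw [← ENNReal.ofReal_sum_of_nonneg fun a _ => (hp.1 a).le, hp.2, ENNReal.ofReal_one]

/-- The Bernoulli measure with weights `p`. -/
def bern (p : A → ℝ) : Measure (ℤ → A) := Measure.infinitePi fun _ => letterMeasure p

theorem isProbabilityMeasure_bern {p : A → ℝ} (hp : IsProbVector p) :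
    IsProbabilityMeasure (bern p) := by
  have := isProbabilityMeasure_letterMeasure hp
  unfold bern; infer_instance

theorem isBernoulliMeasure_bern {p : A → ℝ} (hp : IsProbVector p) :
    IsBernoulliMeasure (bern p) p := by
  have := isProbabilityMeasure_letterMeasure hp
  intro F s
  have h : {x : ℤ → A | ∀ i ∈ F, x i = s i} = Set.pi F fun i => {s i} := by
    ext x; simp
  rw [h, bern, Measure.infinitePi_pi _ fun i _ => MeasurableSet.of_discrete]
  simp_rw [letterMeasure_singleton]
  rw [ENNReal.ofReal_prod_of_nonneg fun i _ => (hp.1 _).le]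

theorem IsBernoulliMeasure.unique {p : A → ℝ} {μ ν : Measure (ℤ → A)}
    (hμ : IsBernoulliMeasure μ p) (hν : IsBernoulliMeasure ν p) : μ = ν := by
  have hfin : IsFiniteMeasure μ := ⟨by
    rcases isEmpty_or_nonempty A with h | h
    · simp [Set.eq_empty_of_isEmpty]
    · have := hμ ∅ fun _ => h.some
      simp at this; simp [this]⟩
  have huniv : μ Set.univ = ν Set.univ := by
    rcases isEmpty_or_nonempty A with h | h
    · simp [Set.eq_empty_of_isEmpty]
    · have h1 := hμ ∅ fun _ => h.some
      have h2 := hν ∅ fun _ => h.some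
      simp at h1 h2; rw [h1, h2]
  let C : Set (Set (ℤ → A)) := {E | ∃ (F : Finset ℤ) (s : ℤ → A), E = {x | ∀ i ∈ F, x i = s i}}
  refine ext_of_generate_finite C (le_antisymm ?_ ?_) ?_ ?_ huniv
  · refine iSup_le fun i => ?_
    rw [← measurable_iff_comap_le]
    refine @measurable_to_countable' _ _ _ _ (MeasurableSpace.generateFrom C) _ fun a => ?_
    exact MeasurableSpace.measurableSet_generateFrom
      ⟨{i}, fun _ => a, by ext x; simp⟩
  · refine MeasurableSpace.generateFrom_le ?_
    rintro _ ⟨F, s, rfl⟩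
    have : {x : ℤ → A | ∀ i ∈ F, x i = s i} = ⋂ i ∈ F, (fun x : ℤ → A => x i) ⁻¹' {s i} := by
      ext; simp
    rw [this]
    exact Finset.measurableSet_biInter _ fun i _ => measurable_pi_apply i .of_discrete
  · rintro _ ⟨F, s, rfl⟩ _ ⟨G, t, rfl⟩ ⟨z, hz1, hz2⟩
    refine ⟨F ∪ G, z, ?_⟩
    ext x
    simp only [Set.mem_inter_iff, Set.mem_ofPred_eq, Finset.mem_union] at hz1 hz2 ⊢
    constructor
    · rintro ⟨h1, h2⟩ i (hi | hi)
      · rw [h1 i hi, hz1 i hi]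
      · rw [h2 i hi, hz2 i hi]
    · intro h
      exact ⟨fun i hi => by rw [h i (.inl hi), hz1 i hi], fun i hi => by rw [h i (.inr hi), hz2 i hi]⟩
  · rintro _ ⟨F, s, rfl⟩
    rw [hμ, hν]

/-- The iterated shift. -/
def sh (n : ℤ) (x : ℤ → A) : ℤ → A := fun i => x (i + n)

theorem measurable_sh (n : ℤ) : Measurable (sh n : (ℤ → A) → ℤ → A) :=
  measurable_pi_lambda _ fun i => measurable_pi_apply (i + n)

theorem map_sh_bern {p : A → ℝ} (hp : IsProbVector p) (n : ℤ) : (bern p).map (sh n) = bern p := by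
  refine IsBernoulliMeasure.unique (p := p) (fun F s => ?_) (isBernoulliMeasure_bern hp)
  rw [Measure.map_apply (measurable_sh n)]
  · have := isBernoulliMeasure_bern hp (F.map (addRightEmbedding n)) (fun i => s (i - n))
    simp only [Finset.mem_map, addRightEmbedding_apply, forall_exists_index, and_imp,
      forall_apply_eq_imp_iff₂, Finset.prod_map, add_sub_cancel_right] at this
    exact this
  · have : {x : ℤ → A | ∀ i ∈ F, x i = s i} = ⋂ i ∈ F, (fun x : ℤ → A => x i) ⁻¹' {s i} := by
      ext; simp
    rw [this]
    exact Finset.measurableSet_biInter _ fun i _ => measurable_pi_apply i .of_discrete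

/-- `f` depends only on the coordinates in `[a, b)`. -/
def Win {β : Type*} (a b : ℤ) (f : (ℤ → A) → β) : Prop :=
  ∀ x y : ℤ → A, (∀ i, a ≤ i → i < b → x i = y i) → f x = f y

theorem Win.comp_sh {β : Type*} {a b : ℤ} {f : (ℤ → A) → β} (h : Win a b f) (n : ℤ) :
    Win (a + n) (b + n) fun x => f (sh n x) :=
  fun x y hxy => h _ _ fun i h1 h2 => hxy (i + n) (by omega) (by omega)

theorem Win.exists_comp {β : Type*} [Nonempty β] {a b : ℤ} {f : (ℤ → A) → β} (h : Win a b f) :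
    ∃ g : ((i : Finset.Ico a b) → A) → β, f = g ∘ fun x i => x i := by
  refine ⟨Function.extend (fun x i => x i) f fun _ => Classical.arbitrary _, ?_⟩
  funext x
  have : Function.FactorsThrough f fun (x : ℤ → A) (i : Finset.Ico a b) => x i := by
    intro x y hxy
    exact h x y fun i h1 h2 => congrFun hxy ⟨i, Finset.mem_Ico.2 ⟨h1, h2⟩⟩
  exact (this.extend_apply _ x).symm

theorem Win.measurable {β : Type*} [MeasurableSpace β] {a b : ℤ} {f : (ℤ → A) → β}
    (h : Win a b f) : Measurable f := by
  rcases isEmpty_or_nonempty β with hb | hb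
  · have : IsEmpty (ℤ → A) := ⟨fun x => hb.elim (f x)⟩
    exact measurable_of_empty f
  obtain ⟨g, rfl⟩ := h.exists_comp
  exact (measurable_of_countable g).comp (measurable_pi_lambda _ fun i => measurable_pi_apply _)

theorem Win.measurableSet {a b : ℤ} {f : (ℤ → A) → Prop} (h : Win a b f) :
    MeasurableSet {x | f x} := measurableSet_setOfPred.2 h.measurable

theorem Win.indepFun {p : A → ℝ} (hp : IsProbVector p) {β γ : Type*} [Nonempty β] [Nonempty γ]
    [MeasurableSpace β] [MeasurableSpace γ] {a b c d : ℤ} {f : (ℤ → A) → β} {g : (ℤ → A) → γ}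
    (hf : Win a b f) (hg : Win c d g) (h : b ≤ c ∨ d ≤ a) : IndepFun f g (bern p) := by
  have := isProbabilityMeasure_letterMeasure hp
  obtain ⟨f', rfl⟩ := hf.exists_comp
  obtain ⟨g', rfl⟩ := hg.exists_comp
  have hi : iIndepFun (fun (i : ℤ) (x : ℤ → A) => x i) (bern p) :=
    iIndepFun_infinitePi (X := fun (_ : ℤ) (a : A) => a) fun _ => measurable_id
  refine (hi.indepFun_finset (Finset.Ico a b) (Finset.Ico c d) ?_ fun i => measurable_pi_apply i).comp
    (measurable_of_countable f') (measurable_of_countable g')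
  rw [Finset.disjoint_left]
  intro i h1 h2
  rw [Finset.mem_Ico] at h1 h2
  omega

theorem Win.measure_and {p : A → ℝ} (hp : IsProbVector p) {a b c d : ℤ} {f g : (ℤ → A) → Prop}
    (hf : Win a b f) (hg : Win c d g) (h : b ≤ c ∨ d ≤ a) :
    bern p {x | f x ∧ g x} = bern p {x | f x} * bern p {x | g x} := by
  have := (hf.indepFun hp hg h).measure_inter_preimage_eq_mul {True} {True}
    MeasurableSet.of_discrete MeasurableSet.of_discrete
  have e : ∀ f : (ℤ → A) → Prop, f ⁻¹' {True} = {x | f x} := fun f => by ext x; simp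
  rw [e, e] at this
  rw [← this]
  congr 1

theorem win_wd (i : ℤ) (n : ℕ) : Win i (i + n) fun x : ℤ → A => wd x i n :=
  fun x y h => wd_congr fun t ht => h _ (by omega) (by omega)

theorem bern_wd {p : A → ℝ} (hp : IsProbVector p) (i : ℤ) (l : List A) :
    bern p {x | wd x i l.length = l} = ENNReal.ofReal (l.map p).prod := by
  have := isProbabilityMeasure_bern hp
  induction l generalizing i with
  | nil => simp
  | cons a l ih =>
    have h1 : {x : ℤ → A | wd x i (a :: l).length = a :: l} =
        {x | wd x i 1 = [a] ∧ wd x (i + 1) l.length = l} := by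
      ext x
      simpa using wd_append_iff (x := x) (i := i) (l := [a]) (l' := l)
    have w1 : Win i (i + 1) fun x : ℤ → A => wd x i 1 = [a] := fun x y h => by
      have := win_wd (A := A) i 1 x y h; simp only at this ⊢; rw [this]
    have w2 : Win (i + 1) (i + 1 + l.length) fun x : ℤ → A => wd x (i + 1) l.length = l :=
      fun x y h => by have := win_wd (A := A) (i + 1) l.length x y h; simp only at this ⊢; rw [this]
    rw [h1, Win.measure_and hp w1 w2 (.inl le_rfl), ih, List.map_cons, List.prod_cons,
      ENNReal.ofReal_mul (hp.1 a).le]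
    congr 1
    have := isBernoulliMeasure_bern hp {i} fun _ => a
    simpa [wd] using this

theorem bern_sh {p : A → ℝ} (hp : IsProbVector p) (n : ℤ) {E : Set (ℤ → A)} (hE : MeasurableSet E) :
    bern p {x | sh n x ∈ E} = bern p E := by
  conv_rhs => rw [← map_sh_bern hp n, Measure.map_apply (measurable_sh n) hE]
  rfl

theorem ae_sh {p : A → ℝ} (hp : IsProbVector p) (n : ℤ) {P : (ℤ → A) → Prop}
    (h : ∀ᵐ x ∂bern p, P x) : ∀ᵐ x ∂bern p, P (sh n x) := by
  rw [← map_sh_bern hp n] at h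
  exact ae_of_ae_map (measurable_sh n).aemeasurable h

/-! ### The law of large numbers for functions of finitely many coordinates -/

theorem Win.exists_bound {a b : ℤ} {f : (ℤ → A) → ℝ} (h : Win a b f) : ∃ C, ∀ x, |f x| ≤ C := by
  obtain ⟨g, rfl⟩ := h.exists_comp
  obtain ⟨C, hC⟩ := (Set.finite_range fun y => |g y|).bddAbove
  exact ⟨C, fun x => hC ⟨_, rfl⟩⟩

theorem Win.integrable {p : A → ℝ} (hp : IsProbVector p) {a b : ℤ} {f : (ℤ → A) → ℝ}
    (h : Win a b f) : Integrable f (bern p) := by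
  have := isProbabilityMeasure_bern hp
  obtain ⟨C, hC⟩ := h.exists_bound
  exact Integrable.of_bound h.measurable.aestronglyMeasurable C (ae_of_all _ hC)

theorem exists_linear_bound {s : ℕ → ℝ} {m : ℝ} (h : Tendsto (fun n : ℕ => s n / n) atTop (𝓝 m))
    {ε : ℝ} (hε : 0 < ε) : ∃ C, ∀ n, |s n - n * m| ≤ ε * n + C := by
  obtain ⟨n0, hn0⟩ := Metric.tendsto_atTop.1 h ε hε
  obtain ⟨C, hC⟩ := ((Finset.range (n0 + 1)).image fun n => |s n - n * m|).finite_toSet.bddAbove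
  have hC0 : 0 ≤ C := (abs_nonneg _).trans (hC (Finset.mem_coe.2 (Finset.mem_image_of_mem _
    (Finset.mem_range.2 (Nat.succ_pos n0)))))
  refine ⟨C, fun n => ?_⟩
  by_cases hn : n < n0 + 1
  · have := hC (Finset.mem_coe.2 (Finset.mem_image_of_mem _ (Finset.mem_range.2 hn)))
    have : 0 ≤ ε * n := by positivity
    linarith
  · have h1 := hn0 n (by omega)
    rw [Real.dist_eq] at h1
    have hnp : (0 : ℝ) < n := by exact_mod_cast (by omega : 0 < n)
    have : s n - n * m = n * (s n / n - m) := by field_simp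
    rw [this, abs_mul, abs_of_pos hnp]
    nlinarith

theorem Win.lln_spaced {p : A → ℝ} (hp : IsProbVector p) {a b : ℤ} {f : (ℤ → A) → ℝ}
    (h : Win a b f) (e : ℕ → ℤ) (he : ∀ s t, s ≠ t → b - a ≤ |e s - e t|) :
    ∀ᵐ x ∂bern p, Tendsto (fun n : ℕ => (∑ t ∈ Finset.range n, f (sh (e t) x)) / n) atTop
      (𝓝 (∫ x, f x ∂bern p)) := by
  have := isProbabilityMeasure_bern hp
  have hid : ∀ n : ℤ, IdentDistrib (fun x => f (sh n x)) f (bern p) (bern p) := fun n =>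
    ⟨(h.comp_sh n).measurable.aemeasurable, h.measurable.aemeasurable, by
      conv_rhs => rw [← map_sh_bern hp n]
      rw [Measure.map_map h.measurable (measurable_sh n)]; rfl⟩
  have := strong_law_ae_real (μ := bern p) (fun t x => f (sh (e t) x))
    ((h.comp_sh _).integrable hp) (fun s t hst => ?_) (fun t => (hid _).trans (hid _).symm)
  · rwa [(hid (e 0)).integral_eq] at this
  · refine (h.comp_sh _).indepFun hp (h.comp_sh _) ?_
    have := he s t hst
    rcases le_abs.1 this with h' | h' <;> omega

theorem sum_range_mul {M : ℕ} (f : ℕ → ℝ) (q : ℕ) :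
    ∑ s ∈ Finset.range (M * q), f s =
      ∑ ρ ∈ Finset.range M, ∑ t ∈ Finset.range q, f (M * t + ρ) := by
  induction q with
  | zero => simp
  | succ q ih =>
    rw [Nat.mul_succ, Finset.sum_range_add, ih]
    simp_rw [Finset.sum_range_succ, Finset.sum_add_distrib]

theorem linear_bound_of_residues {M : ℕ} (hM : 0 < M) {f : ℕ → ℝ} {m K : ℝ} (hK : ∀ s, |f s| ≤ K)
    (h : ∀ ρ < M, ∀ ε > 0, ∃ C, ∀ q : ℕ, |∑ t ∈ Finset.range q, f (M * t + ρ) - q * m| ≤ ε * q + C)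
    {ε : ℝ} (hε : 0 < ε) : ∃ C, ∀ n : ℕ, |∑ s ∈ Finset.range n, f s - n * m| ≤ ε * n + C := by
  choose! C hC using fun ρ hρ => h ρ hρ ε hε
  refine ⟨∑ ρ ∈ Finset.range M, C ρ + M * (K + |m|), fun n => ?_⟩
  have hn : n = M * (n / M) + n % M := (Nat.div_add_mod n M).symm
  set q := n / M
  set r := n % M
  have hr : r < M := Nat.mod_lt _ hM
  have h1 : |∑ s ∈ Finset.range (M * q), f s - (M * q : ℕ) * m| ≤
      ε * (M * q : ℕ) + ∑ ρ ∈ Finset.range M, C ρ := by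
    rw [sum_range_mul]
    have : ∑ ρ ∈ Finset.range M, ∑ t ∈ Finset.range q, f (M * t + ρ) - (M * q : ℕ) * m =
        ∑ ρ ∈ Finset.range M, (∑ t ∈ Finset.range q, f (M * t + ρ) - q * m) := by
      rw [Finset.sum_sub_distrib]; simp; ring
    rw [this]
    refine (Finset.abs_sum_le_sum_abs _ _).trans ?_
    refine (Finset.sum_le_sum fun ρ hρ => hC ρ (Finset.mem_range.1 hρ) q).trans ?_
    rw [Finset.sum_add_distrib]; simp
    apply le_of_eq; ring
  have h2 : |∑ s ∈ Finset.range r, f (M * q + s) - r * m| ≤ M * (K + |m|) := by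
    have : ∑ s ∈ Finset.range r, f (M * q + s) - r * m =
        ∑ s ∈ Finset.range r, (f (M * q + s) - m) := by
      rw [Finset.sum_sub_distrib]; simp
    rw [this]
    have hKm : 0 ≤ K + |m| := add_nonneg ((abs_nonneg _).trans (hK 0)) (abs_nonneg _)
    refine (Finset.abs_sum_le_sum_abs _ _).trans ((Finset.sum_le_sum fun s _ =>
      (abs_sub _ _).trans (add_le_add (hK _) le_rfl)).trans ?_)
    rw [Finset.sum_const, Finset.card_range, nsmul_eq_mul]
    gcongr
  have h3 : ∑ s ∈ Finset.range n, f s - n * m =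
      (∑ s ∈ Finset.range (M * q), f s - (M * q : ℕ) * m) +
        (∑ s ∈ Finset.range r, f (M * q + s) - r * m) := by
    rw [hn, Finset.sum_range_add]; push_cast; ring
  have h4 : ((M * q : ℕ) : ℝ) ≤ n := by exact_mod_cast (by omega : M * q ≤ n)
  rw [h3]
  have := abs_add_le (∑ s ∈ Finset.range (M * q), f s - (M * q : ℕ) * m)
    (∑ s ∈ Finset.range r, f (M * q + s) - r * m)
  nlinarith

theorem Win.lln_dir {p : A → ℝ} (hp : IsProbVector p) {a b : ℤ} {f : (ℤ → A) → ℝ}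
    (h : Win a b f) (σ c : ℤ) (hσ : |σ| = 1) :
    ∀ᵐ x ∂bern p, ∀ ε > 0, ∃ C, ∀ n : ℕ,
      |∑ s ∈ Finset.range n, f (sh (σ * s + c) x) - n * ∫ x, f x ∂bern p| ≤ ε * n + C := by
  obtain ⟨K, hK⟩ := h.exists_bound
  set M := (b - a).toNat + 1 with hM
  have := fun ρ : ℕ => h.lln_spaced hp (fun t => σ * (M * t + ρ : ℕ) + c) (fun s t hst => by
    have : σ * (M * s + ρ : ℕ) + c - (σ * (M * t + ρ : ℕ) + c) = σ * (M * ((s : ℤ) - t)) := by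
      push_cast; ring
    rw [this, abs_mul, hσ, one_mul, abs_mul]
    have h1 : (1 : ℤ) ≤ |(s : ℤ) - t| := Int.one_le_abs (sub_ne_zero.2 (by exact_mod_cast hst))
    have h2 : |(M : ℤ)| = M := abs_of_nonneg (by positivity)
    rw [h2]
    nlinarith [Int.self_le_toNat (b - a)])
  filter_upwards [ae_all_iff.2 this] with x hx ε hε
  exact linear_bound_of_residues (f := fun s => f (sh (σ * s + c) x)) (Nat.succ_pos _)
    (fun s => hK _) (fun ρ _ ε hε => exists_linear_bound (hx ρ) hε) hε

theorem Win.lln {p : A → ℝ} (hp : IsProbVector p) {a b : ℤ} {f : (ℤ → A) → ℝ} (h : Win a b f) :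
    ∀ᵐ x ∂bern p, ∀ ε > 0, ∃ C, ∀ i n : ℕ,
      |∑ s ∈ Finset.range (i + n), f (sh (-i + s) x) - (i + n : ℕ) * ∫ x, f x ∂bern p|
        ≤ ε * (i + n : ℕ) + C := by
  filter_upwards [h.lln_dir hp 1 0 (by simp), h.lln_dir hp (-1) (-1) (by simp)] with x h1 h2 ε hε
  obtain ⟨C1, hC1⟩ := h1 ε hε
  obtain ⟨C2, hC2⟩ := h2 ε hε
  refine ⟨C1 + C2, fun i n => ?_⟩
  have e1 := hC1 n
  have e2 := hC2 i
  have h3 : ∑ s ∈ Finset.range (i + n), f (sh (-i + s) x) =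
      ∑ s ∈ Finset.range i, f (sh (-1 * s + -1) x) + ∑ s ∈ Finset.range n, f (sh (1 * s + 0) x) := by
    rw [Finset.sum_range_add]
    congr 1
    · rw [← Finset.sum_range_reflect]
      refine Finset.sum_congr rfl fun s hs => ?_
      have := Finset.mem_range.1 hs
      congr 2; push_cast [show s ≤ i - 1 by omega, show 1 ≤ i by omega]; ring
    · refine Finset.sum_congr rfl fun s hs => ?_
      congr 2; push_cast; ring
  rw [h3]
  push_cast
  rw [abs_le] at e1 e2 ⊢
  constructor <;> linarith [e1.1, e1.2, e2.1, e2.2]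

end Bernoulli
end KS

namespace KS
open scoped Classical
open ENNReal Filter Topology MeasureTheory ProbabilityTheory

namespace Scheme
variable {A : Type*} [Fintype A] [MeasurableSpace A] [DiscreteMeasurableSpace A] (X : Scheme A)

/-! ### Probabilities of blocks -/

theorem win_bd (i : ℤ) : Win (i - X.k) i fun x => X.Bd x i := fun x y h =>
  propext (bd_congr fun t h1 h2 => h _ (by omega) (by omega))

theorem win_cut (N : ℕ) (i : ℤ) : Win (i - X.k - N) i fun x => X.Cut N x i := fun x y h =>
  propext (cut_congr fun t h1 h2 => h _ (by omega) (by omega))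

theorem win_isSp (i : ℤ) (u : List X.Ltr) :
    Win (i - X.k) (i + (X.side.pat u).sum) fun x => X.IsSp x i u := fun x y h =>
  propext (isSp_congr fun t h1 h2 => h _ (by omega) (by omega))

theorem win_isLtr (i : ℤ) (a : X.Ltr) :
    Win (i - X.k) (i + X.side.len a) fun x => X.IsLtr x i a := by
  have := X.win_isSp i [a]
  simp_rw [← isLtr_iff_isSp] at this
  simpa using this

theorem win_blk (N : ℕ) (i : ℤ) (u : List X.Ltr) :
    Win (i - X.k - N) (i + (X.side.pat u).sum) fun x => X.Blk N x i u := fun x y h =>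
  propext (blk_congr fun t h1 h2 => h _ (by omega) (by omega))

theorem win_wd_eq (i : ℤ) (n : ℕ) (l : List A) : Win i (i + n) fun x : ℤ → A => wd x i n = l :=
  fun x y h => by have := win_wd (A := A) i n x y h; simp only at this ⊢; rw [this]

/-- The probability of the marker. -/
def pi : ℝ := (X.w.map X.p).prod

theorem prod_pos (l : List A) : 0 < (l.map X.p).prod := List.prod_pos fun b hb => by
  obtain ⟨c, _, rfl⟩ := List.mem_map.1 hb
  exact X.prob.1 c

theorem pi_pos : 0 < X.pi := X.prod_pos _

theorem W_eq (u : List X.Ltr) : X.side.W u = ((X.side.flat u).map X.p).prod := by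
  induction u with
  | nil => simp
  | cons a u ih =>
    rw [Side.W_cons, ih, Side.flat_cons, List.map_append, List.prod_append]; rfl

/-- The Bernoulli measure of the scheme. -/
def μ : Measure (ℤ → A) := bern X.p

instance : IsProbabilityMeasure X.μ := isProbabilityMeasure_bern X.prob

theorem measure_bd (i : ℤ) : X.μ {x | X.Bd x i} = ENNReal.ofReal X.pi := bern_wd X.prob _ _

/-- The probability of a cut of level `N`. -/
def kap (N : ℕ) : ℝ≥0∞ := X.μ {x | X.Cut N x 0}

theorem cut_sh {N : ℕ} {x : ℤ → A} {i n : ℤ} : X.Cut N (sh n x) i ↔ X.Cut N x (i + n) :=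
  cut_congr fun t _ _ => by simp only [sh]; congr 1; ring

theorem bd_sh {x : ℤ → A} {i n : ℤ} : X.Bd (sh n x) i ↔ X.Bd x (i + n) :=
  bd_congr fun t _ _ => by simp only [sh]; congr 1; ring

theorem isLtr_sh {x : ℤ → A} {i n : ℤ} {a : X.Ltr} : X.IsLtr (sh n x) i a ↔ X.IsLtr x (i + n) a := by
  rw [isLtr_iff_isSp, isLtr_iff_isSp]
  exact isSp_congr fun t _ _ => by simp only [sh]; congr 1; ring

theorem blk_sh {N : ℕ} {x : ℤ → A} {i n : ℤ} {u : List X.Ltr} :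
    X.Blk N (sh n x) i u ↔ X.Blk N x (i + n) u :=
  blk_congr fun t _ _ => by simp only [sh]; congr 1; ring

theorem measure_cut (N : ℕ) (i : ℤ) : X.μ {x | X.Cut N x i} = X.kap N := by
  have := bern_sh X.prob i (X.win_cut N 0).measurableSet
  simp only [Set.mem_ofPred_eq, cut_sh, zero_add] at this
  exact this

theorem kap_zero : X.kap 0 = ENNReal.ofReal X.pi := by
  rw [← X.measure_bd 0, kap]
  congr 1; ext x
  simp only [Set.mem_ofPred_eq, Cut, and_iff_left_iff_imp]
  intro _ j h1 h2; omega

theorem measure_blk {N : ℕ} (i : ℤ) {u : List X.Ltr} (hu : IsBlk N (X.side.pat u)) :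
    X.μ {x | X.Blk N x i u} = X.kap N * ENNReal.ofReal (X.side.W u) := by
  rw [W_eq, ← bern_wd X.prob i, ← X.measure_cut N i, μ,
    ← Win.measure_and X.prob (X.win_cut N i) (win_wd_eq _ _ _) (.inl le_rfl)]
  congr 1; ext x
  simp only [Set.mem_ofPred_eq, Blk, IsSp]
  exact ⟨fun h => ⟨h.1, h.2.2.2⟩, fun h => ⟨h.1, hu, h.1.1, h.2⟩⟩

theorem blk_zero {x : ℤ → A} {i : ℤ} {a : X.Ltr} : X.Blk 0 x i [a] ↔ X.IsLtr x i a := by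
  rw [isLtr_iff_isSp, Blk]
  refine ⟨fun h => h.2.2, fun h => ⟨⟨h.1, fun j h1 h2 => by omega⟩, .singleton (Nat.zero_le _), h⟩⟩

theorem measure_isLtr (i : ℤ) (a : X.Ltr) :
    X.μ {x | X.IsLtr x i a} = ENNReal.ofReal (X.pi * X.side.wt a) := by
  have := X.measure_blk (N := 0) i (u := [a]) (.singleton (Nat.zero_le _))
  simp only [blk_zero, kap_zero, Side.W_cons, Side.W_nil, mul_one] at this
  rw [this, ENNReal.ofReal_mul X.pi_pos.le]

theorem win_passage (i : ℤ) (m : ℕ) :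
    Win (i - X.k) (i + m) fun x => ∃ a ∈ X.side.fib m, X.IsLtr x i a := by
  intro x y h
  simp only [eq_iff_iff]
  refine exists_congr fun a => and_congr_right fun ha => ?_
  have hl : X.side.len a = m := X.side.mem_fib.1 ha
  exact Iff.of_eq (X.win_isLtr i a x y fun j h1 h2 => h j h1 (by omega))

theorem measure_passage (i : ℤ) (m : ℕ) :
    X.μ {x | ∃ a ∈ X.side.fib m, X.IsLtr x i a} = ENNReal.ofReal (X.pi * X.side.P m) := by
  have : {x | ∃ a ∈ X.side.fib m, X.IsLtr x i a} = ⋃ a ∈ X.side.fib m, {x | X.IsLtr x i a} := by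
    ext x; simp
  rw [this, measure_biUnion_finset]
  · simp_rw [measure_isLtr]
    rw [Side.P, Finset.mul_sum, ENNReal.ofReal_sum_of_nonneg fun a _ =>
      mul_nonneg X.pi_pos.le (X.side.wt_pos a).le]
  · intro a ha b hb hab
    rw [Function.onFun, Set.disjoint_left]
    intro x h1 h2
    refine hab (Subtype.ext ?_)
    have h1 : X.IsLtr x i a := h1
    have h2 : X.IsLtr x i b := h2
    have : X.side.len a = X.side.len b :=
      (X.side.mem_fib.1 (Finset.mem_coe.1 ha)).trans (X.side.mem_fib.1 (Finset.mem_coe.1 hb)).symm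
    rw [← h1.2, ← h2.2, this]
  · exact fun a _ => (X.win_isLtr i a).measurableSet

theorem passage_iff {x : ℤ → A} {i : ℤ} {m : ℕ} (hm : 0 < m) :
    (∃ a ∈ X.side.fib m, X.IsLtr x i a) ↔
      X.Bd x i ∧ X.Bd x (i + m) ∧ ∀ j, i < j → j < i + m → ¬ X.Bd x j := by
  constructor
  · rintro ⟨a, ha, h⟩
    have hl : X.side.len a = m := X.side.mem_fib.1 ha
    subst hl
    exact ⟨h.1, h.bd_end, fun j => h.not_bd⟩
  · rintro ⟨h1, h2, h3⟩
    obtain ⟨a, ha, hl⟩ := exists_isLtr h1 h2 (by omega) h3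
    exact ⟨a, X.side.mem_fib.2 (by change X.side.len a = m; omega), ha⟩

theorem fib_eq_empty {m : ℕ} (hm : m < X.k) : X.side.fib m = ∅ := by
  rw [Finset.eq_empty_iff_forall_notMem]
  intro a ha
  have hl : X.side.len a = m := X.side.mem_fib.1 ha
  have := X.k_le_len a
  omega

theorem P_eq_zero {m : ℕ} (hm : m < X.k) : X.side.P m = 0 := by
  rw [Side.P, X.fib_eq_empty hm, Finset.sum_empty]

theorem kap_succ (N : ℕ) : X.kap (N + 1) + ENNReal.ofReal (X.pi * X.side.P N) = X.kap N := by
  rw [← X.measure_passage (-N) N, kap, kap, ← measure_union]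
  · congr 1; ext x
    simp only [Set.mem_union, Set.mem_ofPred_eq]
    constructor
    · rintro (h | ⟨a, ha, h⟩)
      · exact h.mono (Nat.le_succ N)
      · have hl : X.side.len a = N := X.side.mem_fib.1 ha
        have := (h.cut_end_iff (N := N)).2 hl.ge
        rwa [hl, neg_add_cancel] at this
    · intro h
      by_cases hb : 0 < N ∧ X.Bd x (-N)
      · right
        rw [X.passage_iff hb.1]
        exact ⟨hb.2, by simpa using h.1, fun j h1 h2 => h.2 j (by omega) (by omega)⟩
      · left
        refine ⟨h.1, fun j h1 h2 hj => ?_⟩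
        by_cases hjN : j = -N
        · exact hb ⟨by omega, hjN ▸ hj⟩
        · exact h.2 j (by push_cast at h1; omega) h2 hj
  · rw [Set.disjoint_left]
    rintro x h1 ⟨a, ha, h⟩
    have hl : X.side.len a = N := X.side.mem_fib.1 ha
    have h1 : X.Cut (N + 1) x 0 := h1
    have := (h.cut_end_iff (N := N + 1)).1 (by rwa [hl, neg_add_cancel])
    omega
  · exact (X.win_passage _ _).measurableSet

/-- The event that a marker ends at `0` and none in the next `m` positions. -/
def Free (m : ℕ) (x : ℤ → A) : Prop := X.Bd x 0 ∧ ∀ j, 0 < j → j ≤ (m : ℤ) → ¬ X.Bd x j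

theorem win_free (m : ℕ) : Win (-X.k) m fun x => X.Free m x := by
  have key : ∀ x y : ℤ → A, (∀ i, -(X.k : ℤ) ≤ i → i < m → x i = y i) → X.Free m x → X.Free m y := by
    intro x y h ⟨h1, h2⟩
    have h0 := X.win_bd 0 x y fun i h3 h4 => h i (by omega) (by omega)
    simp only at h0
    exact ⟨h0 ▸ h1, fun j h3 h4 h5 =>
      h2 j h3 h4 (by
        have := X.win_bd j x y fun i h3 h4 => h i (by omega) (by omega)
        simp only at this; rwa [this])⟩
  exact fun x y h => propext ⟨key x y h, key y x fun i h1 h2 => (h i h1 h2).symm⟩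

theorem measure_free_zero : X.μ {x | X.Free 0 x} = ENNReal.ofReal X.pi := by
  rw [← X.measure_bd 0]
  congr 1; ext x
  simp only [Set.mem_ofPred_eq, Free, and_iff_left_iff_imp]
  intro _ j h1 h2; push_cast at h2; omega

theorem measure_free_succ (m : ℕ) :
    X.μ {x | X.Free (m + 1) x} + ENNReal.ofReal (X.pi * X.side.P (m + 1)) =
      X.μ {x | X.Free m x} := by
  rw [← X.measure_passage 0, ← measure_union]
  · congr 1; ext x
    simp only [Set.mem_union, Set.mem_ofPred_eq, X.passage_iff (Nat.succ_pos m), Free]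
    push_cast
    constructor
    · rintro (⟨h1, h2⟩ | ⟨h1, h2, h3⟩)
      · exact ⟨h1, fun j h3 h4 => h2 j h3 (by omega)⟩
      · exact ⟨h1, fun j h4 h5 => h3 j h4 (by omega)⟩
    · rintro ⟨h1, h2⟩
      by_cases hb : X.Bd x (0 + (m + 1))
      · exact .inr ⟨h1, hb, fun j h3 h4 => h2 j h3 (by omega)⟩
      · refine .inl ⟨h1, fun j h3 h4 h5 => ?_⟩
        by_cases hj : j = 0 + (m + 1)
        · exact hb (hj ▸ h5)
        · exact h2 j h3 (by omega) h5
  · rw [Set.disjoint_left]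
    intro x h1 h2
    have h1 : X.Free (m + 1) x := h1
    have h2 := (X.passage_iff (Nat.succ_pos m)).1 h2
    exact h1.2 _ (by push_cast; omega) (by omega) h2.2.1
  · exact (X.win_passage _ _).measurableSet

theorem measure_passage_eq_free (m : ℕ) :
    ENNReal.ofReal (X.pi * X.side.P (m + X.k)) = X.μ {x | X.Free m x} * ENNReal.ofReal X.pi := by
  have hk := X.k_pos
  rw [← X.measure_passage 0, ← X.measure_bd (m + X.k), μ,
    ← Win.measure_and X.prob (X.win_free m) (X.win_bd _) (.inl (by omega))]
  congr 1; ext x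
  simp only [Set.mem_ofPred_eq]
  rw [X.passage_iff (by omega)]
  push_cast
  rw [zero_add]
  constructor
  · rintro ⟨h1, h2, h3⟩
    exact ⟨⟨h1, fun j h4 h5 => h3 j h4 (by omega)⟩, h2⟩
  · rintro ⟨⟨h1, h2⟩, h3⟩
    refine ⟨h1, h3, fun j h4 h5 => ?_⟩
    by_cases hj : j ≤ m
    · exact h2 j h4 hj
    · exact fun hb => not_bd_of_close hb h5 (by omega) h3

variable {X}

section Pair
variable {B : Type*} [Fintype B] [MeasurableSpace B] [DiscreteMeasurableSpace B] {Y : Scheme B}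

theorem P_eq_of_free (hk : X.k = Y.k) (hpi : X.pi = Y.pi) {m : ℕ}
    (h : X.k ≤ m → X.μ {x | X.Free (m - X.k) x} = Y.μ {x | Y.Free (m - X.k) x}) :
    X.side.P m = Y.side.P m := by
  by_cases hm : m < X.k
  · rw [X.P_eq_zero hm, Y.P_eq_zero (by omega)]
  push Not at hm
  have h1 := X.measure_passage_eq_free (m - X.k)
  have h2 := Y.measure_passage_eq_free (m - X.k)
  rw [Nat.sub_add_cancel hm] at h1
  rw [← hk, Nat.sub_add_cancel hm, ← hpi, ← h hm, ← h1] at h2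
  rw [ENNReal.ofReal_eq_ofReal_iff (mul_nonneg X.pi_pos.le (Y.side.P_nonneg _))
    (mul_nonneg X.pi_pos.le (X.side.P_nonneg _))] at h2
  exact (mul_left_cancel₀ X.pi_pos.ne' h2).symm

theorem free_eq (hk : X.k = Y.k) (hpi : X.pi = Y.pi) (m : ℕ) :
    X.μ {x | X.Free m x} = Y.μ {x | Y.Free m x} := by
  induction m using Nat.strong_induction_on with
  | _ m ih =>
    rcases m with _ | m
    · rw [measure_free_zero, measure_free_zero, hpi]
    · have h1 := X.measure_free_succ m
      have h2 := Y.measure_free_succ m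
      rw [← ih m (Nat.lt_succ_self m), ← h1, ← hpi,
        ← P_eq_of_free hk hpi fun h => ih _ (by have := X.k_pos; omega)] at h2
      exact ((ENNReal.add_left_inj ENNReal.ofReal_ne_top).1 h2).symm

theorem P_eq (hk : X.k = Y.k) (hpi : X.pi = Y.pi) (m : ℕ) : X.side.P m = Y.side.P m :=
  P_eq_of_free hk hpi fun _ => free_eq hk hpi _

theorem kap_eq (hk : X.k = Y.k) (hpi : X.pi = Y.pi) : X.kap = Y.kap := by
  funext N
  induction N with
  | zero => rw [kap_zero, kap_zero, hpi]
  | succ N ih =>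
    have h1 := X.kap_succ N
    have h2 := Y.kap_succ N
    rw [← ih, ← h1, ← hpi, ← P_eq hk hpi] at h2
    exact ((ENNReal.add_left_inj ENNReal.ofReal_ne_top).1 h2).symm

end Pair

variable (X)

theorem measurableSet_blk (N : ℕ) (i : ℤ) (u : List X.Ltr) : MeasurableSet {x | X.Blk N x i u} :=
  (X.win_blk N i u).measurableSet

/-- The event that the origin is at position `d` of a block `u` of level `N` with `Q d u`. -/
def At (N : ℕ) (Q : ℕ → List X.Ltr → Prop) (x : ℤ → A) : Prop :=
  ∃ (d : ℕ) (u : List X.Ltr), X.Blk N x (-d) u ∧ d < (X.side.pat u).sum ∧ Q d u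

theorem measurableSet_at (N : ℕ) (Q : ℕ → List X.Ltr → Prop) : MeasurableSet {x | X.At N Q x} := by
  have : {x | X.At N Q x} = ⋃ (d : ℕ) (u : List X.Ltr),
      {x | X.Blk N x (-d) u} ∩ {_x | d < (X.side.pat u).sum ∧ Q d u} := by
    ext x; simp [At]
  rw [this]
  exact .iUnion fun d => .iUnion fun u => (X.measurableSet_blk _ _ _).inter (.const _)

theorem BP_eq (N : ℕ) (Q : ℕ → List X.Ltr → Prop) :
    Side.BP X.side X.kap N Q = X.μ {x | X.At N Q x} := by
  have h1 : {x | X.At N Q x} = ⋃ S : List ℕ, ⋃ d ∈ (if IsBlk N S then Finset.range S.sum else ∅),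
      ⋃ u ∈ (X.side.F S).filter (Q d), {x | X.Blk N x (-(d : ℕ)) u} := by
    ext x
    simp only [Set.mem_ofPred_eq, Set.mem_iUnion, At, Finset.mem_filter, Side.mem_F, exists_prop]
    constructor
    · rintro ⟨d, u, h, hd, hQ⟩
      exact ⟨X.side.pat u, d, by rw [if_pos h.2.1]; exact Finset.mem_range.2 hd, u, ⟨rfl, hQ⟩, h⟩
    · rintro ⟨_, d, hd, u, ⟨rfl, hQ⟩, h⟩
      rw [if_pos h.2.1] at hd
      exact ⟨d, u, h, Finset.mem_range.1 hd, hQ⟩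
  have key : ∀ {x d d' u u'}, X.Blk N x (-(d : ℕ)) u → X.Blk N x (-(d' : ℕ)) u' →
      d < (X.side.pat u).sum → d' < (X.side.pat u').sum → d = d' ∧ u = u' := by
    intro x d d' u u' h h' hd hd'
    have := h.unique h' (l := 0) (by omega) (by omega) (by omega) (by omega)
    exact ⟨by omega, this.2⟩
  rw [h1, measure_iUnion, Side.BP]
  · refine tsum_congr fun S => ?_
    rw [measure_biUnion_finset]
    · split_ifs with hS
      · refine Finset.sum_congr rfl fun d hd => ?_
        rw [measure_biUnion_finset]
        · rw [ENNReal.ofReal_sum_of_nonneg fun u _ => (X.side.W_pos u).le, Finset.mul_sum]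
          refine Finset.sum_congr rfl fun u hu => ?_
          rw [Finset.mem_filter, Side.mem_F] at hu
          rw [measure_blk]
          rw [hu.1]; exact hS
        · intro u hu u' hu' hne
          simp only [Finset.coe_filter, Side.mem_F, Set.mem_ofPred_eq] at hu hu'
          rw [Function.onFun, Set.disjoint_left]
          intro x hx hx'
          rw [Finset.mem_range] at hd
          exact hne (key hx hx' (by rwa [hu.1]) (by rwa [hu'.1])).2
        · exact fun u _ => X.measurableSet_blk _ _ _
      · simp
    · intro d hd d' hd' hne
      split_ifs at hd hd' with hS
      · simp only [Finset.coe_range, Set.mem_Iio] at hd hd'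
        rw [Function.onFun, Set.disjoint_left]
        intro x hx hx'
        simp only [Set.mem_iUnion, Finset.mem_filter, Side.mem_F, exists_prop] at hx hx'
        obtain ⟨u, ⟨hu, -⟩, hx⟩ := hx
        obtain ⟨u', ⟨hu', -⟩, hx'⟩ := hx'
        exact hne (key hx hx' (by rwa [hu]) (by rwa [hu'])).1
      · simp at hd
    · exact fun d _ => Finset.measurableSet_biUnion _ fun u _ => X.measurableSet_blk _ _ _
  · intro S S' hne
    rw [Function.onFun, Set.disjoint_left]
    intro x hx hx'
    simp only [Set.mem_iUnion, Finset.mem_filter, Side.mem_F, exists_prop] at hx hx'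
    obtain ⟨d, hd, u, ⟨rfl, -⟩, hx⟩ := hx
    obtain ⟨d', hd', u', ⟨rfl, -⟩, hx'⟩ := hx'
    have hx : X.Blk N x (-(d : ℕ)) u := hx
    have hx' : X.Blk N x (-(d' : ℕ)) u' := hx'
    rw [if_pos hx.2.1, Finset.mem_range] at hd
    rw [if_pos hx'.2.1, Finset.mem_range] at hd'
    exact hne (by rw [(key hx hx' hd hd').2])
  · intro S
    exact Finset.measurableSet_biUnion _ fun d _ =>
      Finset.measurableSet_biUnion _ fun u _ => X.measurableSet_blk _ _ _

end Scheme
end KS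

namespace KS
open scoped Classical
open ENNReal Filter Topology MeasureTheory ProbabilityTheory

namespace Scheme
variable {A : Type*} [Fintype A] [MeasurableSpace A] [DiscreteMeasurableSpace A] (X : Scheme A)

/-! ### Almost every point has cuts of all levels -/

theorem kap_pos (N : ℕ) : 0 < (X.kap N).toReal := by
  obtain ⟨u, -, hu, -, -, -, hN⟩ := X.rich N
  set a : X.Ltr := ⟨u, hu⟩
  refine ENNReal.toReal_pos ?_ (measure_ne_top _ _)
  refine (lt_of_lt_of_le ?_ (measure_mono (μ := X.μ) (s := {x | X.IsLtr x (-X.side.len a) a}) ?_)).ne'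
  · rw [measure_isLtr]
    exact ENNReal.ofReal_pos.2 (mul_pos X.pi_pos (X.side.wt_pos a))
  · intro x hx
    have hx : X.IsLtr x (-X.side.len a) a := hx
    have := (hx.cut_end_iff (N := N)).2 hN
    simpa using this

theorem ae_exists_of_win {f : (ℤ → A) → Prop} {a b : ℤ} (hf : Win a b f)
    (hpos : 0 < (X.μ {x | f x}).toReal) {σ : ℤ} (hσ : |σ| = 1) (c : ℤ) :
    ∀ᵐ x ∂X.μ, ∃ s : ℕ, f (sh (σ * s + c) x) := by
  have hw : Win a b fun x => if f x then (1 : ℝ) else 0 := fun x y h => by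
    have := hf x y h
    simp only [this]
  have hintegral : ∫ x, (if f x then (1 : ℝ) else 0) ∂bern X.p = (X.μ {x | f x}).toReal := by
    rw [← Measure.real, ← integral_indicator_one hf.measurableSet]
    simp [Set.indicator_apply, μ]
  filter_upwards [hw.lln_dir X.prob σ c hσ] with x hx
  by_contra hc
  push Not at hc
  obtain ⟨C, hC⟩ := hx _ (half_pos hpos)
  rw [hintegral] at hC
  obtain ⟨n, hn⟩ := exists_nat_gt (2 * C / (X.μ {x | f x}).toReal)
  have := hC n
  simp only [hc, if_false, Finset.sum_const_zero, zero_sub, abs_neg] at this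
  rw [abs_of_nonneg (by positivity)] at this
  rw [div_lt_iff₀ hpos] at hn
  linarith

/-- Every level has cuts on both sides of every position. -/
def Cuts (x : ℤ → A) : Prop :=
  ∀ (N : ℕ) (l : ℤ), (∃ i ≤ l, X.Cut N x i) ∧ ∃ i, l < i ∧ X.Cut N x i

theorem ae_cuts : ∀ᵐ x ∂X.μ, X.Cuts x := by
  refine ae_all_iff.2 fun N => ae_all_iff.2 fun l => ?_
  filter_upwards [X.ae_exists_of_win (X.win_cut N 0) (X.kap_pos N) (σ := -1) (by simp) l,
    X.ae_exists_of_win (X.win_cut N 0) (X.kap_pos N) (σ := 1) (by simp) (l + 1)] with x h1 h2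
  simp only [cut_sh, zero_add] at h1 h2
  obtain ⟨s, hs⟩ := h1
  obtain ⟨t, ht⟩ := h2
  exact ⟨⟨_, by omega, hs⟩, ⟨_, by omega, ht⟩⟩

variable {X} in
theorem cuts_sh {x : ℤ → A} {n : ℤ} (h : X.Cuts x) : X.Cuts (sh n x) := by
  intro N l
  obtain ⟨⟨i, hi, hc⟩, j, hj, hc'⟩ := h N (l + n)
  exact ⟨⟨i - n, by omega, by rw [cut_sh]; simpa using hc⟩,
    j - n, by omega, by rw [cut_sh]; simpa using hc'⟩

/-! ### The law of large numbers for blocks -/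

/-- Information of the letter that starts at the origin, if its length is at most `c`. -/
def G (c : ℕ) (x : ℤ → A) : ℝ :=
  ∑ m ∈ Finset.range (c + 1), ∑ a ∈ X.side.fib m, if X.IsLtr x 0 a then X.side.J a else 0

theorem win_G (c : ℕ) : Win (-X.k) c (X.G c) := by
  intro x y h
  refine Finset.sum_congr rfl fun m hm => Finset.sum_congr rfl fun a ha => ?_
  have hl : X.side.len a = m := X.side.mem_fib.1 ha
  rw [Finset.mem_range] at hm
  have := X.win_isLtr 0 a x y fun i h1 h2 => h i (by omega) (by omega)
  simp only at this
  simp only [this]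

variable {X}

theorem G_sh_eq_zero {c : ℕ} {x : ℤ → A} {i : ℤ} (h : ¬ X.Bd x i) : X.G c (sh i x) = 0 :=
  Finset.sum_eq_zero fun m _ => Finset.sum_eq_zero fun a _ => if_neg fun h' => h <| by
    have := h'.1
    rwa [bd_sh, zero_add] at this

theorem IsLtr.unique {x : ℤ → A} {i : ℤ} {a b : X.Ltr} (ha : X.IsLtr x i a) (hb : X.IsLtr x i b) :
    a = b := by
  have hl : X.side.len a = X.side.len b := by
    rcases lt_trichotomy (X.side.len a) (X.side.len b) with h | h | h
    · exact absurd ha.bd_end (hb.not_bd (by have := X.len_pos a; omega) (by omega))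
    · exact h
    · exact absurd hb.bd_end (ha.not_bd (by have := X.len_pos b; omega) (by omega))
  exact Subtype.ext (by rw [← ha.2, ← hb.2, hl])

theorem G_sh_eq {c : ℕ} {x : ℤ → A} {i : ℤ} {a : X.Ltr} (h : X.IsLtr x i a) :
    X.G c (sh i x) = if X.side.len a ≤ c then X.side.J a else 0 := by
  have h0 : ∀ b, X.IsLtr (sh i x) 0 b ↔ b = a := fun b => by
    rw [isLtr_sh, zero_add]
    exact ⟨fun hb => hb.unique h, fun hb => hb ▸ h⟩
  simp only [G, h0, Finset.sum_ite_eq', Side.mem_fib]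
  simp only [Finset.sum_ite_eq, Finset.mem_range, Nat.lt_succ_iff, Side.len]
  congr

theorem IsSp.sum_G {c : ℕ} {x : ℤ → A} {i : ℤ} {u : List X.Ltr} (h : X.IsSp x i u) :
    ∑ s ∈ Finset.range (X.side.pat u).sum, X.G c (sh (i + s) x) = X.side.Jc c u := by
  induction u generalizing i with
  | nil => simp [Side.Jc]
  | cons a u ih =>
    rw [isSp_cons] at h
    obtain ⟨m, hm⟩ : ∃ m, X.side.len a = m + 1 := ⟨_, (Nat.succ_pred_eq_of_pos (X.len_pos a)).symm⟩
    have h1 : X.side.Jc c (a :: u) = (if X.side.len a ≤ c then X.side.J a else 0) + X.side.Jc c u := by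
      simp [Side.Jc]
    rw [h1, ← ih h.2, Side.pat_cons, List.sum_cons, Finset.sum_range_add]
    congr 1
    · rw [hm, Finset.sum_range_succ', Finset.sum_eq_zero, zero_add]
      · have := G_sh_eq (c := c) h.1
        rw [hm] at this
        simpa using this
      · intro s hs
        rw [Finset.mem_range] at hs
        exact G_sh_eq_zero (h.1.not_bd (by omega) (by omega))
    · refine Finset.sum_congr rfl fun s _ => ?_
      push_cast
      rw [add_assoc]

variable (X)

def j (c : ℕ) : ℝ := ∫ x, X.G c x ∂X.μ

theorem lln (c : ℕ) {δ : ℝ} (hδ : 0 < δ) :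
    Tendsto (fun N => Side.BP X.side X.kap N (fun _ u => ¬ Side.Typ X.side c (X.j c) δ u)) atTop
      (𝓝 0) := by
  simp_rw [BP_eq]
  rw [← measure_empty (μ := X.μ)]
  refine tendsto_measure_of_ae_tendsto_indicator_of_isFiniteMeasure atTop MeasurableSet.empty
    (fun N => X.measurableSet_at _ _) ?_
  filter_upwards [(X.win_G c).lln X.prob] with x hx
  obtain ⟨C, hC⟩ := hx (δ / 2) (half_pos hδ)
  obtain ⟨n, hn⟩ := exists_nat_gt (2 * C / δ)
  filter_upwards [eventually_ge_atTop n] with N hN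
  simp only [Set.mem_empty_iff_false, iff_false]
  rintro ⟨d, u, hb, hd, hq⟩
  refine hq ?_
  have h1 := hC d ((X.side.pat u).sum - d)
  rw [Nat.add_sub_cancel' hd.le, hb.2.2.sum_G] at h1
  have h2 : (N : ℝ) ≤ (X.side.pat u).sum := by exact_mod_cast hb.2.1.le_sum
  have h3 : (n : ℝ) ≤ N := by exact_mod_cast hN
  rw [div_lt_iff₀ hδ] at hn
  rw [Side.Typ, mul_comm (X.j c)]
  refine h1.trans ?_
  nlinarith

variable {X}

theorem IsSp.exists_ltr {x : ℤ → A} {i : ℤ} {u : List X.Ltr} (h : X.IsSp x i u) {d : ℕ}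
    (hd : d < (X.side.pat u).sum) : ∃ (a : X.Ltr) (s : ℕ), X.IsLtr x (i + s) a ∧ s ≤ d ∧
      d < s + X.side.len a ∧ (X.side.flat u)[d]? = a.1[d - s]? ∧
      ∀ c, ¬ Side.Short c (X.side.pat u) d → c < X.side.len a := by
  induction u generalizing i d with
  | nil => simp at hd
  | cons a u ih =>
    rw [isSp_cons] at h
    simp only [Side.pat_cons, List.sum_cons, Side.Short, Side.flat_cons, sp_eq] at hd ⊢
    by_cases hda : d < X.side.len a
    · refine ⟨a, 0, by simpa using h.1, by omega, by omega, ?_, fun c hc => ?_⟩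
      · rw [List.getElem?_append_left (by rwa [← len_eq]), Nat.sub_zero]
      · rw [if_pos hda] at hc; omega
    · obtain ⟨b, s, h1, h2, h3, h4, h5⟩ := ih h.2 (d := d - X.side.len a) (by omega)
      refine ⟨b, s + X.side.len a, ?_, by omega, by omega, ?_, fun c hc => h5 c ?_⟩
      · convert h1 using 1; push_cast; ring
      · rw [List.getElem?_append_right (by rw [← len_eq]; omega), ← len_eq, h4]
        congr 1; omega
      · rwa [if_neg hda] at hc

theorem at_zero_of_not_short {x : ℤ → A} {c N : ℕ}
    (h : X.At N (fun d u => ¬ Side.Short c (X.side.pat u) d) x) :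
    X.At 0 (fun _ u => c < (X.side.pat u).sum) x := by
  obtain ⟨d, u, hb, hd, hq⟩ := h
  obtain ⟨a, s, h1, h2, h3, -, h4⟩ := hb.2.2.exists_ltr hd
  refine ⟨d - s, [a], ?_, ?_, ?_⟩
  · rw [blk_zero]; convert h1 using 1; push_cast [h2]; ring
  · simp; omega
  · simpa using h4 c hq

variable (X)

theorem tendsto_long : Tendsto (fun c => X.μ {x | X.At 0 (fun _ u => c < (X.side.pat u).sum) x})
    atTop (𝓝 0) := by
  rw [← measure_empty (μ := X.μ)]
  refine tendsto_measure_of_ae_tendsto_indicator_of_isFiniteMeasure atTop MeasurableSet.empty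
    (fun N => X.measurableSet_at _ _) (ae_of_all _ fun x => ?_)
  simp only [Set.mem_empty_iff_false, iff_false]
  by_cases h : ∃ d u, X.Blk 0 x (-(d : ℕ)) u ∧ d < (X.side.pat u).sum
  · obtain ⟨d, u, hb, hd⟩ := h
    filter_upwards [eventually_ge_atTop (X.side.pat u).sum] with c hc
    rintro ⟨d', u', hb', hd', hq⟩
    obtain ⟨-, rfl⟩ := hb.unique hb' (l := 0) (by omega) (by omega) (by omega) (by omega)
    omega
  · refine Eventually.of_forall fun c => ?_
    rintro ⟨d', u', hb', hd', hq⟩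
    exact h ⟨d', u', hb', hd'⟩

theorem short {ε : ℝ} (hε : 0 < ε) : ∃ c0, ∀ c ≥ c0, ∀ N,
    Side.BP X.side X.kap N (fun d u => ¬ Side.Short c (X.side.pat u) d) ≤ ENNReal.ofReal ε := by
  obtain ⟨c0, hc0⟩ := eventually_atTop.1
    (X.tendsto_long.eventually_le_const (ENNReal.ofReal_pos.2 hε))
  refine ⟨c0, fun c hc N => ?_⟩
  rw [BP_eq]
  exact (measure_mono fun x hx => at_zero_of_not_short hx).trans (hc0 c hc)

end Scheme
end KS

namespace KS
open scoped Classical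
open ENNReal Filter Topology MeasureTheory ProbabilityTheory

namespace Scheme
variable {A : Type*} [Fintype A] [MeasurableSpace A] [DiscreteMeasurableSpace A] (X : Scheme A)

/-! ### The entropy of the induced letters -/

theorem P_le_one (m : ℕ) : X.side.P m ≤ 1 := by
  have h1 : X.μ {x | ∃ a ∈ X.side.fib m, X.IsLtr x 0 a} ≤ X.μ {x | X.Bd x 0} :=
    measure_mono fun x ⟨a, _, h⟩ => h.1
  rw [measure_passage, measure_bd, ENNReal.ofReal_le_ofReal_iff X.pi_pos.le] at h1
  nlinarith [X.pi_pos]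

/-- Contribution of the letters of length `m` to the entropy. -/
def entL (m : ℕ) : ℝ := ∑ a ∈ X.side.fib m, X.pi * X.side.wt a * -Real.log (X.side.wt a)

/-- Contribution of the lengths to the entropy. -/
def entP (m : ℕ) : ℝ := X.pi * X.side.P m * -Real.log (X.side.P m)

theorem entL_sub_entP (m : ℕ) :
    X.entL m - X.entP m = ∑ a ∈ X.side.fib m, X.pi * X.side.wt a * X.side.J a := by
  have h : X.entP m = ∑ a ∈ X.side.fib m, X.pi * X.side.wt a * -Real.log (X.side.P m) := by
    rw [← Finset.sum_mul, ← Finset.mul_sum]; rfl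
  rw [h, entL, ← Finset.sum_sub_distrib]
  refine Finset.sum_congr rfl fun a ha => ?_
  have hl : X.side.len a = m := X.side.mem_fib.1 ha
  rw [Side.J, hl]; ring

theorem entP_nonneg (m : ℕ) : 0 ≤ X.entP m :=
  mul_nonneg (mul_nonneg X.pi_pos.le (X.side.P_nonneg m))
    (neg_nonneg.2 (Real.log_nonpos (X.side.P_nonneg m) (X.P_le_one m)))

theorem gap_nonneg (m : ℕ) : 0 ≤ X.entL m - X.entP m := by
  rw [entL_sub_entP]
  exact Finset.sum_nonneg fun a _ =>
    mul_nonneg (mul_nonneg X.pi_pos.le (X.side.wt_pos a).le) (X.side.J_nonneg a)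

theorem exists_gap_pos (c : ℕ) : ∃ m, c < m ∧ 0 < X.entL m - X.entP m := by
  obtain ⟨u, v, hu, hv, hne, hl, hc⟩ := X.rich (c + 1)
  set a : X.Ltr := ⟨u, hu⟩
  set b : X.Ltr := ⟨v, hv⟩
  have hab : a ≠ b := fun h => hne (congrArg Subtype.val h)
  have hlen : X.side.len b = X.side.len a := hl.symm
  have ha : a ∈ X.side.fib (X.side.len a) := X.side.mem_fib.2 rfl
  have hb : b ∈ X.side.fib (X.side.len a) := X.side.mem_fib.2 hlen
  refine ⟨X.side.len a, hc, ?_⟩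
  rw [entL_sub_entP]
  refine Finset.sum_pos' (fun a _ =>
    mul_nonneg (mul_nonneg X.pi_pos.le (X.side.wt_pos a).le) (X.side.J_nonneg a)) ⟨a, ha, ?_⟩
  refine mul_pos (mul_pos X.pi_pos (X.side.wt_pos a)) (sub_pos.2 (Real.log_lt_log (X.side.wt_pos a) ?_))
  have : ∑ e ∈ {a, b}, X.side.wt e ≤ X.side.P (X.side.len a) :=
    Finset.sum_le_sum_of_subset_of_nonneg (by intro e he; simp at he; rcases he with rfl | rfl <;> assumption)
      fun e _ _ => (X.side.wt_pos e).le
  rw [Finset.sum_pair hab] at this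
  have := X.side.wt_pos b
  linarith

theorem j_eq (c : ℕ) : X.j c = ∑ m ∈ Finset.range (c + 1), (X.entL m - X.entP m) := by
  have hw : ∀ a : X.Ltr, Integrable (fun x => if X.IsLtr x 0 a then X.side.J a else 0) X.μ := fun a =>
    Win.integrable X.prob (a := 0 - X.k) (b := 0 + X.side.len a) fun x y h => by
      have := X.win_isLtr 0 a x y h
      simp only at this
      simp only [this]
  unfold j G
  rw [integral_finset_sum _ fun m _ => integrable_finset_sum _ fun a _ => hw a]
  refine Finset.sum_congr rfl fun m _ => ?_
  rw [integral_finset_sum _ fun a _ => hw a, entL_sub_entP]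
  refine Finset.sum_congr rfl fun a _ => ?_
  have h1 : ∀ x, (if X.IsLtr x 0 a then X.side.J a else 0) =
      Set.indicator {x | X.IsLtr x 0 a} (fun _ => X.side.J a) x := fun x => by
    simp [Set.indicator_apply]
  simp_rw [h1]
  rw [integral_indicator_const _ (X.win_isLtr 0 a).measurableSet, Measure.real, measure_isLtr,
    ENNReal.toReal_ofReal (mul_nonneg X.pi_pos.le (X.side.wt_pos a).le), smul_eq_mul]

theorem sum_getElem_eq_count (l : List A) (b : A) :
    ∑ d ∈ Finset.range l.length, (if l[d]? = some b then (1 : ℝ) else 0) = l.count b := by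
  induction l with
  | nil => simp
  | cons a l ih =>
    rw [List.length_cons, Finset.sum_range_succ', List.count_cons]
    simp only [List.getElem?_cons_succ, ih, List.getElem?_cons_zero, Option.some.injEq, beq_iff_eq]
    push_cast
    congr

/-- Expected number of occurrences of `b` in a letter of length `m` starting at the origin. -/
def freq (b : A) (m : ℕ) : ℝ := ∑ a ∈ X.side.fib m, X.pi * X.side.wt a * a.1.count b

theorem freq_nonneg (b : A) (m : ℕ) : 0 ≤ X.freq b m :=
  Finset.sum_nonneg fun a _ =>
    mul_nonneg (mul_nonneg X.pi_pos.le (X.side.wt_pos a).le) (Nat.cast_nonneg _)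

theorem BP_zero (b : A) : Side.BP X.side X.kap 0 (fun d u => (X.side.flat u)[d]? = some b) =
    ∑' m, ENNReal.ofReal (X.freq b m) := by
  have hinj : Function.Injective fun m : ℕ => [m] := fun m n h => by simpa using h
  rw [Side.BP, ← hinj.tsum_eq]
  · refine tsum_congr fun m => ?_
    rw [if_pos (isBlk_zero.2 ⟨m, rfl⟩), kap_zero]
    simp_rw [← ENNReal.ofReal_mul X.pi_pos.le]
    rw [← ENNReal.ofReal_sum_of_nonneg fun d _ => mul_nonneg X.pi_pos.le
      (Finset.sum_nonneg fun u _ => (X.side.W_pos u).le)]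
    congr 1
    simp_rw [Finset.sum_filter, Side.sum_F_cons]
    simp only [Side.F, Finset.sum_singleton, Side.W_cons, Side.W_nil, mul_one, Side.flat_cons,
      Side.flat_nil, List.append_nil, List.sum_singleton]
    rw [← Finset.mul_sum, Finset.sum_comm, Finset.mul_sum, freq]
    refine Finset.sum_congr rfl fun a ha => ?_
    have hl : X.side.len a = m := X.side.mem_fib.1 ha
    rw [← sum_getElem_eq_count, Finset.mul_sum, Finset.mul_sum, ← hl, len_eq]
    refine Finset.sum_congr rfl fun d _ => ?_
    rw [mul_ite, mul_ite, mul_one, mul_zero, mul_zero]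
    rfl
  · intro S hS
    by_contra h
    refine hS (if_neg fun hb => h ?_)
    obtain ⟨m, rfl⟩ := isBlk_zero.1 hb
    exact ⟨m, rfl⟩

theorem measure_coord (b : A) : X.μ {x | x 0 = b} = ENNReal.ofReal (X.p b) := by
  have := bern_wd X.prob 0 [b]
  simpa [wd, μ] using this

theorem hasSum_freq (b : A) : HasSum (X.freq b) (X.p b) := by
  have h1 : X.μ {x | X.At 0 (fun d u => (X.side.flat u)[d]? = some b) x} = X.μ {x | x 0 = b} := by
    refine measure_congr ?_
    filter_upwards [X.ae_cuts] with x hx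
    refine propext ?_
    obtain ⟨i, u, hb, h1, h2⟩ := exists_blk (l := 0) (hx 0 0).1 (hx 0 0).2
    have key : ∀ (d : ℕ) (u : List X.Ltr), X.Blk 0 x (-d) u → d < (X.side.pat u).sum →
        ((X.side.flat u)[d]? = some b ↔ x 0 = b) := by
      intro d u hb hd
      rw [← hb.2.2.2, getElem?_wd _ _ (by rwa [Side.length_flat])]
      simp
    constructor
    · rintro ⟨d, u, hb, hd, hq⟩
      exact (key d u hb hd).1 hq
    · intro hq
      obtain ⟨d, rfl⟩ : ∃ d : ℕ, i = -d := ⟨(-i).toNat, by omega⟩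
      exact ⟨d, u, hb, by omega, (key d u hb (by omega)).2 hq⟩
  rw [← BP_eq, BP_zero, measure_coord] at h1
  have h2 := ENNReal.hasSum_toReal (f := fun m => ENNReal.ofReal (X.freq b m)) (by rw [h1]; simp)
  rw [← ENNReal.tsum_toReal_eq fun _ => ENNReal.ofReal_ne_top, h1,
    ENNReal.toReal_ofReal (X.prob.1 b).le] at h2
  simpa only [ENNReal.toReal_ofReal (X.freq_nonneg b _)] using h2

theorem log_prod (l : List A) :
    Real.log (l.map X.p).prod = ∑ b, (l.count b : ℝ) * Real.log (X.p b) := by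
  induction l with
  | nil => simp
  | cons a l ih =>
    rw [List.map_cons, List.prod_cons, Real.log_mul (X.prob.1 a).ne' (X.prod_pos l).ne', ih]
    simp only [List.count_cons, beq_iff_eq, Nat.cast_add, add_mul, Finset.sum_add_distrib,
      Nat.cast_ite, Nat.cast_one, Nat.cast_zero, ite_mul, one_mul, zero_mul]
    rw [Finset.sum_ite_eq]
    simp [add_comm]

theorem hasSum_entL : HasSum X.entL (vecEntropy X.p) := by
  have h1 : vecEntropy X.p = ∑ b, -Real.log (X.p b) * X.p b := by
    rw [vecEntropy, ← Finset.sum_neg_distrib]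
    exact Finset.sum_congr rfl fun b _ => by ring
  have h2 : X.entL = fun m => ∑ b, -Real.log (X.p b) * X.freq b m := by
    funext m
    simp_rw [freq, Finset.mul_sum]
    rw [Finset.sum_comm]
    refine Finset.sum_congr rfl fun a _ => ?_
    have : Real.log (X.side.wt a) = ∑ b, (a.1.count b : ℝ) * Real.log (X.p b) := X.log_prod a.1
    rw [this, ← Finset.sum_neg_distrib, Finset.mul_sum]
    exact Finset.sum_congr rfl fun b _ => by ring
  rw [h1, h2]
  exact hasSum_sum fun b _ => (X.hasSum_freq b).mul_left _

theorem summable_entP : Summable X.entP :=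
  X.hasSum_entL.summable.of_nonneg_of_le X.entP_nonneg fun m => sub_nonneg.1 (X.gap_nonneg m)

/-- The entropy of the letters conditioned on their lengths. -/
def h : ℝ := vecEntropy X.p - ∑' m, X.entP m

theorem hasSum_gap : HasSum (fun m => X.entL m - X.entP m) X.h :=
  X.hasSum_entL.sub X.summable_entP.hasSum

theorem j_lt (c : ℕ) : X.j c < X.h := by
  obtain ⟨m, hm, hpos⟩ := X.exists_gap_pos c
  refine lt_of_lt_of_le ?_ (sum_le_hasSum (Finset.range (m + 1)) (fun i _ => X.gap_nonneg i) X.hasSum_gap)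
  rw [j_eq]
  exact Finset.sum_lt_sum_of_subset (i := m) (Finset.range_mono (by omega)) (by simp) (by simp; omega)
    hpos fun i _ _ => X.gap_nonneg i

theorem h_pos : 0 < X.h :=
  lt_of_le_of_lt (by rw [j_eq]; exact Finset.sum_nonneg fun i _ => X.gap_nonneg i) (X.j_lt 0)

theorem hyp : Side.Hyp X.side X.kap X.h X.j where
  bp_true N := by rw [BP_eq]; exact prob_le_one
  lln c δ hδ := X.lln c hδ
  short ε hε := X.short hε
  j_lt := X.j_lt
  j_tendsto := by
    simp_rw [funext X.j_eq]
    exact X.hasSum_gap.tendsto_sum_nat.comp (tendsto_add_atTop_nat 1)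

end Scheme

theorem Scheme.h_eq {A B : Type*} [Fintype A] [MeasurableSpace A] [DiscreteMeasurableSpace A]
    [Fintype B] [MeasurableSpace B] [DiscreteMeasurableSpace B] {X : Scheme A} {Y : Scheme B}
    (hk : X.k = Y.k) (hpi : X.pi = Y.pi) (hH : vecEntropy X.p = vecEntropy Y.p) : X.h = Y.h := by
  simp only [h, hH, entP, hpi, P_eq hk hpi]

end KS

namespace KS
open scoped Classical
open ENNReal Filter Topology MeasureTheory ProbabilityTheory

/-! ### The code defined by a tower -/

namespace Scheme
variable {A B : Type*} [Fintype A] [MeasurableSpace A] [DiscreteMeasurableSpace A]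
  [Fintype B] [MeasurableSpace B] [DiscreteMeasurableSpace B]
  {X : Scheme A} {Y : Scheme B} {κ : ℕ → ℝ≥0∞} {N : ℕ → ℕ} {R : ℕ → List X.Ltr → List Y.Ltr → Prop}
  {x : ℤ → A} {y : ℤ → B}

theorem forall₂_append_cons {α β : Type*} {Q : α → β → Prop} {s1 s3 : List α} {b : α} {t : List β}
    (h : List.Forall₂ Q (s1 ++ b :: s3) t) :
    ∃ t1 c t3, t = t1 ++ c :: t3 ∧ List.Forall₂ Q s1 t1 ∧ Q b c := by
  induction s1 generalizing t with
  | nil =>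
    cases h with
    | cons h1 h2 => exact ⟨[], _, _, rfl, .nil, h1⟩
  | cons a s1 ih =>
    cases h with
    | cons h1 h2 =>
      obtain ⟨t1, c, t3, rfl, h3, h4⟩ := ih h2
      exact ⟨_ :: t1, c, t3, rfl, .cons h1 h3, h4⟩

theorem rel_sub_succ (T : Side.IsTower X.side Y.side κ N R) {r : ℕ} {i i' l : ℤ} {U u : List X.Ltr}
    {V : List Y.Ltr} (hU : X.Blk (N (r + 1)) x i' U) (hV : R (r + 1) U V) (hu : X.Blk (N r) x i u)
    (hl' : i' ≤ l) (hr' : l < i' + (X.side.pat U).sum) (hl : i ≤ l)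
    (hr : l < i + (X.side.pat u).sum) :
    ∃ u1 u3 v1 v v3, U = u1 ++ (u ++ u3) ∧ V = v1 ++ (v ++ v3) ∧ R r u v ∧
      Y.side.pat v1 = X.side.pat u1 ∧ i = i' + (X.side.pat u1).sum := by
  obtain ⟨u1, u3, rfl, hc, hi⟩ := hU.exists_sub (T.mono (Nat.lt_succ_self r)).le hu hl' hr' hl hr
  have hs := T.nest r _ _ hV
  rw [Side.Star, split_append _ hc, split_append_blk _ hu.2.1] at hs
  obtain ⟨t1, v, t3, ht, h1, h2⟩ := forall₂_append_cons hs
  refine ⟨u1, u3, t1.flatten, v, t3.flatten, rfl, ?_, h2, ?_, hi⟩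
  · rw [← flatten_split Y.side.len (N := N r) V, ht]; simp
  · rw [← flatten_split X.side.len (N := N r) u1]
    clear ht hs
    generalize split X.side.len (N r) u1 = s1 at h1
    induction h1 with
    | nil => rfl
    | cons h _ ih =>
      rw [List.flatten_cons, List.flatten_cons, Side.pat_append, Side.pat_append, ih, T.pat_eq _ _ _ h]

theorem rel_sub (T : Side.IsTower X.side Y.side κ N R) {r r' : ℕ} (hrr : r ≤ r') {i i' l : ℤ}
    {U u : List X.Ltr} {V : List Y.Ltr} (hU : X.Blk (N r') x i' U) (hV : R r' U V)
    (hu : X.Blk (N r) x i u) (hl' : i' ≤ l) (hr' : l < i' + (X.side.pat U).sum) (hl : i ≤ l)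
    (hr : l < i + (X.side.pat u).sum) :
    ∃ u1 u3 v1 v v3, U = u1 ++ (u ++ u3) ∧ V = v1 ++ (v ++ v3) ∧ R r u v ∧
      Y.side.pat v1 = X.side.pat u1 ∧ i = i' + (X.side.pat u1).sum := by
  induction r', hrr using Nat.le_induction generalizing i' U V with
  | base =>
    obtain ⟨rfl, rfl⟩ := hU.unique hu hl' hr' hl hr
    exact ⟨[], [], [], V, [], by simp, by simp, hV, rfl, by simp⟩
  | succ r' hrr ih =>
    have hm := (T.mono (Nat.lt_succ_self r')).le
    obtain ⟨_, u', _, _, _, h3, h4, h5⟩ :=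
      exists_sub_blk (hU.2.1.cpl hm) rfl (hU.1.mono hm) hU.2.2 hl' hr'
    obtain ⟨a1, a3, b1, v', b3, rfl, rfl, h6, h7, h8⟩ := rel_sub_succ T hU hV h3 hl' hr' h4 h5
    obtain ⟨c1, c3, d1, v, d3, rfl, rfl, h9, h10, h11⟩ := ih h3 h6 h4 h5
    refine ⟨a1 ++ c1, c3 ++ a3, b1 ++ d1, v, d3 ++ b3, by simp, by simp, h9, by simp [h7, h10], ?_⟩
    rw [h11, h8]
    simp [-Nat.cast_list_sum]; ring

theorem getElem_flat_mid {α B : Type*} (Y : Side α B) {v1 v v3 : List α} {n d : ℕ} (hn : (Y.pat v1).sum = n)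
    (hd : d < (Y.pat v).sum) : (Y.flat (v1 ++ (v ++ v3)))[n + d]? = (Y.flat v)[d]? := by
  subst hn
  rw [Side.flat_append, Side.flat_append, List.getElem?_append_right (by rw [Side.length_flat]; omega),
    Side.length_flat, Nat.add_sub_cancel_left, List.getElem?_append_left (by rwa [Side.length_flat])]

variable (X Y N R) in
/-- Some level of the tower determines the symbol `b` at position `l`. -/
def Val (x : ℤ → A) (l : ℤ) (b : B) : Prop :=
  ∃ (r d : ℕ) (u : List X.Ltr) (v : List Y.Ltr), X.Blk (N r) x (l - d) u ∧ d < (X.side.pat u).sum ∧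
    Side.Det Y.side (R r) u d ∧ R r u v ∧ (Y.side.flat v)[d]? = some b

theorem Val.sh {l n : ℤ} {b : B} : Val X Y N R (sh n x) l b ↔ Val X Y N R x (l + n) b := by
  simp only [Val, blk_sh]
  have : ∀ d : ℕ, l - d + n = l + n - d := fun d => by ring
  simp only [this]

theorem Det.getElem_eq (T : Side.IsTower X.side Y.side κ N R) {r r' d D : ℕ} (hrr : r ≤ r') {l : ℤ}
    {U u : List X.Ltr} {V v : List Y.Ltr} (hU : X.Blk (N r') x (l - D) U) (hV : R r' U V)
    (hD : D < (X.side.pat U).sum) (hu : X.Blk (N r) x (l - d) u) (hd : d < (X.side.pat u).sum)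
    (hdet : Side.Det Y.side (R r) u d) (hv : R r u v) :
    (Y.side.flat V)[D]? = (Y.side.flat v)[d]? := by
  obtain ⟨u1, u3, v1, v', v3, rfl, rfl, h1, h2, h3⟩ := rel_sub T hrr hU hV hu (l := l) (by omega)
    (by omega) (by omega) (by omega)
  rw [hdet v v' hv h1, ← getElem_flat_mid Y.side (v := v') (congrArg List.sum h2)
    (by rwa [T.pat_eq _ _ _ h1])]
  congr 1
  omega

theorem Val.unique (T : Side.IsTower X.side Y.side κ N R) {l : ℤ} {b b' : B}
    (h : Val X Y N R x l b) (h' : Val X Y N R x l b') : b = b' := by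
  obtain ⟨r, d, u, v, h1, h2, h3, h4, h5⟩ := h
  obtain ⟨r', d', u', v', h1', h2', h3', h4', h5'⟩ := h'
  rcases le_total r r' with hr | hr
  · have := Det.getElem_eq T hr h1' h4' h2' h1 h2 h3 h4
    rw [h5, h5'] at this
    exact (Option.some.inj this).symm
  · have := Det.getElem_eq T hr h1 h4 h2 h1' h2' h3' h4'
    rw [h5, h5'] at this
    exact Option.some.inj this

variable (X Y N R) in
/-- The code of the tower. -/
def code (x : ℤ → A) (l : ℤ) : B :=
  haveI := Y.nonempty_alphabet
  Classical.epsilon (Val X Y N R x l)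

theorem Val.code_eq (T : Side.IsTower X.side Y.side κ N R) {l : ℤ} {b : B}
    (h : Val X Y N R x l b) : code X Y N R x l = b :=
  Val.unique T (Classical.epsilon_spec_aux Y.nonempty_alphabet _ ⟨b, h⟩) h

theorem code_sh (n : ℤ) : code X Y N R (sh n x) = sh n (code X Y N R x) := by
  funext l
  simp only [code, KS.sh]
  congr 1
  funext b
  exact propext Val.sh

variable (X Y N R) in
/-- All coordinates are determined. -/
def Good (x : ℤ → A) : Prop := X.Cuts x ∧ ∀ l, ∃ b, Val X Y N R x l b

theorem Good.sh_iff {n : ℤ} : Good X Y N R (sh n x) ↔ Good X Y N R x := by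
  have key : ∀ (x : ℤ → A) n, Good X Y N R x → Good X Y N R (sh n x) := fun x n h =>
    ⟨cuts_sh h.1, fun l => by simp only [Val.sh]; exact h.2 _⟩
  refine ⟨fun h => ?_, key x n⟩
  have := key _ (-n) h
  have hx : sh (-n) (sh n x) = x := by funext i; simp [KS.sh]
  rwa [hx] at this

theorem exists_rel (T : Side.IsTower X.side Y.side κ N R) {r : ℕ} {u : List X.Ltr}
    (hu : IsBlk (N r) (X.side.pat u)) : ∃ v, R r u v := by
  obtain ⟨v, -, hv⟩ := (T.coup r _ hu).exists_right ((X.side.mem_F).2 rfl) (X.side.W_pos u)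
  exact ⟨v, hv⟩

theorem Good.exists_wd (T : Side.IsTower X.side Y.side κ N R) (hx : Good X Y N R x) {r : ℕ} {i : ℤ}
    {u : List X.Ltr} (hu : X.Blk (N r) x i u) :
    ∃ v, R r u v ∧ wd (code X Y N R x) i (Y.side.flat v).length = Y.side.flat v := by
  choose b hb using hx.2
  choose lev d u' v' h1 h2 h3 h4 h5 using hb
  set M := r + ∑ t ∈ Finset.range (X.side.pat u).sum, lev (i + t) with hM
  have hpos : 0 < (X.side.pat u).sum := by
    by_contra h0
    have := hu.2.1.ne_nil
    obtain ⟨a, u, rfl⟩ := List.exists_cons_of_ne_nil (l := u) (by rintro rfl; exact this rfl)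
    have := X.len_pos a
    simp at h0; omega
  obtain ⟨i', U, hU, hl', hr'⟩ := exists_blk (hx.1 (N M) i).1 (hx.1 (N M) i).2
  obtain ⟨V, hV⟩ := exists_rel T hU.2.1
  obtain ⟨u1, u3, v1, v, v3, rfl, rfl, h6, h7, h8⟩ := rel_sub T (r := r) (by omega) hU hV hu hl' hr' le_rfl
    (by omega)
  refine ⟨v, h6, (wd_eq_iff rfl).2 fun t ht => ?_⟩
  rw [Side.length_flat, T.pat_eq _ _ _ h6] at ht
  have hlev : lev (i + t) ≤ M := by
    have := Finset.single_le_sum (f := fun t : ℕ => lev (i + t)) (fun _ _ => Nat.zero_le _)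
      (Finset.mem_range.2 ht)
    omega
  have hb : code X Y N R x (i + t) = b (i + t) :=
    Val.code_eq T ⟨_, _, _, _, h1 _, h2 _, h3 _, h4 _, h5 _⟩
  have hi : i + t - ((X.side.pat u1).sum + t : ℕ) = i' := by push_cast [-Nat.cast_list_sum]; omega
  have := Det.getElem_eq T hlev (l := i + t) (D := (X.side.pat u1).sum + t) (by rwa [hi]) hV
    (by simp; omega) (h1 _) (h2 _) (h3 _) (h4 _)
  rw [h5, getElem_flat_mid Y.side (by rw [h7]) (by rwa [T.pat_eq _ _ _ h6])] at this
  rw [this, hb]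

theorem Cuts.exists_prev (hx : X.Cuts x) {n : ℕ} {i : ℤ} (hi : X.Cut n x i) :
    ∃ i' u, X.Blk n x i' u ∧ i' + (X.side.pat u).sum = i := by
  obtain ⟨i', u, hu, hl, hr⟩ := exists_blk (hx n (i - 1)).1 (hx n (i - 1)).2
  refine ⟨i', u, hu, ?_⟩
  by_contra hc
  exact hu.not_cut (j := i) (by omega) (by omega) hi

theorem bd_of_wd {i : ℤ} {v : List Y.Ltr} (hv : v ≠ [])
    (h : wd y i (Y.side.flat v).length = Y.side.flat v) : Y.Bd y (i + (Y.side.pat v).sum) := by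
  obtain ⟨v0, a, rfl⟩ := List.eq_nil_or_concat' v |>.resolve_left hv
  rw [Side.flat_append, wd_append_iff] at h
  have h2 := h.2
  simp only [Side.flat_cons, Side.flat_nil, List.append_nil, sp_eq] at h2
  have := a.2.1
  rw [← h2, suffix_wd_iff] at this
  have h3 := this.2
  rw [Bd]
  rw [Side.length_flat, ← len_eq] at h3
  simpa [-Nat.cast_list_sum, add_assoc, k] using h3

theorem Good.exists_blk (T : Side.IsTower X.side Y.side κ N R) (hx : Good X Y N R x) {r : ℕ} {i : ℤ}
    {u : List X.Ltr} (hu : X.Blk (N r) x i u) :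
    ∃ v, R r u v ∧ Y.Blk (N r) (code X Y N R x) i v := by
  have hbd : ∀ {i u}, X.Blk (N r) x i u → Y.Bd (code X Y N R x) i := by
    intro i u hu
    obtain ⟨i', u', hu', rfl⟩ := hx.1.exists_prev hu.1
    obtain ⟨v, hv, hw⟩ := hx.exists_wd T hu'
    have := bd_of_wd (Y := Y) (by
      rintro rfl
      have := T.pat_eq _ _ _ hv
      exact (T.blk _ _ _ hv).ne_nil (by rw [← this]; rfl)) hw
    rwa [T.pat_eq _ _ _ hv] at this
  have hsp : ∀ {i u}, X.Blk (N r) x i u → ∃ v, R r u v ∧ IsBlk (N r) (Y.side.pat v) ∧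
      Y.IsSp (code X Y N R x) i v := by
    intro i u hu
    obtain ⟨v, hv, hw⟩ := hx.exists_wd T hu
    exact ⟨v, hv, by rw [T.pat_eq _ _ _ hv]; exact hu.2.1, hbd hu, hw⟩
  obtain ⟨v, h1, h2, h3⟩ := hsp hu
  refine ⟨v, h1, ?_, h2, h3⟩
  obtain ⟨i', u', hu', rfl⟩ := hx.1.exists_prev hu.1
  obtain ⟨v', h1', h2', h3'⟩ := hsp hu'
  rw [← T.pat_eq _ _ _ h1']
  exact h3'.cut_end h2'

/-- The code of the tower is inverted by the code of the swapped tower. -/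
theorem code_code (T : Side.IsTower X.side Y.side κ N R) (hx : Good X Y N R x)
    (hy : Good Y X N (fun r v u => R r u v) (code X Y N R x)) :
    code Y X N (fun r v u => R r u v) (code X Y N R x) = x := by
  funext l
  obtain ⟨a, r, d, v, u', h1, h2, h3, h4, h5⟩ := hy.2 l
  refine Val.code_eq T.swap (b := x l) ⟨r, d, v, u', h1, h2, h3, h4, ?_⟩
  obtain ⟨i, u, hu, hl, hr⟩ := Scheme.exists_blk (hx.1 (N r) l).1 (hx.1 (N r) l).2
  obtain ⟨v', h6, h7⟩ := hx.exists_blk T hu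
  obtain ⟨rfl, rfl⟩ := h7.unique h1 (l := l) hl (by rwa [T.pat_eq _ _ _ h6]) (by omega) (by omega)
  rw [h3 u' u h4 h6, ← hu.2.2.2, getElem?_wd _ _ (by rw [Side.length_flat]; omega)]
  congr 2
  omega

end Scheme
end KS

namespace KS
open scoped Classical
open ENNReal Filter Topology MeasureTheory ProbabilityTheory

/-! ### Measure-theoretic properties of the code of a tower -/

namespace Scheme
variable {A B : Type*} [Fintype A] [MeasurableSpace A] [DiscreteMeasurableSpace A]
  [Fintype B] [MeasurableSpace B] [DiscreteMeasurableSpace B]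
  {X : Scheme A} {Y : Scheme B} {N : ℕ → ℕ} {R : ℕ → List X.Ltr → List Y.Ltr → Prop}

theorem measurableSet_val (l : ℤ) (b : B) : MeasurableSet {x | Val X Y N R x l b} := by
  have : {x | Val X Y N R x l b} = ⋃ (r : ℕ) (d : ℕ) (u : List X.Ltr) (v : List Y.Ltr),
      {x | X.Blk (N r) x (l - d) u} ∩ {_x | d < (X.side.pat u).sum ∧
        Side.Det Y.side (R r) u d ∧ R r u v ∧ (Y.side.flat v)[d]? = some b} := by
    ext x; simp [Val]
  rw [this]
  exact .iUnion fun r => .iUnion fun d => .iUnion fun u => .iUnion fun v =>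
    (X.measurableSet_blk _ _ _).inter (.const _)

theorem measurable_code : Measurable (code X Y N R) := by
  refine measurable_pi_lambda _ fun l => ?_
  haveI := Y.nonempty_alphabet
  have h1 : Measurable fun x b => Val X Y N R x l b :=
    measurable_pi_lambda _ fun b => measurableSet_setOfPred.1 (measurableSet_val l b)
  exact (Measurable.of_discrete (f := fun P : B → Prop => Classical.epsilon P)).comp h1

theorem measurableSet_good : MeasurableSet {x | Good X Y N R x} := by
  have h1 : {x | Good X Y N R x} =
      (⋂ (n : ℕ) (l : ℤ), ((⋃ i : ℤ, {x | X.Cut n x i} ∩ {_x | i ≤ l}) ∩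
        ⋃ i : ℤ, {x | X.Cut n x i} ∩ {_x | l < i})) ∩ ⋂ l : ℤ, ⋃ b, {x | Val X Y N R x l b} := by
    ext x
    simp [Good, Cuts, and_comm]
  have hc : ∀ n i, MeasurableSet {x | X.Cut n x i} := fun n i => (X.win_cut n i).measurableSet
  rw [h1]
  exact (MeasurableSet.iInter fun n => .iInter fun l =>
    (MeasurableSet.iUnion fun i => (hc n i).inter (.const _)).inter
      (.iUnion fun i => (hc n i).inter (.const _))).inter
    (.iInter fun l => .iUnion fun b => measurableSet_val l b)

theorem exists_val_of_not_at {κ : ℕ → ℝ≥0∞} (T : Side.IsTower X.side Y.side κ N R) {x : ℤ → A}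
    (hx : X.Cuts x) {r : ℕ} (h : ¬ X.At (N r) (fun d u => ¬ Side.Det Y.side (R r) u d) x) :
    ∃ b, Val X Y N R x 0 b := by
  obtain ⟨i, u, hu, hl, hr⟩ := exists_blk (hx (N r) 0).1 (hx (N r) 0).2
  obtain ⟨d, rfl⟩ : ∃ d : ℕ, i = -d := ⟨(-i).toNat, by omega⟩
  have hdet : Side.Det Y.side (R r) u d := by
    by_contra hc
    exact h ⟨d, u, hu, by omega, hc⟩
  obtain ⟨v, hv⟩ := exists_rel T hu.2.1
  have hd : d < (Y.side.flat v).length := by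
    rw [Side.length_flat, T.pat_eq _ _ _ hv]; omega
  exact ⟨(Y.side.flat v)[d], r, d, u, v, by simpa using hu, by omega, hdet, hv,
    List.getElem?_eq_getElem hd⟩

theorem ae_good (T : Side.IsTower X.side Y.side X.kap N R) : ∀ᵐ x ∂X.μ, Good X Y N R x := by
  have h0 : ∀ᵐ x ∂X.μ, ∃ b, Val X Y N R x 0 b := by
    have key : ∀ ε : ℝ, 0 < ε → X.μ {x | ¬ ∃ b, Val X Y N R x 0 b} ≤ ENNReal.ofReal ε := by
      intro ε hε
      obtain ⟨r, -, hr⟩ := T.detA ε hε 0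
      rw [BP_eq] at hr
      refine le_trans (measure_mono_ae ?_) hr
      filter_upwards [X.ae_cuts] with x hx hv
      by_contra hc
      exact hv (exists_val_of_not_at T hx hc)
    rw [ae_iff]
    refine le_antisymm (ENNReal.le_of_forall_pos_le_add fun ε hε _ => ?_) bot_le
    simpa using key ε hε
  have h1 : ∀ l : ℤ, ∀ᵐ x ∂X.μ, ∃ b, Val X Y N R x l b := fun l => by
    filter_upwards [ae_sh X.prob l h0] with x hx
    simpa only [Val.sh, zero_add] using hx
  filter_upwards [X.ae_cuts, ae_all_iff.2 h1] with x h2 h3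
  exact ⟨h2, h3⟩

variable (X) in
/-- The block of level `n` at the origin contains `[-m, m)`. -/
theorem tendsto_not_inside (m : ℕ) : Tendsto
    (fun n => X.μ {x | ¬ X.At n (fun d u => m ≤ d ∧ d + m ≤ (X.side.pat u).sum) x}) atTop (𝓝 0) := by
  rw [← measure_empty (μ := X.μ)]
  refine tendsto_measure_of_ae_tendsto_indicator_of_isFiniteMeasure atTop MeasurableSet.empty
    (fun n => (X.measurableSet_at _ _).compl) ?_
  filter_upwards [X.ae_cuts] with x hx
  obtain ⟨j, hj, hc⟩ := (hx 0 (-m - 1)).1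
  filter_upwards [eventually_ge_atTop (m - j + 1).toNat] with n hn
  simp only [Set.mem_empty_iff_false, iff_false]
  intro h
  refine h ?_
  have hno : ∀ i : ℤ, -m ≤ i → i ≤ m → ¬ X.Cut n x i := fun i h1 h2 h3 =>
    h3.2 j (by omega) (by omega) hc.1
  obtain ⟨i, u, hu, hl, hr⟩ := exists_blk (hx n 0).1 (hx n 0).2
  obtain ⟨d, rfl⟩ : ∃ d : ℕ, i = -d := ⟨(-i).toNat, by omega⟩
  refine ⟨d, u, hu, by omega, ?_, ?_⟩
  · by_contra hc'
    exact hno _ (by omega) (by omega) hu.1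
  · by_contra hc'
    exact hno _ (by omega) (by omega) hu.cut_end

theorem le_measure_code (T : Side.IsTower X.side Y.side X.kap N R) (hκ : X.kap = Y.kap)
    {f : (ℤ → B) → Prop} {m : ℕ} (hf : Win (-m) m f) {ε : ℝ} (hε : 0 < ε) :
    Y.μ {y | f y} ≤ X.μ {x | f (code X Y N R x)} + ENNReal.ofReal ε := by
  set δ : ℝ := ε / (2 * m + 1) with hδ
  have hδ0 : 0 < δ := by positivity
  have hT : Tendsto N atTop atTop := T.mono.tendsto_atTop
  obtain ⟨r0, hr0⟩ := eventually_atTop.1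
    (((Y.tendsto_not_inside m).comp hT).eventually_le_const (ENNReal.ofReal_pos.2 hδ0))
  obtain ⟨r, hr, hdet⟩ := T.detA δ hδ0 r0
  rw [BP_eq] at hdet
  set QB : ℕ → List Y.Ltr → Prop := fun d v => m ≤ d ∧ d + m ≤ (Y.side.pat v).sum ∧
    ∃ y, f y ∧ ∀ i : ℤ, -m ≤ i → i < m → (Y.side.flat v)[(d + i).toNat]? = some (y i) with hQB
  have h1 : Y.μ {y | f y} ≤ Y.μ {y | Y.At (N r) QB y} + ENNReal.ofReal δ := by
    refine le_trans (measure_mono ?_) ((measure_union_le _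
      {y | ¬ Y.At (N r) (fun d u => m ≤ d ∧ d + m ≤ (Y.side.pat u).sum) y}).trans
        (add_le_add_right (hr0 r hr) _))
    intro y hy
    by_cases hin : Y.At (N r) (fun d u => m ≤ d ∧ d + m ≤ (Y.side.pat u).sum) y
    · obtain ⟨d, v, hv, hd, h2, h3⟩ := hin
      refine .inl ⟨d, v, hv, hd, h2, h3, y, hy, fun i hi hi' => ?_⟩
      rw [← hv.2.2.2, getElem?_wd _ _ (by rw [Side.length_flat]; omega)]
      congr 2; omega
    · exact .inr hin
  have h2 : Y.μ {y | Y.At (N r) QB y} ≤ X.μ {x | X.At (N r) (fun d u => ∃ v, R r u v ∧ QB d v) x} := by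
    rw [← BP_eq, ← BP_eq, hκ, ← one_mul (Side.BP X.side _ _ _), ← ENNReal.ofReal_one]
    refine Side.BP_le_mul zero_le_one fun S hS d => ?_
    rw [one_mul]
    exact (T.coup r S hS).transport fun u _ v _ h h' => ⟨v, h, h'⟩
  have h3 : X.μ {x | X.At (N r) (fun d u => ∃ v, R r u v ∧ QB d v) x} ≤
      X.μ ({x | f (code X Y N R x)} ∪ ⋃ i ∈ Finset.Ico (-m : ℤ) m,
        {x | sh i x ∈ {x | X.At (N r) (fun d u => ¬ Side.Det Y.side (R r) u d) x}}) := by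
    refine measure_mono_ae ?_
    filter_upwards [ae_good T] with x hx hAt
    obtain ⟨d, u, hu, hd, v, hv, hmd, hdm, y, hy, hyv⟩ := hAt
    by_cases hall : ∀ i : ℤ, -m ≤ i → i < m → Side.Det Y.side (R r) u (d + i).toNat
    · left
      obtain ⟨v', hv', hblk⟩ := hx.exists_blk T hu
      have := hf (code X Y N R x) y fun i hi hi' => by
        have h4 := hall i hi hi' v v' hv hv'
        rw [hyv i hi hi', ← hblk.2.2.2, getElem?_wd _ _ (by
          rw [Side.length_flat, T.pat_eq _ _ _ hv']
          rw [T.pat_eq _ _ _ hv] at hdm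
          omega)] at h4
        rw [Option.some.inj h4]
        congr 1; omega
      exact cast this.symm hy
    · right
      push Not at hall
      obtain ⟨i, hi, hi', hnd⟩ := hall
      refine Set.mem_biUnion (Finset.mem_coe.2 (Finset.mem_Ico.2 ⟨hi, hi'⟩)) ?_
      rw [T.pat_eq _ _ _ hv] at hdm
      refine ⟨(d + i).toNat, u, ?_, by omega, hnd⟩
      rw [blk_sh]
      convert hu using 1
      omega
  have h4 : X.μ (⋃ i ∈ Finset.Ico (-m : ℤ) m,
        {x | sh i x ∈ {x | X.At (N r) (fun d u => ¬ Side.Det Y.side (R r) u d) x}}) ≤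
      ENNReal.ofReal (2 * m * δ) := by
    refine (measure_biUnion_finset_le _ _).trans ?_
    calc _ ≤ ∑ i ∈ Finset.Ico (-m : ℤ) m, ENNReal.ofReal δ := Finset.sum_le_sum fun i _ => by
          rw [μ, bern_sh X.prob i (X.measurableSet_at _ _)]; exact hdet
      _ = ENNReal.ofReal (2 * m * δ) := by
          rw [Finset.sum_const, Int.card_Ico, nsmul_eq_mul, ENNReal.ofReal_mul (by positivity)]
          congr 1
          rw [show ((m : ℤ) - -m).toNat = 2 * m by omega]
          rw [show (2 * (m : ℝ)) = ((2 * m : ℕ) : ℝ) by push_cast; ring, ENNReal.ofReal_natCast]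
  calc Y.μ {y | f y} ≤ (X.μ {x | f (code X Y N R x)} + ENNReal.ofReal (2 * m * δ)) + ENNReal.ofReal δ :=
        h1.trans (add_le_add_left (h2.trans (h3.trans ((measure_union_le _ _).trans
          (add_le_add_right h4 _)))) _)
    _ = _ := by
        rw [add_assoc, ← ENNReal.ofReal_add (by positivity) hδ0.le]
        congr 2
        rw [hδ]; field_simp

theorem measure_code_eq (T : Side.IsTower X.side Y.side X.kap N R) (hκ : X.kap = Y.kap)
    {f : (ℤ → B) → Prop} {m : ℕ} (hf : Win (-m) m f) :
    X.μ {x | f (code X Y N R x)} = Y.μ {y | f y} := by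
  have key : ∀ {f : (ℤ → B) → Prop}, Win (-m) m f → Y.μ {y | f y} ≤ X.μ {x | f (code X Y N R x)} :=
    fun hf => ENNReal.le_of_forall_pos_le_add fun ε hε _ => by
      simpa using le_measure_code T hκ hf (ε := ε) hε
  refine le_antisymm ?_ (key hf)
  have h1 := key (f := fun y => ¬ f y) fun x y h => by
    have := hf x y h
    simp only [this]
  have hm := hf.measurableSet
  have e1 : {y | ¬ f y} = {y | f y}ᶜ := rfl
  have e2 : {x | ¬ f (code X Y N R x)} = {x | f (code X Y N R x)}ᶜ := rfl
  have hm' : MeasurableSet {x | f (code X Y N R x)} := measurable_code hm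
  rw [e1, e2, prob_compl_eq_one_sub hm, prob_compl_eq_one_sub hm'] at h1
  exact (ENNReal.sub_le_sub_iff_left prob_le_one (by simp)).1 h1

theorem map_code (T : Side.IsTower X.side Y.side X.kap N R) (hκ : X.kap = Y.kap) :
    X.μ.map (code X Y N R) = Y.μ := by
  refine IsBernoulliMeasure.unique (p := Y.p) ?_ (isBernoulliMeasure_bern Y.prob)
  intro F s
  set m : ℕ := ∑ i ∈ F, (i.natAbs + 1) with hm
  have hF : ∀ i ∈ F, -(m : ℤ) ≤ i ∧ i < m := fun i hi => by
    have := Finset.single_le_sum (f := fun i : ℤ => i.natAbs + 1) (fun _ _ => Nat.zero_le _) hi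
    omega
  have hw : Win (-m) m fun y : ℤ → B => ∀ i ∈ F, y i = s i := fun x y h => by
    simp only [eq_iff_iff]
    exact forall₂_congr fun i hi => by rw [h i (hF i hi).1 (hF i hi).2]
  rw [Measure.map_apply measurable_code hw.measurableSet]
  exact (measure_code_eq T hκ hw).trans (isBernoulliMeasure_bern Y.prob F s)

variable (X Y N R) in
/-- The domain of the isomorphism. -/
def Dom : Set (ℤ → A) :=
  {x | Good X Y N R x ∧ Good Y X N (fun r v u => R r u v) (code X Y N R x)}

theorem code_mem_dom (T : Side.IsTower X.side Y.side X.kap N R) {x : ℤ → A} (hx : x ∈ Dom X Y N R) :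
    code X Y N R x ∈ Dom Y X N (fun r v u => R r u v) :=
  ⟨hx.2, by rw [code_code T hx.1 hx.2]; exact hx.1⟩

theorem isFactorMap_code (T : Side.IsTower X.side Y.side X.kap N R) (hκ : X.kap = Y.kap) :
    IsFactorMap X.μ Y.μ (Dom X Y N R) (code X Y N R) where
  measurable_map := measurable_code
  dom_measurable := measurableSet_good.inter (measurable_code measurableSet_good)
  dom_shift_invariant := by
    ext x
    have h : shift x = sh 1 x := rfl
    simp only [Set.mem_preimage, Dom, Set.mem_ofPred_eq, h, code_sh, Good.sh_iff]
  dom_full := by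
    refine (mem_ae_iff_prob_eq_one
      (measurableSet_good.inter (measurable_code measurableSet_good))).1 ?_
    have h1 := ae_good T
    have T' : Side.IsTower Y.side X.side Y.kap N (fun r v u => R r u v) := hκ ▸ T.swap
    have h2 := ae_good T'
    rw [← map_code T hκ] at h2
    filter_upwards [h1, ae_of_ae_map measurable_code.aemeasurable h2] with x h3 h4
    exact ⟨h3, h4⟩
  pushforward := (map_code T hκ).symm
  equivariant x _ := code_sh 1

theorem isFinitary_code (T : Side.IsTower X.side Y.side X.kap N R) :
    IsFinitary X.μ (Dom X Y N R) (code X Y N R) := by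
  refine ae_of_all _ fun x hx => ?_
  obtain ⟨b, hb⟩ := hx.1.2 0
  have hb' := hb
  obtain ⟨r, d, u, v, h1, h2, h3, h4, h5⟩ := hb
  refine ⟨d + X.k + N r, (X.side.pat u).sum, fun y _ hxy => ?_⟩
  rw [hb'.code_eq T]
  refine Val.code_eq T ⟨r, d, u, v, ?_, h2, h3, h4, h5⟩
  refine (blk_congr fun t ht ht' => ?_).1 h1
  exact (hxy _ (by push_cast; omega) (by omega)).symm

/-- Two schemes with equal entropies and markers of equal lengths and probabilities are
finitarily isomorphic. -/
theorem exists_isomorphism (hk : X.k = Y.k) (hpi : X.pi = Y.pi)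
    (hH : vecEntropy X.p = vecEntropy Y.p) :
    ∃ D E φ ψ, IsFinitaryIsomorphism (bern X.p) (bern Y.p) D E φ ψ := by
  have hκ := kap_eq hk hpi
  have HB := Y.hyp
  rw [← hκ, ← h_eq hk hpi hH] at HB
  obtain ⟨N, R, T⟩ := Side.exists_tower X.h_pos (P_eq hk hpi) X.hyp HB
  have T' : Side.IsTower Y.side X.side Y.kap N (fun r v u => R r u v) := hκ ▸ T.swap
  exact ⟨_, _, _, _, isFactorMap_code T hκ, isFactorMap_code T' hκ.symm, isFinitary_code T,
    isFinitary_code T', fun x hx => ⟨code_mem_dom T hx, code_code T hx.1 hx.2⟩,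
    fun y hy => ⟨code_mem_dom T' hy, code_code T' hy.1 hy.2⟩⟩

end Scheme
end KS

namespace KS
open scoped Classical
open ENNReal Filter Topology MeasureTheory ProbabilityTheory

/-! ### Composition of finitary isomorphisms -/

section Composition
variable {A B C : Type*} [MeasurableSpace A] [MeasurableSpace B] [MeasurableSpace C]

theorem sh_add_one {E : Type*} (k : ℤ) (x : ℤ → E) : sh (k + 1) x = shift (sh k x) := by
  funext i
  simp only [sh, shift]
  congr 1
  ring

theorem _root_.IsFactorMap.sh_mem_and_map_sh {μ : Measure (ℤ → A)} {ν : Measure (ℤ → B)}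
    {D : Set (ℤ → A)} {φ : (ℤ → A) → ℤ → B} (h : IsFactorMap μ ν D φ) (n : ℤ) :
    ∀ x ∈ D, sh n x ∈ D ∧ φ (sh n x) = sh n (φ x) := by
  have hD : ∀ x, shift x ∈ D ↔ x ∈ D := fun x => by
    conv_rhs => rw [← h.dom_shift_invariant]
    rfl
  induction n with
  | zero =>
    intro x hx
    have e3 : ∀ x : ℤ → A, sh 0 x = x := fun x => by funext i; simp [sh]
    have e4 : ∀ x : ℤ → B, sh 0 x = x := fun x => by funext i; simp [sh]
    rw [e3, e4]; exact ⟨hx, rfl⟩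
  | succ k ih =>
    intro x hx
    obtain ⟨h1, h2⟩ := ih x hx
    rw [sh_add_one, sh_add_one, hD, h.equivariant _ h1, h2]
    exact ⟨h1, rfl⟩
  | pred k ih =>
    intro x hx
    obtain ⟨h1, h2⟩ := ih x hx
    have e3 := sh_add_one (-(k : ℤ) - 1) x
    have e4 := sh_add_one (-(k : ℤ) - 1) (φ x)
    rw [sub_add_cancel] at e3 e4
    rw [e3, hD] at h1
    refine ⟨h1, ?_⟩
    rw [e3, e4, h.equivariant _ h1] at h2
    funext i
    have := congrFun h2 (i - 1)
    simpa [shift] using this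

variable [Fintype A] [DiscreteMeasurableSpace A]

theorem _root_.IsFinitary.exists_window {p : A → ℝ} (hp : IsProbVector p) {ν : Measure (ℤ → B)}
    {D : Set (ℤ → A)} {φ : (ℤ → A) → ℤ → B} (hφ : IsFactorMap (bern p) ν D φ)
    (hfin : IsFinitary (bern p) D φ) :
    ∀ᵐ x ∂bern p, x ∈ D → ∀ n : ℤ, ∃ m : ℕ, ∀ y ∈ D, (∀ i, -(m : ℤ) ≤ i → i ≤ m → y i = x i) →
      φ y n = φ x n := by
  filter_upwards [ae_all_iff.2 fun n : ℤ => ae_sh hp n hfin] with x hx hxD n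
  obtain ⟨q, r, hqr⟩ := hx n (hφ.sh_mem_and_map_sh n x hxD).1
  refine ⟨q + r + n.natAbs, fun y hy hyx => ?_⟩
  have h1 := hφ.sh_mem_and_map_sh n x hxD
  have h2 := hφ.sh_mem_and_map_sh n y hy
  have := hqr (sh n y) h2.1 fun i hi hi' => hyx (i + n) (by omega) (by omega)
  rw [h1.2, h2.2] at this
  simpa [sh] using this

theorem _root_.IsFactorMap.comp {p : A → ℝ} {ν : Measure (ℤ → B)} {ρ : Measure (ℤ → C)}
    (hp : IsProbVector p) [IsProbabilityMeasure ν]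
    {D : Set (ℤ → A)} {D' : Set (ℤ → B)} {φ : (ℤ → A) → ℤ → B} {φ' : (ℤ → B) → ℤ → C}
    (h : IsFactorMap (bern p) ν D φ) (h' : IsFactorMap ν ρ D' φ') :
    IsFactorMap (bern p) ρ (D ∩ φ ⁻¹' D') (φ' ∘ φ) where
  measurable_map := h'.measurable_map.comp h.measurable_map
  dom_measurable := h.dom_measurable.inter (h.measurable_map h'.dom_measurable)
  dom_shift_invariant := by
    ext x
    have h1 : shift x ∈ D ↔ x ∈ D := by
      conv_rhs => rw [← h.dom_shift_invariant]
      rfl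
    have h2 : shift (φ x) ∈ D' ↔ φ x ∈ D' := by
      conv_rhs => rw [← h'.dom_shift_invariant]
      rfl
    simp only [Set.mem_preimage, Set.mem_inter_iff, h1]
    exact and_congr_right fun hx => by rw [h.equivariant x hx, h2]
  dom_full := by
    have := isProbabilityMeasure_bern hp
    have h1 : ∀ᵐ x ∂bern p, x ∈ D :=
      (mem_ae_iff_prob_eq_one h.dom_measurable).2 h.dom_full
    have h2 : ∀ᵐ y ∂ν, y ∈ D' := (mem_ae_iff_prob_eq_one h'.dom_measurable).2 h'.dom_full
    rw [h.pushforward] at h2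
    have h3 := ae_of_ae_map h.measurable_map.aemeasurable h2
    refine (mem_ae_iff_prob_eq_one
      (h.dom_measurable.inter (h.measurable_map h'.dom_measurable))).1 ?_
    filter_upwards [h1, h3] with x hx hx'
    exact ⟨hx, hx'⟩
  pushforward := by
    rw [← Measure.map_map h'.measurable_map h.measurable_map, ← h.pushforward, h'.pushforward]
  equivariant x hx := by
    simp only [Function.comp_apply, h.equivariant x hx.1, h'.equivariant _ hx.2]

theorem _root_.IsFinitary.comp {p : A → ℝ} {ν : Measure (ℤ → B)}
    (hp : IsProbVector p)
    {D : Set (ℤ → A)} {D' : Set (ℤ → B)} {φ : (ℤ → A) → ℤ → B} {φ' : (ℤ → B) → ℤ → C}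
    (h : IsFactorMap (bern p) ν D φ) (hf : IsFinitary (bern p) D φ) (hf' : IsFinitary ν D' φ') :
    IsFinitary (bern p) (D ∩ φ ⁻¹' D') (φ' ∘ φ) := by
  rw [IsFinitary, h.pushforward] at hf'
  filter_upwards [hf.exists_window hp h, ae_of_ae_map h.measurable_map.aemeasurable hf']
    with x h1 h2 hx
  obtain ⟨q, r, hqr⟩ := h2 hx.2
  choose m hm using h1 hx.1
  set M := ∑ n ∈ Finset.Icc (-(q : ℤ)) r, m n with hM
  refine ⟨M, M, fun y hy hyx => hqr _ hy.2 fun n hn hn' => hm n y hy.1 fun i hi hi' => ?_⟩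
  have := Finset.single_le_sum (f := m) (fun _ _ => Nat.zero_le _)
    (Finset.mem_Icc.2 ⟨hn, hn'⟩)
  exact hyx i (by omega) (by omega)

theorem _root_.IsFinitaryIsomorphism.trans [Fintype B] [DiscreteMeasurableSpace B]
    [Fintype C] [DiscreteMeasurableSpace C] {p : A → ℝ} {q : B → ℝ} {r : C → ℝ}
    (hp : IsProbVector p) (hq : IsProbVector q) (hr : IsProbVector r)
    {D E φ ψ D' E' φ' ψ'} (h : IsFinitaryIsomorphism (bern p) (bern q) D E φ ψ)
    (h' : IsFinitaryIsomorphism (bern q) (bern r) D' E' φ' ψ') :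
    IsFinitaryIsomorphism (bern p) (bern r) (D ∩ φ ⁻¹' D') (E' ∩ ψ' ⁻¹' E) (φ' ∘ φ) (ψ ∘ ψ') := by
  have := isProbabilityMeasure_bern hq
  obtain ⟨h1, h2, h3, h4, h5, h6⟩ := h
  obtain ⟨h1', h2', h3', h4', h5', h6'⟩ := h'
  refine ⟨h1.comp hp h1', h2'.comp hr h2, h3.comp hp h1 h3', h4'.comp hr h2' h4,
    fun x hx => ?_, fun y hy => ?_⟩
  · have e1 := h5 x hx.1
    have e2 := h5' _ hx.2
    refine ⟨⟨e2.1, ?_⟩, ?_⟩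
    · simp only [Set.mem_preimage, Function.comp_apply, e2.2, e1.1]
    · simp only [Function.comp_apply, e2.2, e1.2]
  · have e1 := h6' y hy.1
    have e2 := h6 _ hy.2
    refine ⟨⟨e2.1, ?_⟩, ?_⟩
    · simp only [Set.mem_preimage, Function.comp_apply, e2.2, e1.1]
    · simp only [Function.comp_apply, e2.2, e1.2]

end Composition

/-! ### Markers with two letters -/

section Marker
variable {A : Type*}

theorem fp_replicate {a b : A} (hab : a ≠ b) {k t : ℕ} (hk : 0 < k) (ht : k ≤ t) (s : ℕ) :
    FP (List.replicate k a ++ [b]) (List.replicate s b ++ (List.replicate t a ++ [b])) := by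
  constructor
  · refine ⟨List.replicate s b ++ List.replicate (t - k) a, ?_⟩
    have : List.replicate t a = List.replicate (t - k) a ++ List.replicate k a := by
      rw [← List.replicate_add]; congr 1; omega
    rw [this]
    simp only [List.append_assoc]
  · intro j hj hw
    simp only [List.length_append, List.length_replicate, List.length_singleton] at hj
    have h2 : (List.replicate t a ++ [b]).take (j - s) = List.replicate (j - s) a := by
      rw [List.take_append_of_le_length (by simp; omega), List.take_replicate]
      congr 1; omega
    rw [List.take_append, List.length_replicate, h2, List.take_replicate] at hw
    rcases Nat.eq_zero_or_pos (j - s) with h | h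
    · have : a ∈ List.replicate k a ++ [b] := by simp; omega
      have := hw.subset this
      rw [h] at this
      simp [hab] at this
    · obtain ⟨l, hl⟩ := hw
      have := congrArg List.getLast? hl
      simp [List.getLast?_append, List.getLast?_replicate, h.ne'] at this
      exact hab this.symm

variable [Fintype A]

/-- The scheme with marker `a⋯ab`. -/
def Scheme.ofLetters (p : A → ℝ) (hp : IsProbVector p) (a b : A) (hab : a ≠ b) (k : ℕ)
    (hk : 0 < k) : Scheme A where
  p := p
  prob := hp
  w := List.replicate k a ++ [b]
  w_ne := by simp
  unb m hm hm' h := by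
    simp only [List.length_append, List.length_replicate, List.length_singleton] at hm' h
    rw [List.drop_append_of_le_length (by simp; omega),
      List.take_append_of_le_length (by simp; omega)] at h
    have : b ∈ (List.replicate k a).drop m ++ [b] := by simp
    rw [h] at this
    exact hab (List.eq_of_mem_replicate (List.mem_of_mem_take this)).symm
  rich M := by
    refine ⟨_, _, fp_replicate hab hk (le_refl k) (M + 1), fp_replicate hab hk (Nat.le_succ k) M,
      fun h => ?_, by simp; omega, by simp; omega⟩
    have := congrArg (fun l => l[M]?) h
    simp [List.getElem?_append] at this
    exact hab this.symm

end Marker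

/-! ### Vectors of prescribed entropy -/

section Vectors

theorem vecEntropy_eq_sum {A : Type*} [Fintype A] (p : A → ℝ) :
    vecEntropy p = ∑ i, Real.negMulLog (p i) := by
  simp [vecEntropy, Real.negMulLog, Finset.sum_neg_distrib]

theorem _root_.IsProbVector.nonempty {A : Type*} [Fintype A] {p : A → ℝ} (hp : IsProbVector p) :
    Nonempty A := by
  by_contra h
  have := not_nonempty_iff.1 h
  simpa using hp.2

theorem _root_.IsProbVector.lt_one {A : Type*} [Fintype A] [Nontrivial A] {p : A → ℝ}
    (hp : IsProbVector p) (a : A) : p a < 1 := by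
  obtain ⟨b, hb⟩ := exists_ne a
  rw [← hp.2]
  exact Finset.single_lt_sum hb (Finset.mem_univ a) (Finset.mem_univ b) (hp.1 b)
    fun c _ _ => (hp.1 c).le

theorem vecEntropy_pos {A : Type*} [Fintype A] [Nontrivial A] {p : A → ℝ}
    (hp : IsProbVector p) : 0 < vecEntropy p := by
  rw [vecEntropy_eq_sum]
  refine Finset.sum_pos (fun a _ => ?_) Finset.univ_nonempty
  have := mul_neg_of_pos_of_neg (hp.1 a) (Real.log_neg (hp.1 a) (hp.lt_one a))
  rw [Real.negMulLog]; linarith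

theorem vecEntropy_eq_zero {A : Type*} [Fintype A] [Subsingleton A] {p : A → ℝ}
    (hp : IsProbVector p) : vecEntropy p = 0 := by
  rw [vecEntropy_eq_sum]
  refine Finset.sum_eq_zero fun a _ => ?_
  have := hp.2
  rw [Fintype.sum_subsingleton _ a] at this
  simp [this]

theorem exists_sum_negMulLog_eq {m T : ℝ} (hm : 0 < m) (hT : Real.negMulLog m < T) :
    ∃ (N : ℕ) (v : Fin (N + 1) → ℝ), (∀ i, 0 < v i) ∧ ∑ i, v i = m ∧
      ∑ i, Real.negMulLog (v i) = T := by
  obtain ⟨N, hN⟩ : ∃ N : ℕ, T ≤ (N + 1) * Real.negMulLog (m / (N + 1)) := by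
    have h : Tendsto (fun N : ℕ => m * (Real.log ((N : ℝ) + 1) - Real.log m)) atTop atTop :=
      (tendsto_atTop_add_const_right _ _ (Real.tendsto_log_atTop.comp
        (tendsto_atTop_add_const_right _ _ tendsto_natCast_atTop_atTop))).const_mul_atTop hm
    obtain ⟨N, hN⟩ := (h.eventually_ge_atTop T).exists
    refine ⟨N, hN.trans_eq ?_⟩
    have : (0 : ℝ) < N + 1 := by positivity
    rw [Real.negMulLog, Real.log_div hm.ne' this.ne']
    field_simp
    ring
  set v : ℝ → Fin (N + 1) → ℝ := fun t =>
    Fin.cons (m * (1 - t) + t * (m / (N + 1))) fun _ => t * (m / (N + 1)) with hv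
  have hN1 : (0 : ℝ) < N + 1 := by positivity
  have hc : Continuous fun t => ∑ i, Real.negMulLog (v t i) := by
    simp only [hv, Fin.sum_univ_succ, Fin.cons_zero, Fin.cons_succ]
    have := Real.continuous_negMulLog
    fun_prop
  obtain ⟨t, ht, hvt⟩ : T ∈ (fun t => ∑ i, Real.negMulLog (v t i)) '' Set.Icc 0 1 := by
    refine intermediate_value_Icc zero_le_one hc.continuousOn ⟨?_, ?_⟩
    · simpa [hv, Fin.sum_univ_succ] using hT.le
    · refine hN.trans_eq ?_
      simp [hv, Fin.sum_univ_succ]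
      ring
  have ht0 : t ≠ 0 := by
    rintro rfl
    simp [hv, Fin.sum_univ_succ] at hvt
    exact hT.ne hvt
  have ht' : 0 < t := lt_of_le_of_ne ht.1 ht0.symm
  have h1 : 0 < t * (m / (N + 1)) := by positivity
  refine ⟨N, v t, fun i => ?_, ?_, hvt⟩
  · refine Fin.cases ?_ (fun i => ?_) i
    · have := mul_nonneg hm.le (sub_nonneg.2 ht.2)
      simp only [hv, Fin.cons_zero]; linarith
    · simpa [hv] using h1
  · simp [hv, Fin.sum_univ_succ]
    field_simp
    ring

/-- A probability vector of prescribed entropy sharing markers with two given pairs of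
probabilities. -/
theorem exists_bridge {H a a' b b' : ℝ} (hH : 0 < H) (ha : 0 < a) (ha1 : a < 1) (ha' : 0 < a')
    (hb : 0 < b) (hb1 : b < 1) (hb' : 0 < b') :
    ∃ (n k l : ℕ) (r : Fin (n + 3) → ℝ), IsProbVector r ∧ vecEntropy r = H ∧ 0 < k ∧ 0 < l ∧
      r 0 ^ k * r 1 = a ^ k * a' ∧ r 0 ^ l * r 2 = b ^ l * b' := by
  have h0 : ∀ᶠ x in 𝓝 (0 : ℝ), Real.negMulLog x < H / 4 :=
    (Real.continuous_negMulLog.tendsto 0).eventually_lt_const (by simpa using hH)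
  have h1 : ∀ᶠ x in 𝓝 (1 : ℝ), Real.negMulLog x < H / 4 :=
    (Real.continuous_negMulLog.tendsto 1).eventually_lt_const (by simpa using hH)
  obtain ⟨δ, hδ, h0⟩ := Metric.eventually_nhds_iff.1 h0
  obtain ⟨δ', hδ', h1⟩ := Metric.eventually_nhds_iff.1 h1
  obtain ⟨ε, hε, hεm⟩ : ∃ ε, 0 < ε ∧ ε < min (min δ δ') (min (1 - a) (1 - b)) :=
    exists_between (by simp [hδ, hδ', ha1, hb1])
  simp only [lt_min_iff] at hεm
  obtain ⟨⟨e1, e2⟩, e3, e4⟩ := hεm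
  have small : ∀ {c c' : ℝ}, 0 < c → c < 1 - ε → 0 < c' → ∃ k : ℕ, 0 < k ∧
      c' * (c / (1 - ε)) ^ k < ε / 3 := fun {c c'} hc hc1 hc' => by
    have hlim : Tendsto (fun k : ℕ => c' * (c / (1 - ε)) ^ k) atTop (𝓝 (c' * 0)) :=
      (tendsto_pow_atTop_nhds_zero_of_lt_one (div_nonneg hc.le (by linarith))
        ((div_lt_one (by linarith)).2 hc1)).const_mul _
    rw [mul_zero] at hlim
    obtain ⟨k, hk, hk'⟩ := ((hlim.eventually_lt_const (show 0 < ε / 3 by positivity)).and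
      (eventually_gt_atTop 0)).exists
    exact ⟨k, hk', hk⟩
  obtain ⟨k, hk, hk'⟩ := small ha (by linarith) ha'
  obtain ⟨l, hl, hl'⟩ := small hb (by linarith) hb'
  have hs : 0 < 1 - ε := by linarith
  set x := a' * (a / (1 - ε)) ^ k with hx
  set y := b' * (b / (1 - ε)) ^ l with hy
  have hx0 : 0 < x := by positivity
  have hy0 : 0 < y := by positivity
  have small0 : ∀ z, 0 < z → z < ε → Real.negMulLog z < H / 4 := fun z hz hz' => h0 (by
    rw [Real.dist_eq, sub_zero, abs_of_pos hz]; linarith)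
  have hs1 : Real.negMulLog (1 - ε) < H / 4 := h1 (by
    rw [Real.dist_eq, sub_sub_cancel_left, abs_neg, abs_of_pos hε]; exact e2)
  have hx1 := small0 x hx0 (by linarith)
  have hy1 := small0 y hy0 (by linarith)
  have hm1 := small0 (ε - x - y) (by linarith) (by linarith)
  obtain ⟨N, v, hv, hvs, hvH⟩ := exists_sum_negMulLog_eq (m := ε - x - y)
    (T := H - Real.negMulLog (1 - ε) - Real.negMulLog x - Real.negMulLog y) (by linarith)
    (by linarith)
  refine ⟨N + 1, k, l, Fin.cons (1 - ε) (Fin.cons x (Fin.cons y v)), ⟨fun i => ?_, ?_⟩, ?_, hk, hl,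
    ?_, ?_⟩
  · refine Fin.cases ?_ (fun i => Fin.cases ?_ (fun i => Fin.cases ?_ (fun i => ?_) i) i) i
    · simpa using by linarith
    · simpa using hx0
    · exact hy0
    · simpa using hv i
  · rw [Fin.sum_univ_succ, Fin.sum_univ_succ, Fin.sum_univ_succ]
    simp only [Fin.cons_zero, Fin.cons_succ, hvs]
    ring
  · rw [vecEntropy_eq_sum, Fin.sum_univ_succ, Fin.sum_univ_succ, Fin.sum_univ_succ]
    simp only [Fin.cons_zero, Fin.cons_succ, hvH]
    ring
  · change (1 - ε) ^ k * x = _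
    rw [hx, div_pow]; field_simp
  · change (1 - ε) ^ l * y = _
    rw [hy, div_pow]; field_simp

end Vectors

/-! ### The reduction -/

section Main
variable {A B : Type*} [Fintype A] [Fintype B] [MeasurableSpace A] [DiscreteMeasurableSpace A]
    [MeasurableSpace B] [DiscreteMeasurableSpace B] {p : A → ℝ} {q : B → ℝ}

theorem exists_isomorphism_of_markers (hp : IsProbVector p) (hq : IsProbVector q)
    (hH : vecEntropy p = vecEntropy q) {a a' : A} {b b' : B} (ha : a ≠ a') (hb : b ≠ b') {k : ℕ}
    (hk : 0 < k) (h : p a ^ k * p a' = q b ^ k * q b') :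
    ∃ D E φ ψ, IsFinitaryIsomorphism (bern p) (bern q) D E φ ψ :=
  Scheme.exists_isomorphism (X := Scheme.ofLetters p hp a a' ha k hk)
    (Y := Scheme.ofLetters q hq b b' hb k hk) (by simp [Scheme.k, Scheme.ofLetters])
    (by simpa [Scheme.pi, Scheme.ofLetters] using h) hH

theorem exists_isomorphism_of_nontrivial [Nontrivial A] [Nontrivial B] (hp : IsProbVector p)
    (hq : IsProbVector q) (hH : vecEntropy p = vecEntropy q) :
    ∃ D E φ ψ, IsFinitaryIsomorphism (bern p) (bern q) D E φ ψ := by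
  obtain ⟨a, a', ha⟩ := exists_pair_ne A
  obtain ⟨b, b', hb⟩ := exists_pair_ne B
  obtain ⟨n, k, l, r, hr, hrH, hk, hl, h1, h2⟩ := exists_bridge (vecEntropy_pos hp) (hp.1 a)
    (hp.lt_one a) (hp.1 a') (hq.1 b) (hq.lt_one b) (hq.1 b')
  obtain ⟨_, _, _, _, hI⟩ := exists_isomorphism_of_markers hp hr hrH.symm ha
    (b := 0) (b' := 1) (by simp) hk h1.symm
  obtain ⟨_, _, _, _, hJ⟩ := exists_isomorphism_of_markers hr hq (hrH.trans hH)
    (a := 0) (a' := 2) (by simp [Fin.ext_iff, Nat.mod_eq_of_lt (show 2 < n + 3 by omega)]) hb hl h2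
  exact ⟨_, _, _, _, hI.trans hp hr hq hJ⟩

theorem isFactorMap_const [Subsingleton A] [Subsingleton B] {μ : Measure (ℤ → A)}
    {ν : Measure (ℤ → B)} [IsProbabilityMeasure μ] [IsProbabilityMeasure ν] (b : B) :
    IsFactorMap μ ν Set.univ fun _ _ => b where
  measurable_map := measurable_const
  dom_measurable := MeasurableSet.univ
  dom_shift_invariant := rfl
  dom_full := measure_univ
  pushforward := by
    have := Measure.isProbabilityMeasure_map (μ := μ)
      (measurable_const (a := fun _ : ℤ => b)).aemeasurable
    ext s _
    rcases s.eq_empty_or_nonempty with rfl | hs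
    · simp
    · rw [Subsingleton.eq_univ_of_nonempty hs, measure_univ, measure_univ]
  equivariant _ _ := rfl

theorem exists_isomorphism_of_subsingleton [Subsingleton A] [Subsingleton B] (hp : IsProbVector p)
    (hq : IsProbVector q) : ∃ D E φ ψ, IsFinitaryIsomorphism (bern p) (bern q) D E φ ψ := by
  have := isProbabilityMeasure_bern hp
  have := isProbabilityMeasure_bern hq
  obtain ⟨a⟩ := hp.nonempty
  obtain ⟨b⟩ := hq.nonempty
  exact ⟨_, _, _, _, isFactorMap_const b, isFactorMap_const a,
    ae_of_all _ fun _ _ => ⟨0, 0, fun _ _ _ => rfl⟩, ae_of_all _ fun _ _ => ⟨0, 0, fun _ _ _ => rfl⟩,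
    fun _ _ => ⟨Set.mem_univ _, Subsingleton.elim _ _⟩,
    fun _ _ => ⟨Set.mem_univ _, Subsingleton.elim _ _⟩⟩

theorem exists_isomorphism_bern (hp : IsProbVector p) (hq : IsProbVector q)
    (hH : vecEntropy p = vecEntropy q) :
    ∃ D E φ ψ, IsFinitaryIsomorphism (bern p) (bern q) D E φ ψ := by
  rcases subsingleton_or_nontrivial A with hA | hA <;>
    rcases subsingleton_or_nontrivial B with hB | hB
  · exact exists_isomorphism_of_subsingleton hp hq
  · exact absurd hH (by rw [vecEntropy_eq_zero hp]; exact (vecEntropy_pos hq).ne)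
  · exact absurd hH (by rw [vecEntropy_eq_zero hq]; exact (vecEntropy_pos hp).ne')
  · exact exists_isomorphism_of_nontrivial hp hq hH

end Main
end KS

/-- **Keane–Smorodinsky (equal entropies).** If `p` and `q` are strictly positive
probability vectors on finite alphabets with `H(p) = H(q)`, then the Bernoulli schemes
`BS(p)` and `BS(q)` are finitarily isomorphic. -/
theorem finitarily_isomorphic_of_entropy_eq
    {A B : Type*} [Fintype A] [Fintype B]
    [MeasurableSpace A] [DiscreteMeasurableSpace A]
    [MeasurableSpace B] [DiscreteMeasurableSpace B]
    (p : A → ℝ) (q : B → ℝ) (hp : IsProbVector p) (hq : IsProbVector q)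
    (μ : Measure (ℤ → A)) (ν : Measure (ℤ → B))
    (hμ : IsBernoulliMeasure μ p) (hν : IsBernoulliMeasure ν q)
    (hH : vecEntropy p = vecEntropy q) :
    ∃ (D : Set (ℤ → A)) (E : Set (ℤ → B))
      (φ : (ℤ → A) → (ℤ → B)) (ψ : (ℤ → B) → (ℤ → A)),
      IsFinitaryIsomorphism μ ν D E φ ψ := by
  rw [KS.IsBernoulliMeasure.unique hμ (KS.isBernoulliMeasure_bern hp),
    KS.IsBernoulliMeasure.unique hν (KS.isBernoulliMeasure_bern hq)]
  exact KS.exists_isomorphism_bern hp hq hH
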